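/- arXiv:2109.02835 — 2 statements merged into one kernel-verified Lean document; each statement's English description precedes it below -/
import Mathlib

section
/- Let A, 𝔤(A), L, the scalar pairs (X_e, Y_e), the space V[L], the operators x_i·, y_i·, h_i·, and the notions 'A-structured', 'diamond relations', 'crossing relations' be as in the context. Then the following are equivalent: (a) L is A-structured and the scalar pairs satisfy all diamond relations and all crossing relations; (b) there exists a Lie algebra homomorphism φ from 𝔤(A) to the endomorphism algebra of V[L] such that for every i ∈ {1,…,n}, φ(x_i), φ(y_i), φ(h_i) are, respectively, the operators x_i·, y_i·, h_i· (equivalently, these operators make V[L] a 𝔤(A)-module for which {v_t} is a weight basis and L with its scalar pairs is the representation diagram). -/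
noncomputable section

attribute [local instance] Classical.propDecidable

namespace CL

/-- Generators `x_i, y_i, h_i` for the Serre presentation. -/
inductive SGen (I : Type) : Type
  | X : I → SGen I
  | Y : I → SGen I
  | H : I → SGen I

variable {I : Type}

/-- The generator `x_i` in the free Lie algebra. -/
def gx (i : I) : FreeLieAlgebra ℂ (SGen I) := FreeLieAlgebra.of ℂ (SGen.X i)

/-- The generator `y_i` in the free Lie algebra. -/
def gy (i : I) : FreeLieAlgebra ℂ (SGen I) := FreeLieAlgebra.of ℂ (SGen.Y i)

/-- The generator `h_i` in the free Lie algebra. -/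
def gh (i : I) : FreeLieAlgebra ℂ (SGen I) := FreeLieAlgebra.of ℂ (SGen.H i)

/-- The Serre relations determined by the matrix `A`:
`[h_i,h_j] = 0`; `[x_i,y_i] = h_i` and `[x_i,y_j] = 0` for `i ≠ j`;
`[h_i,x_j] = A_{j,i}·x_j`; `[h_i,y_j] = −A_{j,i}·y_j`; and
`ad(x_i)^{1−A_{j,i}}(x_j) = 0 = ad(y_i)^{1−A_{j,i}}(y_j)` for `i ≠ j`. -/
def serreSet (A : I → I → ℤ) : Set (FreeLieAlgebra ℂ (SGen I)) :=
  {z | ∃ i j : I, z = ⁅gh i, gh j⁆} ∪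
  {z | ∃ i : I, z = ⁅gx i, gy i⁆ - gh i} ∪
  {z | ∃ i j : I, i ≠ j ∧ z = ⁅gx i, gy j⁆} ∪
  {z | ∃ i j : I, z = ⁅gh i, gx j⁆ - (A j i) • gx j} ∪
  {z | ∃ i j : I, z = ⁅gh i, gy j⁆ + (A j i) • gy j} ∪
  {z | ∃ i j : I, i ≠ j ∧
    z = ((LieAlgebra.ad ℂ (FreeLieAlgebra ℂ (SGen I)) (gx i)) ^ (1 - A j i).toNat) (gx j)} ∪
  {z | ∃ i j : I, i ≠ j ∧
    z = ((LieAlgebra.ad ℂ (FreeLieAlgebra ℂ (SGen I)) (gy i)) ^ (1 - A j i).toNat) (gy j)}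

/-- The Lie ideal generated by the Serre relations. -/
def serreIdeal (A : I → I → ℤ) : LieIdeal ℂ (FreeLieAlgebra ℂ (SGen I)) :=
  LieSubmodule.lieSpan ℂ _ (serreSet A)

/-- The Lie algebra `𝔤(A)` presented by generators `x_i, y_i, h_i` subject to
the Serre relations determined by `A`. -/
abbrev gLie (A : I → I → ℤ) : Type := FreeLieAlgebra ℂ (SGen I) ⧸ serreIdeal A

/-- The image of `x_i` in `𝔤(A)`. -/
def px (A : I → I → ℤ) (i : I) : gLie A := LieSubmodule.Quotient.mk (N := serreIdeal A) (gx i)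

/-- The image of `y_i` in `𝔤(A)`. -/
def py (A : I → I → ℤ) (i : I) : gLie A := LieSubmodule.Quotient.mk (N := serreIdeal A) (gy i)

/-- The image of `h_i` in `𝔤(A)`. -/
def ph (A : I → I → ℤ) (i : I) : gLie A := LieSubmodule.Quotient.mk (N := serreIdeal A) (gh i)

end CL

/-- `A` is the Cartan matrix of (a base of) a finite reduced crystallographic root system
in an `n`-dimensional real inner product space. -/
def IsCartanMatrixOfRootSystem (n : ℕ) (A : Fin n → Fin n → ℤ) : Prop :=
  ∃ (Φ : Finset (EuclideanSpace ℝ (Fin n))) (α : Fin n → EuclideanSpace ℝ (Fin n)),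
    (0 : EuclideanSpace ℝ (Fin n)) ∉ Φ ∧
    Submodule.span ℝ (Φ : Set (EuclideanSpace ℝ (Fin n))) = ⊤ ∧
    (∀ β ∈ Φ, ∀ c : ℝ, c • β ∈ Φ → c = 1 ∨ c = -1) ∧
    (∀ β ∈ Φ, ∀ δ ∈ Φ, ∃ z : ℤ,
      2 * (inner ℝ β δ : ℝ) = (z : ℝ) * (inner ℝ δ δ : ℝ)) ∧
    (∀ β ∈ Φ, ∀ δ ∈ Φ,
      δ - (2 * (inner ℝ δ β : ℝ) / (inner ℝ β β : ℝ)) • β ∈ Φ) ∧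
    (∀ i, α i ∈ Φ) ∧ LinearIndependent ℝ α ∧
    (∀ β ∈ Φ, ∃ cf : Fin n → ℤ, ((∀ i, 0 ≤ cf i) ∨ (∀ i, cf i ≤ 0)) ∧
      β = ∑ i, (cf i : ℝ) • α i) ∧
    (∀ i j, (A i j : ℝ) * (inner ℝ (α j) (α j) : ℝ) = 2 * (inner ℝ (α i) (α j) : ℝ))

namespace EL

variable {n : ℕ} {L : Type} [Fintype L] [Lattice L]

/-- The color-`i` covering edges of the edge-colored lattice `(L, γ)`. -/
def ced (γ : L → L → Fin n) (i : Fin n) (r s : L) : Prop := r ⋖ s ∧ γ r s = i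

/-- The connected component of `t` in the graph of color-`i` covering edges. -/
def comp (γ : L → L → Fin n) (i : Fin n) (t : L) : Set L :=
  {s | Relation.ReflTransGen (fun a b => ced γ i a b ∨ ced γ i b a) t s}

/-- The integer `m_i(t) = (ρ(t) − min ρ on comp_i(t)) − (max ρ on comp_i(t) − ρ(t))`. -/
def mwt (γ : L → L → Fin n) (ρ : L → ℕ) (i : Fin n) (t : L) : ℤ :=
  ((ρ t : ℤ) - ((sInf (ρ '' comp γ i t) : ℕ) : ℤ)) -
    (((sSup (ρ '' comp γ i t) : ℕ) : ℤ) - (ρ t : ℤ))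

/-- The raising operator `x_i·` on `V[L]` determined by the edge coefficients `X`. -/
def opX (γ : L → L → Fin n) (X : L → L → ℂ) (i : Fin n) : Module.End ℂ (L → ℂ) :=
  Matrix.mulVecLin fun s r => if ced γ i r s then X r s else 0

/-- The lowering operator `y_i·` on `V[L]` determined by the edge coefficients `Y`. -/
def opY (γ : L → L → Fin n) (Y : L → L → ℂ) (i : Fin n) : Module.End ℂ (L → ℂ) :=
  Matrix.mulVecLin fun r s => if ced γ i r s then Y r s else 0

/-- The diagonal operator `h_i·` on `V[L]`, acting on `v_t` by the eigenvalue `m_i(t)`. -/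
def opH (γ : L → L → Fin n) (ρ : L → ℕ) (i : Fin n) : Module.End ℂ (L → ℂ) :=
  Matrix.mulVecLin (Matrix.diagonal fun t => ((mwt γ ρ i t : ℤ) : ℂ))

end EL

attribute [local instance 100] LieRing.ofAssociativeRing

section Helpers

/-- Serre relations for a family of elements in a Lie algebra. -/
structure SerreRel {I : Type} {K : Type*} [LieRing K] [LieAlgebra ℂ K] (A : I → I → ℤ)
    (x y h : I → K) : Prop where
  hh : ∀ i j, ⁅h i, h j⁆ = 0
  xy : ∀ i, ⁅x i, y i⁆ = h i
  xy' : ∀ i j, i ≠ j → ⁅x i, y j⁆ = 0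
  hx : ∀ i j, ⁅h i, x j⁆ = (A j i) • x j
  hy : ∀ i j, ⁅h i, y j⁆ = -((A j i) • y j)

theorem gen_hom_ad_pow {K K' : Type*} [LieRing K] [LieAlgebra ℂ K] [LieRing K'] [LieAlgebra ℂ K']
    (f : K →ₗ⁅ℂ⁆ K') (a b : K) (k : ℕ) :
    f (((LieAlgebra.ad ℂ K a) ^ k) b) = ((LieAlgebra.ad ℂ K' (f a)) ^ k) (f b) := by
  induction k with
  | zero => simp
  | succ k ih => simp only [pow_succ', Module.End.mul_apply, LieAlgebra.ad_apply, LieHom.map_lie, ih]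

theorem exists_quot_hom {F K : Type*} [LieRing F] [LieAlgebra ℂ F] [LieRing K] [LieAlgebra ℂ K]
    (I : LieIdeal ℂ F) (f : F →ₗ⁅ℂ⁆ K) (hf : ∀ a ∈ I, f a = 0) :
    ∃ φ : (F ⧸ I) →ₗ⁅ℂ⁆ K, ∀ a, φ (LieSubmodule.Quotient.mk (N := I) a) = f a := by
  refine ⟨{ I.toSubmodule.liftQ (f : F →ₗ[ℂ] K) (fun a ha => hf a ha) with
    map_lie' := ?_ }, fun a => rfl⟩
  intro a b
  induction a using Submodule.Quotient.induction_on with | _ a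
  induction b using Submodule.Quotient.induction_on with | _ b
  exact f.map_lie a b

theorem SerreRel.exists_hom {I : Type} {K : Type*} [LieRing K] [LieAlgebra ℂ K] {A : I → I → ℤ}
    {x y h : I → K} (S : SerreRel A x y h)
    (sx : ∀ i j, i ≠ j → ((LieAlgebra.ad ℂ K (x i)) ^ (1 - A j i).toNat) (x j) = 0)
    (sy : ∀ i j, i ≠ j → ((LieAlgebra.ad ℂ K (y i)) ^ (1 - A j i).toNat) (y j) = 0) :
    ∃ φ : CL.gLie A →ₗ⁅ℂ⁆ K, ∀ i, φ (CL.px A i) = x i ∧ φ (CL.py A i) = y i ∧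
      φ (CL.ph A i) = h i := by
  let g : CL.SGen I → K := fun a => match a with
    | .X i => x i
    | .Y i => y i
    | .H i => h i
  let f := FreeLieAlgebra.lift ℂ g
  have fx : ∀ i, f (CL.gx i) = x i := fun i => FreeLieAlgebra.lift_of_apply g _
  have fy : ∀ i, f (CL.gy i) = y i := fun i => FreeLieAlgebra.lift_of_apply g _
  have fh : ∀ i, f (CL.gh i) = h i := fun i => FreeLieAlgebra.lift_of_apply g _
  have hle : CL.serreIdeal A ≤ f.ker := by
    refine LieSubmodule.lieSpan_le.2 ?_
    intro z hz
    simp only [SetLike.mem_coe, LieHom.mem_ker]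
    rcases hz with (((((⟨i, j, rfl⟩ | ⟨i, rfl⟩) | ⟨i, j, hij, rfl⟩) | ⟨i, j, rfl⟩) | ⟨i, j, rfl⟩) |
      ⟨i, j, hij, rfl⟩) | ⟨i, j, hij, rfl⟩
    · rw [LieHom.map_lie, fh, fh, S.hh]
    · rw [map_sub, LieHom.map_lie, fh, fx, fy, S.xy, sub_self]
    · rw [LieHom.map_lie, fx, fy, S.xy' i j hij]
    · rw [map_sub, LieHom.map_lie, map_zsmul, fh, fx, S.hx, sub_self]
    · rw [map_add, LieHom.map_lie, map_zsmul, fh, fy, S.hy, neg_add_cancel]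
    · rw [gen_hom_ad_pow, fx, fx, sx i j hij]
    · rw [gen_hom_ad_pow, fy, fy, sy i j hij]
  obtain ⟨φ, hφ⟩ := exists_quot_hom (CL.serreIdeal A) f (fun a ha => (hle ha))
  exact ⟨φ, fun i => ⟨(hφ _).trans (fx i), (hφ _).trans (fy i), (hφ _).trans (fh i)⟩⟩

theorem SerreRel.of_hom {I : Type} {K : Type*} [LieRing K] [LieAlgebra ℂ K] {A : I → I → ℤ}
    {x y h : I → K} (φ : CL.gLie A →ₗ⁅ℂ⁆ K) (hφ : ∀ i, φ (CL.px A i) = x i ∧ φ (CL.py A i) = y i ∧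
      φ (CL.ph A i) = h i) : SerreRel A x y h := by
  have key : ∀ z ∈ CL.serreSet A, LieSubmodule.Quotient.mk (N := CL.serreIdeal A) z = 0 :=
    fun z hz => LieSubmodule.Quotient.mk_eq_zero'.2 (LieSubmodule.subset_lieSpan hz)
  have px : ∀ i, φ (CL.px A i) = x i := fun i => (hφ i).1
  have py : ∀ i, φ (CL.py A i) = y i := fun i => (hφ i).2.1
  have ph : ∀ i, φ (CL.ph A i) = h i := fun i => (hφ i).2.2
  constructor
  · intro i j
    have : ⁅CL.ph A i, CL.ph A j⁆ = 0 := key ⁅CL.gh i, CL.gh j⁆ (by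
      simp only [CL.serreSet, Set.mem_union, Set.mem_ofPred_eq]
      exact Or.inl (Or.inl (Or.inl (Or.inl (Or.inl (Or.inl ⟨i, j, rfl⟩))))))
    rw [← ph, ← ph, ← LieHom.map_lie, this, map_zero]
  · intro i
    have : ⁅CL.px A i, CL.py A i⁆ - CL.ph A i = 0 := key (⁅CL.gx i, CL.gy i⁆ - CL.gh i) (by
      simp only [CL.serreSet, Set.mem_union, Set.mem_ofPred_eq]
      exact Or.inl (Or.inl (Or.inl (Or.inl (Or.inl (Or.inr ⟨i, rfl⟩))))))
    rw [← ph, ← px, ← py, ← LieHom.map_lie, sub_eq_zero.1 this]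
  · intro i j hij
    have : ⁅CL.px A i, CL.py A j⁆ = 0 := key ⁅CL.gx i, CL.gy j⁆ (by
      simp only [CL.serreSet, Set.mem_union, Set.mem_ofPred_eq]
      exact Or.inl (Or.inl (Or.inl (Or.inl (Or.inr ⟨i, j, hij, rfl⟩)))))
    rw [← px, ← py, ← LieHom.map_lie, this, map_zero]
  · intro i j
    have : ⁅CL.ph A i, CL.px A j⁆ - (A j i) • CL.px A j = 0 :=
      key (⁅CL.gh i, CL.gx j⁆ - (A j i) • CL.gx j) (by
      simp only [CL.serreSet, Set.mem_union, Set.mem_ofPred_eq]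
      exact Or.inl (Or.inl (Or.inl (Or.inr ⟨i, j, rfl⟩))))
    rw [← px, ← ph, ← LieHom.map_lie, sub_eq_zero.1 this, map_zsmul]
  · intro i j
    have : ⁅CL.ph A i, CL.py A j⁆ + (A j i) • CL.py A j = 0 :=
      key (⁅CL.gh i, CL.gy j⁆ + (A j i) • CL.gy j) (by
      simp only [CL.serreSet, Set.mem_union, Set.mem_ofPred_eq]
      exact Or.inl (Or.inl (Or.inr ⟨i, j, rfl⟩)))
    rw [← py, ← ph, ← LieHom.map_lie, eq_neg_of_add_eq_zero_left this, map_neg, map_zsmul]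

/-- The key finite-dimensional `sl₂` argument giving the higher Serre relations. -/
theorem serre_sl2 {K : Type*} [LieRing K] [LieAlgebra ℂ K] [FiniteDimensional ℂ K]
    (x y h v : K) (c : ℤ) (hxy : ⁅x, y⁆ = h) (hx : ⁅h, x⁆ = (2 : ℤ) • x)
    (hy : ⁅h, y⁆ = -((2 : ℤ) • y)) (hyv : ⁅y, v⁆ = 0) (hv : ⁅h, v⁆ = c • v) :
    ((LieAlgebra.ad ℂ K x) ^ (1 - c).toNat) v = 0 := by
  by_cases hv0 : v = 0
  · rw [hv0, map_zero]
  by_cases hh : h = 0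
  · have hx0 : x = 0 := by
      rw [hh, zero_lie] at hx
      have : (2 : ℂ) • x = 0 := by
        rw [hx, ← Int.cast_smul_eq_zsmul ℂ]; norm_num
      simpa using this
    have hc : c = 0 := by
      rw [hh, zero_lie, ← Int.cast_smul_eq_zsmul ℂ] at hv
      have := smul_eq_zero.1 hv.symm
      simpa [hv0] using this
    subst hc
    simp [hx0]
  have t : IsSl2Triple h x y := ⟨hh, hxy, by rw [hx]; norm_cast, by rw [hy]; norm_cast⟩
  have P : IsSl2Triple.HasPrimitiveVectorWith t.symm v ((-c : ℤ) : ℂ) := by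
    refine ⟨hv0, ?_, hyv⟩
    rw [neg_lie, hv, Int.cast_smul_eq_zsmul, neg_smul]
  obtain ⟨k, hk⟩ := P.exists_nat
  have hk' : -c = (k : ℤ) := by exact_mod_cast hk
  have h1 : (1 - c).toNat = k + 1 := by omega
  rw [h1]
  exact P.pow_toEnd_f_eq_zero_of_eq_nat hk

theorem SerreRel.exists_hom' {I : Type} {K : Type*} [LieRing K] [LieAlgebra ℂ K]
    [FiniteDimensional ℂ K] {A : I → I → ℤ} (hA : ∀ i, A i i = 2)
    {x y h : I → K} (S : SerreRel A x y h) :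
    ∃ φ : CL.gLie A →ₗ⁅ℂ⁆ K, ∀ i, φ (CL.px A i) = x i ∧ φ (CL.py A i) = y i ∧
      φ (CL.ph A i) = h i := by
  apply S.exists_hom
  · intro i j hij
    apply serre_sl2 (x i) (y i) (h i) (x j) (A j i) (S.xy i)
    · rw [S.hx, hA]
    · rw [S.hy, hA]
    · rw [← lie_skew, S.xy' j i hij.symm, neg_zero]
    · rw [S.hx]
  · intro i j hij
    apply serre_sl2 (y i) (x i) (-h i) (y j) (A j i)
    · rw [← lie_skew, S.xy]
    · rw [neg_lie, S.hy, hA, neg_neg]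
    · rw [neg_lie, S.hx, hA]
    · rw [S.xy' i j hij]
    · rw [neg_lie, S.hy, neg_neg]

theorem cartan_diag {n : ℕ} {A : Fin n → Fin n → ℤ} (hA : IsCartanMatrixOfRootSystem n A)
    (i : Fin n) : A i i = 2 := by
  obtain ⟨Φ, α, _, _, _, _, _, _, hli, _, h⟩ := hA
  have h0 : (inner ℝ (α i) (α i) : ℝ) ≠ 0 := by
    rw [ne_eq, inner_self_eq_zero]
    exact hli.ne_zero i
  have := mul_right_cancel₀ h0 (h i i)
  exact_mod_cast this

variable {n : ℕ} {L : Type} [Fintype L] [Lattice L]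

theorem bracket_mulVecLin (M N : Matrix L L ℂ) :
    ⁅(M.mulVecLin : Module.End ℂ (L → ℂ)), (N.mulVecLin : Module.End ℂ (L → ℂ))⁆ =
      (M * N - N * M).mulVecLin := by
  rw [LieRing.of_associative_ring_bracket, sub_eq_add_neg (M * N), Matrix.mulVecLin_add,
    Matrix.mulVecLin_mul, ← Matrix.toLin'_apply' (-(N * M)), map_neg, Matrix.toLin'_apply',
    Matrix.mulVecLin_mul, ← sub_eq_add_neg]
  rfl

theorem mulVecLin_inj {M N : Matrix L L ℂ} : M.mulVecLin = N.mulVecLin ↔ M = N := by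
  rw [← Matrix.toLin'_apply', ← Matrix.toLin'_apply']
  exact Matrix.toLin'.injective.eq_iff

theorem zsmul_mulVecLin (z : ℤ) (M : Matrix L L ℂ) :
    z • (M.mulVecLin : Module.End ℂ (L → ℂ)) = (z • M).mulVecLin := by
  rw [← Matrix.toLin'_apply', ← Matrix.toLin'_apply', map_zsmul]

theorem neg_mulVecLin (M : Matrix L L ℂ) :
    -(M.mulVecLin : Module.End ℂ (L → ℂ)) = (-M).mulVecLin := by
  rw [← Matrix.toLin'_apply', ← Matrix.toLin'_apply', map_neg]

/-- Matrix of the raising operator. -/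
def mX (γ : L → L → Fin n) (X : L → L → ℂ) (i : Fin n) : Matrix L L ℂ :=
  fun s r => if EL.ced γ i r s then X r s else 0

/-- Matrix of the lowering operator. -/
def mY (γ : L → L → Fin n) (Y : L → L → ℂ) (i : Fin n) : Matrix L L ℂ :=
  fun r s => if EL.ced γ i r s then Y r s else 0

/-- Matrix of the diagonal operator. -/
def mH (γ : L → L → Fin n) (ρ : L → ℕ) (i : Fin n) : Matrix L L ℂ :=
  Matrix.diagonal fun t => ((EL.mwt γ ρ i t : ℤ) : ℂ)

theorem serreRel_iff (A : Fin n → Fin n → ℤ) (γ : L → L → Fin n) (ρ : L → ℕ)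
    (X Y : L → L → ℂ) :
    SerreRel A (EL.opX γ X) (EL.opY γ Y) (EL.opH γ ρ) ↔
      ((∀ i, mX γ X i * mY γ Y i - mY γ Y i * mX γ X i = mH γ ρ i) ∧
      (∀ i j, i ≠ j → mX γ X i * mY γ Y j - mY γ Y j * mX γ X i = 0) ∧
      (∀ i j, mH γ ρ i * mX γ X j - mX γ X j * mH γ ρ i = (A j i) • mX γ X j) ∧
      (∀ i j, mH γ ρ i * mY γ Y j - mY γ Y j * mH γ ρ i = -((A j i) • mY γ Y j))) := by
  have ex : ∀ i, EL.opX γ X i = (mX γ X i).mulVecLin := fun i => rfl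
  have ey : ∀ i, EL.opY γ Y i = (mY γ Y i).mulVecLin := fun i => rfl
  have eh : ∀ i, EL.opH γ ρ i = (mH γ ρ i).mulVecLin := fun i => rfl
  have e0 : (0 : Module.End ℂ (L → ℂ)) = (0 : Matrix L L ℂ).mulVecLin :=
    Matrix.mulVecLin_zero.symm
  constructor
  · rintro ⟨-, h1, h2, h3, h4⟩
    simp only [ex, ey, eh, bracket_mulVecLin, zsmul_mulVecLin, neg_mulVecLin, mulVecLin_inj, e0]
      at h1 h2 h3 h4
    exact ⟨h1, h2, h3, h4⟩
  · rintro ⟨h1, h2, h3, h4⟩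
    constructor <;>
    simp only [ex, ey, eh, bracket_mulVecLin, zsmul_mulVecLin, neg_mulVecLin, mulVecLin_inj, e0]
    · intro i j
      simp only [mH, Matrix.diagonal_mul_diagonal, mul_comm, sub_self]
    all_goals assumption

theorem commXY_apply (γ : L → L → Fin n) (X Y : L → L → ℂ) (i j : Fin n) (s r : L) :
    (mX γ X i * mY γ Y j - mY γ Y j * mX γ X i) s r =
      (∑ q, if EL.ced γ i q s ∧ EL.ced γ j q r then X q s * Y q r else 0) -
      (∑ t, if EL.ced γ i r t ∧ EL.ced γ j s t then Y s t * X r t else 0) := by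
  rw [Matrix.sub_apply, Matrix.mul_apply, Matrix.mul_apply]
  congr 1 <;> refine Finset.sum_congr rfl fun q _ => ?_ <;> simp only [mX, mY] <;>
    split_ifs <;> simp_all

theorem covBy_sup_eq {M : Type*} [Lattice M] {a b c : M} (h1 : a ⋖ c) (h2 : b ⋖ c) (h : a ≠ b) :
    a ⊔ b = c := by
  rcases h1.eq_or_eq le_sup_left (sup_le h1.le h2.le) with e | e
  · have hb : b ≤ a := sup_eq_left.1 e
    rcases h2.eq_or_eq hb h1.le with e' | e'
    · exact absurd e' h
    · exact absurd e' h1.ne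
  · exact e

theorem covBy_inf_eq {M : Type*} [Lattice M] {a b c : M} (h1 : c ⋖ a) (h2 : c ⋖ b) (h : a ≠ b) :
    a ⊓ b = c := by
  rcases h1.eq_or_eq (le_inf h1.le h2.le) inf_le_left with e | e
  · exact e
  · have hb : a ≤ b := inf_eq_left.1 e
    rcases h2.eq_or_eq h1.le hb with e' | e'
    · exact absurd e' h1.ne'
    · exact absurd e' h

theorem commXY_diamond (γ : L → L → Fin n)
    (hdc : ∀ q r s t : L, q ⋖ r → q ⋖ s → r ⋖ t → s ⋖ t → r ≠ s →
      γ q r = γ s t ∧ γ q s = γ r t)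
    (X Y : L → L → ℂ) (i j : Fin n) (q r s t : L)
    (hqr : q ⋖ r) (hqs : q ⋖ s) (hrt : r ⋖ t) (hst : s ⋖ t) (hrs : r ≠ s) :
    (mX γ X i * mY γ Y j - mY γ Y j * mX γ X i) s r =
      if γ q s = i ∧ γ q r = j then X q s * Y q r - Y s t * X r t else 0 := by
  obtain ⟨c1, c2⟩ := hdc q r s t hqr hqs hrt hst hrs
  rw [commXY_apply, Finset.sum_eq_single q, Finset.sum_eq_single t]
  · simp only [EL.ced, hqr, hqs, hrt, hst, true_and, ← c1, ← c2]
    split_ifs <;> simp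
  · intro t' _ ht'
    rw [if_neg]
    rintro ⟨⟨h1, -⟩, ⟨h2, -⟩⟩
    exact ht' ((covBy_sup_eq h1 h2 hrs).symm.trans (covBy_sup_eq hrt hst hrs))
  · simp
  · intro q' _ hq'
    rw [if_neg]
    rintro ⟨⟨h1, -⟩, ⟨h2, -⟩⟩
    exact hq' ((covBy_inf_eq h2 h1 hrs).symm.trans (covBy_inf_eq hqr hqs hrs))
  · simp

theorem commXY_off [IsModularLattice L] (γ : L → L → Fin n)
    (X Y : L → L → ℂ) (i j : Fin n) (r s : L) (hrs : r ≠ s)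
    (hno : ∀ q t, ¬ (q ⋖ r ∧ q ⋖ s ∧ r ⋖ t ∧ s ⋖ t)) :
    (mX γ X i * mY γ Y j - mY γ Y j * mX γ X i) s r = 0 := by
  rw [commXY_apply, Finset.sum_eq_zero, Finset.sum_eq_zero, sub_zero]
  · intro t _
    rw [if_neg]
    rintro ⟨⟨h1, -⟩, ⟨h2, -⟩⟩
    obtain rfl := covBy_sup_eq h1 h2 hrs
    exact hno _ _ ⟨inf_covBy_of_covBy_sup_right h2, inf_covBy_of_covBy_sup_left h1, h1, h2⟩
  · intro q _
    rw [if_neg]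
    rintro ⟨⟨h1, -⟩, ⟨h2, -⟩⟩
    obtain rfl := covBy_inf_eq h2 h1 hrs
    exact hno _ _ ⟨h2, h1, covBy_sup_of_inf_covBy_right h1, covBy_sup_of_inf_covBy_left h2⟩

theorem hX_iff (A : Fin n → Fin n → ℤ) (γ : L → L → Fin n) (ρ : L → ℕ) (X : L → L → ℂ)
    (i j : Fin n) :
    (mH γ ρ i * mX γ X j - mX γ X j * mH γ ρ i = (A j i) • mX γ X j) ↔
      ∀ r s, EL.ced γ j r s → X r s ≠ 0 → EL.mwt γ ρ i s = EL.mwt γ ρ i r + A j i := by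
  rw [← Matrix.ext_iff, forall_comm]
  refine forall_congr' fun r => forall_congr' fun s => ?_
  rw [Matrix.sub_apply, mH, Matrix.diagonal_mul, Matrix.mul_diagonal, Matrix.smul_apply, mX]
  by_cases h : EL.ced γ j r s
  · simp only [h, if_true, true_imp_iff, zsmul_eq_mul]
    rw [mul_comm (X r s), ← sub_mul]
    by_cases h0 : X r s = 0
    · simp [h0]
    · rw [mul_left_inj' h0, sub_eq_iff_eq_add']
      simp only [ne_eq, h0, not_false_eq_true, true_imp_iff]
      norm_cast
  · simp [h]

theorem hY_iff (A : Fin n → Fin n → ℤ) (γ : L → L → Fin n) (ρ : L → ℕ) (Y : L → L → ℂ)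
    (i j : Fin n) :
    (mH γ ρ i * mY γ Y j - mY γ Y j * mH γ ρ i = -((A j i) • mY γ Y j)) ↔
      ∀ r s, EL.ced γ j r s → Y r s ≠ 0 → EL.mwt γ ρ i s = EL.mwt γ ρ i r + A j i := by
  rw [← Matrix.ext_iff]
  refine forall_congr' fun r => forall_congr' fun s => ?_
  rw [Matrix.sub_apply, mH, Matrix.diagonal_mul, Matrix.mul_diagonal, Matrix.neg_apply,
    Matrix.smul_apply, mY]
  by_cases h : EL.ced γ j r s
  · simp only [h, if_true, true_imp_iff, zsmul_eq_mul]
    rw [mul_comm (Y r s), ← sub_mul, ← neg_mul]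
    by_cases h0 : Y r s = 0
    · simp [h0]
    · rw [mul_left_inj' h0]
      simp only [ne_eq, h0, not_false_eq_true, true_imp_iff]
      norm_cast
      constructor <;> intro h <;> linarith
  · simp [h]

theorem diag_iff (γ : L → L → Fin n) (ρ : L → ℕ) (X Y : L → L → ℂ) (i : Fin n) (t : L) :
    ((mX γ X i * mY γ Y i - mY γ Y i * mX γ X i) t t = mH γ ρ i t t) ↔
      ((EL.mwt γ ρ i t : ℤ) : ℂ) =
        (∑ q : L, if EL.ced γ i q t then X q t * Y q t else 0) -
        (∑ s : L, if EL.ced γ i t s then X t s * Y t s else 0) := by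
  rw [commXY_apply, mH, Matrix.diagonal_apply_eq, eq_comm]
  simp only [and_self, mul_comm]

end Helpers

/-- Proposition 2.1 of Donnelly–Dunkum–White: the combinatorial conditions
(`A`-structured + diamond relations + crossing relations) hold if and only if the prescribed
operators extend to a representation of the Serre-presented Lie algebra `𝔤(A)` on `V[L]`. -/
theorem statement_0 {n : ℕ} (hn : 1 ≤ n) (A : Fin n → Fin n → ℤ)
    (hA : IsCartanMatrixOfRootSystem n A)
    (L : Type) [Fintype L] [Lattice L] [IsModularLattice L]
    (γ : L → L → Fin n)
    (hdc : ∀ q r s t : L, q ⋖ r → q ⋖ s → r ⋖ t → s ⋖ t → r ≠ s →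
      γ q r = γ s t ∧ γ q s = γ r t)
    (ρ : L → ℕ) (hρ : ∀ r s : L, r ⋖ s → ρ s = ρ r + 1)
    (X Y : L → L → ℂ) (hXY : ∀ r s : L, r ⋖ s → ¬(X r s = 0 ∧ Y r s = 0)) :
    ((∀ r s : L, r ⋖ s → ∀ j : Fin n, EL.mwt γ ρ j s = EL.mwt γ ρ j r + A (γ r s) j) ∧
      (∀ q r s t : L, q ⋖ r → q ⋖ s → r ⋖ t → s ⋖ t → r ≠ s →
        Y s t * X r t = X q s * Y q r) ∧
      (∀ (i : Fin n) (t : L), ((EL.mwt γ ρ i t : ℤ) : ℂ) =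
        (∑ q : L, if EL.ced γ i q t then X q t * Y q t else 0) -
        (∑ s : L, if EL.ced γ i t s then X t s * Y t s else 0))) ↔
    (∃ φ : CL.gLie A →ₗ⁅ℂ⁆ Module.End ℂ (L → ℂ),
      ∀ i : Fin n, φ (CL.px A i) = EL.opX γ X i ∧ φ (CL.py A i) = EL.opY γ Y i ∧
        φ (CL.ph A i) = EL.opH γ ρ i) := by
  have hmain : (∃ φ : CL.gLie A →ₗ⁅ℂ⁆ Module.End ℂ (L → ℂ),
      ∀ i : Fin n, φ (CL.px A i) = EL.opX γ X i ∧ φ (CL.py A i) = EL.opY γ Y i ∧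
        φ (CL.ph A i) = EL.opH γ ρ i) ↔
      SerreRel A (EL.opX γ X) (EL.opY γ Y) (EL.opH γ ρ) :=
    ⟨fun ⟨φ, hφ⟩ => SerreRel.of_hom φ hφ, fun S => S.exists_hom' (cartan_diag hA)⟩
  rw [hmain, serreRel_iff]
  simp only [hX_iff, hY_iff]
  constructor
  · rintro ⟨ha, hd, hc⟩
    have hoff : ∀ i j r s, r ≠ s → (mX γ X i * mY γ Y j - mY γ Y j * mX γ X i) s r = 0 := by
      intro i j r s hrs
      by_cases h : ∃ q t, q ⋖ r ∧ q ⋖ s ∧ r ⋖ t ∧ s ⋖ t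
      · obtain ⟨q, t, h1, h2, h3, h4⟩ := h
        rw [commXY_diamond γ hdc X Y i j q r s t h1 h2 h3 h4 hrs,
          hd q r s t h1 h2 h3 h4 hrs, sub_self, ite_self]
      · push Not at h
        exact commXY_off γ X Y i j r s hrs (fun q t ⟨h1, h2, h3, h4⟩ => h q t h1 h2 h3 h4)
    refine ⟨?_, ?_, ?_, ?_⟩
    · intro i
      ext s r
      by_cases hrs : r = s
      · subst hrs
        exact (diag_iff γ ρ X Y i r).2 (hc i r)
      · rw [hoff i i r s hrs, mH, Matrix.diagonal_apply_ne _ (Ne.symm hrs)]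
    · intro i j hij
      ext s r
      by_cases hrs : r = s
      · subst hrs
        rw [commXY_apply, Finset.sum_eq_zero, Finset.sum_eq_zero, sub_zero, Matrix.zero_apply]
        · intro t _
          rw [if_neg]
          rintro ⟨⟨-, h1⟩, ⟨-, h2⟩⟩
          exact hij (h1.symm.trans h2)
        · intro t _
          rw [if_neg]
          rintro ⟨⟨-, h1⟩, ⟨-, h2⟩⟩
          exact hij (h1.symm.trans h2)
      · rw [hoff i j r s hrs, Matrix.zero_apply]
    · rintro i j r s ⟨h1, rfl⟩ -
      exact ha r s h1 i
    · rintro i j r s ⟨h1, rfl⟩ -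
      exact ha r s h1 i
  · rintro ⟨h1, h2, h3, h4⟩
    refine ⟨?_, ?_, ?_⟩
    · intro r s hrs j
      by_cases hx : X r s = 0
      · exact h4 j (γ r s) r s ⟨hrs, rfl⟩ fun hy => hXY r s hrs ⟨hx, hy⟩
      · exact h3 j (γ r s) r s ⟨hrs, rfl⟩ hx
    · intro q r s t hqr hqs hrt hst hrs
      have e := commXY_diamond γ hdc X Y (γ q s) (γ q r) q r s t hqr hqs hrt hst hrs
      rw [if_pos ⟨rfl, rfl⟩] at e
      have e0 : (mX γ X (γ q s) * mY γ Y (γ q r) - mY γ Y (γ q r) * mX γ X (γ q s)) s r = 0 := by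
        by_cases hc : γ q s = γ q r
        · rw [hc, h1, mH, Matrix.diagonal_apply_ne _ hrs.symm]
        · rw [h2 _ _ hc, Matrix.zero_apply]
      rw [e0] at e
      exact (sub_eq_zero.1 e.symm).symm
    · intro i t
      exact (diag_iff γ ρ X Y i t).1 (by rw [h1])

end
end

section
/- With all hypotheses and definitions as in the context, assume the equivalent conditions of Proposition 2.1 hold (L is A-structured and the diamond and crossing relations are satisfied, so that V[L] is a 𝔤(A)-module via the defined operators). Let t_max be the maximal element of L and λ := wt(t_max). Then W is a finite group, and the 𝔤(A)-module V[L] is irreducible (it has no 𝔤(A)-invariant subspace other than 0 and V[L]) if and only if 𝒜(Z^ϱ) · WGF(L;Z) = 𝒜(Z^{λ+ϱ}) in the group algebra ℤ[ℤ^n]. -/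
noncomputable section

attribute [local instance] Classical.propDecidable

namespace CL

variable {N : Type} [DecidableEq N] [Fintype N]

/-- The matrix of the simple reflection `S_i : μ ↦ μ − μ_i·(row i of A)`, acting via `mulVec`. -/
def refl (A : N → N → ℤ) (i : N) : Matrix N N ℤ :=
  fun j l => (if j = l then 1 else 0) - (if l = i then A i j else 0)

/-- The Weyl group: the group of integer matrices generated by the simple reflections
(each `S_i` is an involution, so the generated submonoid is a group). -/
def weyl (A : N → N → ℤ) : Submonoid (Matrix N N ℤ) :=
  Submonoid.closure (Set.range (refl A))

/-- The alternant `𝒜(Z^ν) = Σ_{w∈W} det(w)·Z^{w(ν)}` in the group algebra `ℤ[ℤ^N]`. -/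
def alt (A : N → N → ℤ) (ν : N → ℤ) : AddMonoidAlgebra ℤ (N → ℤ) :=
  ∑ᶠ w ∈ (weyl A : Set (Matrix N N ℤ)),
    AddMonoidAlgebra.single (Matrix.mulVec w ν) (Matrix.det w)

end CL

namespace WCF
open Matrix

variable {n : ℕ}

/-- Root data attached to a Cartan matrix, inside the weight lattice `ℤ^n`. -/
structure RD (A : Fin n → Fin n → ℤ) where
  B : (Fin n → ℤ) →+ (Fin n → ℤ) →+ ℝ
  symm : ∀ a b, B a b = B b a
  pos : ∀ a, a ≠ 0 → 0 < B a a
  simple : ∀ μ j, 2 * B μ (A j) = (μ j : ℝ) * B (A j) (A j)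
  diag : ∀ i, A i i = 2
  indep : ∀ k : Fin n → ℤ, ∑ i, k i • A i = 0 → k = 0
  R : Finset (Fin n → ℤ)
  simple_mem : ∀ i, A i ∈ R
  refl_mem : ∀ β ∈ R, ∀ i, β - β i • A i ∈ R
  sign : ∀ β ∈ R, ∃ k : Fin n → ℤ, ((∀ i, 0 ≤ k i) ∨ (∀ i, k i ≤ 0)) ∧ β = ∑ i, k i • A i
  orbit : ∀ β ∈ R, ∃ w ∈ CL.weyl A, ∃ i, β = w *ᵥ A i
  red : ∀ (k : ℤ) i, k • A i ∈ R → k = 1 ∨ k = -1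
  fin : (CL.weyl A : Set (Matrix (Fin n) (Fin n) ℤ)).Finite

lemma refl_mulVec (A : Fin n → Fin n → ℤ) (i : Fin n) (μ : Fin n → ℤ) :
    CL.refl A i *ᵥ μ = μ - μ i • A i := by
  ext j
  simp only [CL.refl, Matrix.mulVec, dotProduct, sub_mul, Finset.sum_sub_distrib, ite_mul, one_mul,
    zero_mul, Finset.sum_ite_eq, Finset.sum_ite_eq', Finset.mem_univ, if_true, Pi.sub_apply,
    Pi.smul_apply, smul_eq_mul]
  ring

lemma exists_RD (A : Fin n → Fin n → ℤ) (hA : IsCartanMatrixOfRootSystem n A) :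
    Nonempty (RD A) := by
  obtain ⟨Φ, α, h0, -, hred, -, hrefl, hmem, hli, hsign, hcar⟩ := hA
  have hα0 : ∀ j, α j ≠ 0 := fun j => hli.ne_zero j
  have hαpos : ∀ j, 0 < (inner ℝ (α j) (α j) : ℝ) := fun j => by
    simpa using real_inner_self_pos.mpr (hα0 j)
  have hspan : Submodule.span ℝ (Set.range α) = ⊤ :=
    hli.span_eq_top_of_card_eq_finrank' (by simp)
  -- the coroot map
  let c : EuclideanSpace ℝ (Fin n) →ₗ[ℝ] (Fin n → ℝ) :=
    LinearMap.pi fun j => (2 / (inner ℝ (α j) (α j) : ℝ)) • (innerₗ (EuclideanSpace ℝ (Fin n)) (α j))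
  have hc : ∀ v j, c v j = 2 / (inner ℝ (α j) (α j) : ℝ) * inner ℝ (α j) v := by
    intro v j; simp [c]
  have hcinj : Function.Injective c := by
    rw [← LinearMap.ker_eq_bot, LinearMap.ker_eq_bot']
    intro v hv
    have h1 : ∀ j, (inner ℝ (α j) v : ℝ) = 0 := by
      intro j
      have := congrFun hv j
      rw [hc] at this
      have h2 := (hαpos j).ne'
      simpa [h2, hα0 j] using this
    have h2 : ∀ u ∈ Submodule.span ℝ (Set.range α), (inner ℝ u v : ℝ) = 0 := by
      intro u hu
      induction hu using Submodule.span_induction with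
      | mem x hx => obtain ⟨j, rfl⟩ := hx; exact h1 j
      | zero => simp
      | add x y _ _ hx hy => simp [inner_add_left, hx, hy]
      | smul a x _ hx => simp [inner_smul_left, hx]
    have := h2 v (by rw [hspan]; trivial)
    simpa using this
  have hcsurj : Function.Surjective c :=
    (LinearMap.injective_iff_surjective_of_finrank_eq_finrank (by simp)).mp hcinj
  let e := LinearEquiv.ofBijective c ⟨hcinj, hcsurj⟩
  let ι : (Fin n → ℤ) →+ EuclideanSpace ℝ (Fin n) :=
    AddMonoidHom.mk' (fun μ => e.symm (fun j => (μ j : ℝ))) (by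
      intro a b; rw [← map_add]; congr 1; ext j; simp)
  have hι : ∀ μ j, 2 * (inner ℝ (ι μ) (α j) : ℝ) = μ j * inner ℝ (α j) (α j) := by
    intro μ j
    have h1 : c (ι μ) = fun j => (μ j : ℝ) := e.apply_symm_apply (fun j => (μ j : ℝ))
    have h2 := congrFun h1 j
    rw [hc] at h2
    rw [← h2, real_inner_comm]
    have h3 := (hαpos j).ne'
    generalize (inner ℝ (α j) (α j) : ℝ) = z at h3 ⊢
    field_simp
  have hιinj : Function.Injective ι := by
    intro a b hab
    ext j
    have h1 := hι a j
    rw [hab, hι b j] at h1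
    have := mul_right_cancel₀ (hαpos j).ne' h1
    exact_mod_cast this.symm
  have hιA : ∀ i, ι (A i) = α i := by
    intro i
    apply hcinj
    have h1 : c (ι (A i)) = fun j => (A i j : ℝ) := e.apply_symm_apply (fun j => (A i j : ℝ))
    rw [h1]
    ext j
    rw [hc]
    have := hcar i j
    rw [real_inner_comm (α i) (α j)]
    have h3 := (hαpos j).ne'
    rw [eq_comm, div_mul_eq_mul_div, div_eq_iff h3, this]
  have hdiag : ∀ i, A i i = 2 := by
    intro i
    have := mul_right_cancel₀ (hαpos i).ne' (hcar i i)
    exact_mod_cast this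
  have hιref : ∀ μ i, ι (μ - μ i • A i) = ι μ - (2 * (inner ℝ (ι μ) (α i) : ℝ) / (inner ℝ (α i) (α i) : ℝ)) • α i := by
    intro μ i
    rw [map_sub, map_zsmul, hιA, hι, mul_div_cancel_right₀ _ (hαpos i).ne', Int.cast_smul_eq_zsmul]
  have hindep : ∀ k : Fin n → ℤ, ∑ i, k i • A i = 0 → k = 0 := by
    intro k hk
    have h1 := congrArg ι hk
    rw [map_sum, map_zero] at h1
    have h2 : ∑ i, (k i : ℝ) • α i = 0 := by
      rw [← h1]; refine Finset.sum_congr rfl fun i _ => ?_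
      rw [map_zsmul, hιA, Int.cast_smul_eq_zsmul]
    ext i
    have := Fintype.linearIndependent_iff.mp hli _ h2 i
    exact_mod_cast this
  -- preimage of Φ
  have hfinpre : (ι ⁻¹' (Φ : Set _)).Finite := Φ.finite_toSet.preimage hιinj.injOn
  have hWpre : ∀ w ∈ CL.weyl A, ∀ μ, ι μ ∈ Φ → ι (w *ᵥ μ) ∈ Φ := by
    intro w hw
    induction hw using Submonoid.closure_induction with
    | mem x hx =>
      obtain ⟨i, rfl⟩ := hx
      intro μ hμ
      rw [refl_mulVec, hιref]
      exact hrefl _ (hmem i) _ hμ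
    | one => intro μ hμ; simpa using hμ
    | mul x y _ _ hx hy => intro μ hμ; rw [← Matrix.mulVec_mulVec]; exact hx _ (hy _ hμ)
  have hdet : (Matrix.of A).det ≠ 0 := by
    intro h
    obtain ⟨v, hv, hv2⟩ := Matrix.exists_vecMul_eq_zero_iff.mpr h
    apply hv
    apply hindep
    rw [← hv2]
    ext j
    simp [Matrix.vecMul, dotProduct]
  have hfin : (CL.weyl A : Set (Matrix (Fin n) (Fin n) ℤ)).Finite := by
    have h1 : (Set.pi Set.univ (fun _ : Fin n => (ι ⁻¹' (Φ : Set _)))).Finite :=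
      Set.Finite.pi fun _ => hfinpre
    refine Set.Finite.of_finite_image (f := fun w => fun i : Fin n => w *ᵥ A i) (h1.subset ?_) ?_
    · rintro _ ⟨w, hw, rfl⟩ i -
      exact hWpre w hw _ (by rw [hιA]; exact hmem i)
    · intro w _ w' _ h
      have h2 : w * (Matrix.of A)ᵀ = w' * (Matrix.of A)ᵀ := by
        ext i j
        have := congrFun (congrFun h j) i
        simpa [Matrix.mulVec, Matrix.mul_apply, dotProduct] using this
      have h3 : (Matrix.of A)ᵀ * ((Matrix.of A)ᵀ).adjugate = ((Matrix.of A)ᵀ).det • 1 := Matrix.mul_adjugate _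
      have h4 := congrArg (· * ((Matrix.of A)ᵀ).adjugate) h2
      simp only [Matrix.mul_assoc, h3, Matrix.mul_smul, Matrix.mul_one, Matrix.det_transpose] at h4
      exact smul_right_injective _ hdet h4
  let Rs : Set (Fin n → ℤ) := {β | ∃ w ∈ CL.weyl A, ∃ i, β = w *ᵥ A i}
  have hRsΦ : ∀ β ∈ Rs, ι β ∈ Φ := by
    rintro _ ⟨w, hw, i, rfl⟩
    exact hWpre w hw _ (by rw [hιA]; exact hmem i)
  have hRsfin : Rs.Finite := hfinpre.subset fun β hβ => hRsΦ β hβ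
  refine ⟨{ B := AddMonoidHom.mk' (fun a => AddMonoidHom.mk' (fun b => (inner ℝ (ι a) (ι b) : ℝ)) ?_) ?_
            symm := ?_, pos := ?_, simple := ?_, diag := hdiag, indep := hindep, R := hRsfin.toFinset
            simple_mem := ?_, refl_mem := ?_, sign := ?_, orbit := ?_, red := ?_, fin := hfin }⟩
  · intro b b'; simp [inner_add_right]
  · intro b b'; ext; simp [inner_add_left]
  · intro a b; simp [real_inner_comm]
  · intro a ha
    exact real_inner_self_pos.mpr (fun h => ha (hιinj (h.trans (map_zero ι).symm)))
  · intro μ j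
    simp only [AddMonoidHom.mk'_apply, hιA]
    exact hι μ j
  · intro i
    rw [Set.Finite.mem_toFinset]
    exact ⟨1, one_mem _, i, by simp⟩
  · intro β hβ i
    rw [Set.Finite.mem_toFinset] at hβ ⊢
    obtain ⟨w, hw, j, rfl⟩ := hβ
    refine ⟨CL.refl A i * w, mul_mem (Submonoid.subset_closure ⟨i, rfl⟩) hw, j, ?_⟩
    rw [← Matrix.mulVec_mulVec, refl_mulVec]
  · intro β hβ
    rw [Set.Finite.mem_toFinset] at hβ
    obtain ⟨k, hk, hk2⟩ := hsign _ (hRsΦ β hβ)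
    refine ⟨k, hk, hιinj ?_⟩
    rw [hk2, map_sum]
    refine Finset.sum_congr rfl fun i _ => ?_
    rw [map_zsmul, hιA, Int.cast_smul_eq_zsmul]
  · intro β hβ
    rw [Set.Finite.mem_toFinset] at hβ
    exact hβ
  · intro k i hk
    rw [Set.Finite.mem_toFinset] at hk
    have h1 := hRsΦ _ hk
    rw [map_zsmul, hιA, ← Int.cast_smul_eq_zsmul ℝ] at h1
    have := hred _ (hmem i) _ h1
    exact_mod_cast this

end WCF

namespace WCF
open Matrix

variable {n : ℕ} {A : Fin n → Fin n → ℤ}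

/-- The root lattice element with coordinates `k`. -/
def q (A : Fin n → Fin n → ℤ) (k : Fin n → ℤ) : Fin n → ℤ := ∑ i, k i • A i

lemma q_add (k l : Fin n → ℤ) : q A (k + l) = q A k + q A l := by
  simp [q, add_smul, Finset.sum_add_distrib]

lemma q_neg (k : Fin n → ℤ) : q A (-k) = - q A k := by
  simp [q, neg_smul, Finset.sum_neg_distrib]

lemma q_sub (k l : Fin n → ℤ) : q A (k - l) = q A k - q A l := by
  rw [sub_eq_add_neg, q_add, q_neg, sub_eq_add_neg]

lemma q_single (i : Fin n) (c : ℤ) : q A (Pi.single i c) = c • A i := by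
  rw [q, Finset.sum_eq_single i]
  · simp
  · intro j _ hj; simp [Pi.single_eq_of_ne hj]
  · simp

lemma q_zero : q A 0 = 0 := by simp [q]

namespace RD

variable (D : RD A)
include D

lemma q_inj {k l : Fin n → ℤ} (h : q A k = q A l) : k = l := by
  have := D.indep (k - l) (by
    have := q_sub (A := A) k l
    rw [h, sub_self] at this
    exact this)
  exact sub_eq_zero.mp this

/-- Positive roots. -/
def Rp : Finset (Fin n → ℤ) := D.R.filter (fun β => ∃ k, (∀ i, 0 ≤ k i) ∧ β = q A k)

lemma mem_Rp {β : Fin n → ℤ} : β ∈ D.Rp ↔ β ∈ D.R ∧ ∃ k, (∀ i, 0 ≤ k i) ∧ β = q A k := by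
  simp [Rp]

lemma Rp_sub {β} (h : β ∈ D.Rp) : β ∈ D.R := (D.mem_Rp.mp h).1

lemma simple_mem_Rp (i : Fin n) : A i ∈ D.Rp := by
  rw [mem_Rp]
  refine ⟨D.simple_mem i, Pi.single i 1, fun j => ?_, by rw [q_single, one_smul]⟩
  by_cases h : j = i
  · subst h; simp
  · simp [Pi.single_eq_of_ne h]

lemma W_mem {w} (hw : w ∈ CL.weyl A) : ∀ β ∈ D.R, w *ᵥ β ∈ D.R := by
  induction hw using Submonoid.closure_induction with
  | mem x hx =>
    obtain ⟨i, rfl⟩ := hx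
    intro β hβ; rw [refl_mulVec]; exact D.refl_mem β hβ i
  | one => intro μ hμ; simpa using hμ
  | mul x y _ _ hx hy => intro μ hμ; rw [← Matrix.mulVec_mulVec]; exact hx _ (hy _ hμ)

lemma neg_mem {β} (h : β ∈ D.R) : -β ∈ D.R := by
  obtain ⟨w, hw, i, rfl⟩ := D.orbit β h
  have h1 := D.W_mem hw _ (D.refl_mem _ (D.simple_mem i) i)
  have h2 : A i - A i i • A i = - A i := by rw [D.diag i]; module
  rw [h2, Matrix.mulVec_neg] at h1
  exact h1

lemma zero_notMem : (0 : Fin n → ℤ) ∉ D.R := by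
  intro h
  obtain ⟨w, hw, i, -⟩ := D.orbit 0 h
  have := D.red 0 i (by simpa using h)
  omega

lemma pos_of_coeff {k : Fin n → ℤ} (h : q A k ∈ D.R) {j} (hj : 0 < k j) : q A k ∈ D.Rp := by
  rw [mem_Rp]
  refine ⟨h, k, ?_, rfl⟩
  obtain ⟨l, hl, hl2⟩ := D.sign _ h
  have : k = l := D.q_inj hl2
  subst this
  rcases hl with hl | hl
  · exact hl
  · have := hl j; omega

lemma pos_or_neg {β} (h : β ∈ D.R) : β ∈ D.Rp ∨ -β ∈ D.Rp := by
  obtain ⟨l, hl, hl2⟩ := D.sign _ h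
  rcases hl with hl | hl
  · left; rw [mem_Rp]; exact ⟨h, l, hl, hl2⟩
  · right; rw [mem_Rp]; refine ⟨D.neg_mem h, -l, fun i => by simpa using hl i, ?_⟩
    rw [q_neg]; exact congrArg _ hl2

lemma not_both {β} (h : β ∈ D.Rp) (h' : -β ∈ D.Rp) : False := by
  obtain ⟨h1, k, hk, rfl⟩ := D.mem_Rp.mp h
  obtain ⟨h2, l, hl, h3⟩ := D.mem_Rp.mp h'
  rw [← q_neg] at h3
  have h4 := D.q_inj h3
  have : k = 0 := by
    ext i
    have := congrFun h4 i
    have h5 := hk i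
    have h6 := hl i
    simp at this ⊢
    omega
  subst this
  rw [q_zero] at h1
  exact D.zero_notMem h1

lemma exists_other {k : Fin n → ℤ} (hk : ∀ i, 0 ≤ k i) (h : q A k ∈ D.R) {i} (hi : q A k ≠ A i) :
    ∃ j, j ≠ i ∧ 0 < k j := by
  by_contra hcon
  push Not at hcon
  have h1 : k = Pi.single i (k i) := by
    ext j
    by_cases hj : j = i
    · subst hj; simp
    · rw [Pi.single_eq_of_ne hj]
      exact le_antisymm (hcon j hj) (hk j)
  rw [h1, q_single] at h
  have h2 := hk i
  rcases D.red _ _ h with h3 | h3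
  · apply hi
    rw [h1, q_single, h3, one_smul]
  · omega

lemma refl_q (k : Fin n → ℤ) (c : ℤ) (i : Fin n) : q A k - c • A i = q A (k - Pi.single i c) := by
  rw [q_sub, q_single]

lemma refl_pos {β} (h : β ∈ D.Rp) {i} (hi : β ≠ A i) : β - β i • A i ∈ D.Rp := by
  obtain ⟨h1, k, hk, rfl⟩ := D.mem_Rp.mp h
  obtain ⟨j, hj, hj2⟩ := D.exists_other hk h1 hi
  have h2 := D.refl_mem _ h1 i
  rw [D.refl_q] at h2 ⊢
  refine D.pos_of_coeff h2 (j := j) ?_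
  simpa [Pi.single_eq_of_ne hj] using hj2

lemma refl_refl (μ : Fin n → ℤ) (i : Fin n) :
    (μ - μ i • A i) - (μ - μ i • A i) i • A i = μ := by
  have : (μ - μ i • A i) i = - μ i := by simp [D.diag i]; ring
  rw [this]; module

lemma refl_ne {β} (h : β ∈ D.Rp) (i) : β - β i • A i ≠ A i := by
  intro h1
  have h2 := D.refl_refl β i
  rw [h1, D.diag i] at h2
  have h3 : -β = A i := by rw [← h2]; module
  exact D.not_both h (by rw [h3]; exact D.simple_mem_Rp i)

lemma sum_Rp : ∑ β ∈ D.Rp, β = fun _ => (2 : ℤ) := by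
  ext i
  rw [← Finset.add_sum_erase _ _ (D.simple_mem_Rp i)]
  set T := ∑ β ∈ D.Rp.erase (A i), β with hT
  have h1 : T - T i • A i = T := by
    have : T - T i • A i = ∑ β ∈ D.Rp.erase (A i), (β - β i • A i) := by
      rw [Finset.sum_sub_distrib, ← Finset.sum_smul, hT, Finset.sum_apply]
    rw [this, hT]
    refine Finset.sum_nbij' (fun β => β - β i • A i) (fun β => β - β i • A i) ?_ ?_ ?_ ?_ ?_
    · intro β hβ
      rw [Finset.mem_erase] at hβ ⊢
      exact ⟨D.refl_ne hβ.2 i, D.refl_pos hβ.2 hβ.1⟩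
    · intro β hβ
      rw [Finset.mem_erase] at hβ ⊢
      exact ⟨D.refl_ne hβ.2 i, D.refl_pos hβ.2 hβ.1⟩
    · intro β _; exact D.refl_refl β i
    · intro β _; exact D.refl_refl β i
    · intro β _; rfl
  have h2 := congrFun h1 i
  simp [D.diag i] at h2
  simp [D.diag i, h2]

lemma B_smul_left (c : ℤ) (μ ν : Fin n → ℤ) : D.B (c • μ) ν = (c : ℝ) * D.B μ ν := by
  rw [map_zsmul, AddMonoidHom.smul_apply, zsmul_eq_mul]

lemma B_smul_right (c : ℤ) (μ ν : Fin n → ℤ) : D.B μ (c • ν) = (c : ℝ) * D.B μ ν := by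
  rw [map_zsmul, zsmul_eq_mul]

lemma B_refl (μ ν : Fin n → ℤ) (i : Fin n) :
    D.B (μ - μ i • A i) (ν - ν i • A i) = D.B μ ν := by
  have h1 := D.simple μ i
  have h2 := D.simple ν i
  simp only [map_sub, AddMonoidHom.sub_apply, B_smul_left, B_smul_right]
  rw [D.symm (A i) ν]
  linear_combination (-(ν i : ℝ)/2) * h1 + (-(μ i : ℝ)/2) * h2

lemma B_W {w} (hw : w ∈ CL.weyl A) : ∀ μ ν, D.B (w *ᵥ μ) (w *ᵥ ν) = D.B μ ν := by
  induction hw using Submonoid.closure_induction with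
  | mem x hx =>
    obtain ⟨i, rfl⟩ := hx
    intro μ ν; rw [refl_mulVec, refl_mulVec]; exact D.B_refl μ ν i
  | one => intro μ ν; simp
  | mul x y _ _ hx hy => intro μ ν; rw [← Matrix.mulVec_mulVec, ← Matrix.mulVec_mulVec, hx, hy]

lemma A_ne (i) : A i ≠ 0 := fun h => D.zero_notMem (h ▸ D.simple_mem i)

lemma bpos (i) : 0 < D.B (A i) (A i) := D.pos _ (D.A_ne i)

lemma B_q (μ k : Fin n → ℤ) : D.B μ (q A k) = ∑ i, (k i : ℝ) * ((μ i : ℝ) * (D.B (A i) (A i) / 2)) := by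
  rw [q, map_sum]
  refine Finset.sum_congr rfl fun i _ => ?_
  have := D.simple μ i
  rw [map_zsmul, zsmul_eq_mul]
  congr 1
  linarith

lemma B_q_nonneg {μ k : Fin n → ℤ} (hμ : ∀ i, 0 ≤ μ i) (hk : ∀ i, 0 ≤ k i) : 0 ≤ D.B μ (q A k) := by
  rw [B_q]
  refine Finset.sum_nonneg fun i _ => ?_
  have := D.bpos i
  have h1 : (0:ℝ) ≤ μ i := by exact_mod_cast hμ i
  have h2 : (0:ℝ) ≤ k i := by exact_mod_cast hk i
  positivity

lemma B_q_pos {μ k : Fin n → ℤ} (hμ : ∀ i, 0 < μ i) (hk : ∀ i, 0 ≤ k i) (hk0 : k ≠ 0) :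
    0 < D.B μ (q A k) := by
  rw [B_q]
  have hterm : ∀ i, 0 < (μ i : ℝ) * (D.B (A i) (A i) / 2) := fun i => by
    have := D.bpos i
    have h1 : (0:ℝ) < μ i := by exact_mod_cast hμ i
    positivity
  obtain ⟨j, hj⟩ := Function.ne_iff.mp hk0
  refine Finset.sum_pos' (fun i _ => ?_) ⟨j, Finset.mem_univ j, ?_⟩
  · have h2 : (0:ℝ) ≤ k i := by exact_mod_cast hk i
    exact mul_nonneg h2 (hterm i).le
  · have h2 : (0:ℝ) < k j := by
      have := lt_of_le_of_ne (hk j) (Ne.symm hj)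
      exact_mod_cast this
    exact mul_pos h2 (hterm j)

lemma refl_sq (i : Fin n) : CL.refl A i * CL.refl A i = 1 := by
  apply Matrix.ext_of_mulVec_single
  intro j
  rw [← Matrix.mulVec_mulVec, refl_mulVec, refl_mulVec, D.refl_refl, Matrix.one_mulVec]

lemma det_refl (i : Fin n) : (CL.refl A i).det = -1 := by
  have h : CL.refl A i = 1 + Matrix.replicateCol Unit (-A i) * Matrix.replicateRow Unit (Pi.single i (1:ℤ)) := by
    ext j l
    simp only [CL.refl, Matrix.add_apply, Matrix.one_apply, Matrix.mul_apply, Matrix.replicateCol_apply,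
      Matrix.replicateRow_apply, Pi.single_apply, Pi.neg_apply]
    split_ifs <;> simp <;> ring
  rw [h, Matrix.det_one_add_replicateCol_mul_replicateRow]
  simp [D.diag i]

lemma conj_refl {w} (hw : w ∈ CL.weyl A) {i j} (h : w *ᵥ A i = A j) :
    w * CL.refl A i = CL.refl A j * w := by
  apply Matrix.ext_of_mulVec_single
  intro l
  set μ : Fin n → ℤ := Pi.single l 1
  rw [← Matrix.mulVec_mulVec, ← Matrix.mulVec_mulVec, refl_mulVec, refl_mulVec, Matrix.mulVec_sub,
    Matrix.mulVec_smul, h]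
  congr 2
  have h1 := D.simple μ i
  have h2 := D.simple (w *ᵥ μ) j
  rw [← h, D.B_W hw, D.B_W hw, h1] at h2
  have := mul_right_cancel₀ (D.bpos i).ne' h2
  exact_mod_cast this

/-- The product of simple reflections along a word. -/
def word (_D : RD A) (l : List (Fin n)) : Matrix (Fin n) (Fin n) ℤ := (l.map (CL.refl A)).prod

lemma word_mem (l : List (Fin n)) : D.word l ∈ CL.weyl A := by
  refine Submonoid.list_prod_mem _ ?_
  intro x hx
  obtain ⟨i, -, rfl⟩ := List.mem_map.mp hx
  exact Submonoid.subset_closure ⟨i, rfl⟩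

lemma exists_word {w} (hw : w ∈ CL.weyl A) : ∃ l, w = D.word l := by
  induction hw using Submonoid.closure_induction with
  | mem x hx => obtain ⟨i, rfl⟩ := hx; exact ⟨[i], by simp [word]⟩
  | one => exact ⟨[], by simp [word]⟩
  | mul x y _ _ hx hy =>
    obtain ⟨l, rfl⟩ := hx
    obtain ⟨l', rfl⟩ := hy
    exact ⟨l ++ l', by simp [word]⟩

lemma word_cons (j) (l : List (Fin n)) : D.word (j :: l) = CL.refl A j * D.word l := by
  simp [word]

lemma exchange (l : List (Fin n)) (i : Fin n) (h : -(D.word l *ᵥ A i) ∈ D.Rp) :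
    ∃ l' : List (Fin n), l'.length < l.length ∧ D.word l * CL.refl A i = D.word l' := by
  induction l with
  | nil =>
    exfalso
    simp [word] at h
    exact D.not_both (D.simple_mem_Rp i) h
  | cons j l ih =>
    by_cases h1 : -(D.word l *ᵥ A i) ∈ D.Rp
    · obtain ⟨l', hl', h2⟩ := ih h1
      refine ⟨j :: l', by simpa using hl', ?_⟩
      rw [word_cons, word_cons, Matrix.mul_assoc, h2]
    · have h2 : D.word l *ᵥ A i ∈ D.Rp :=
        (D.pos_or_neg (D.W_mem (D.word_mem l) _ (D.simple_mem i))).resolve_right h1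
      rw [word_cons, ← Matrix.mulVec_mulVec, refl_mulVec] at h
      have h3 : D.word l *ᵥ A i = A j := by
        by_contra h3
        exact D.not_both (D.refl_pos h2 h3) h
      refine ⟨l, by simp, ?_⟩
      rw [word_cons, Matrix.mul_assoc, D.conj_refl (D.word_mem l) h3, ← Matrix.mul_assoc, D.refl_sq,
        Matrix.one_mul]

lemma eq_one_of_pos {w} (hw : w ∈ CL.weyl A) (h : ∀ i, w *ᵥ A i ∈ D.Rp) : w = 1 := by
  obtain ⟨l, hl⟩ := D.exists_word hw
  have hex : ∃ m, ∃ l : List (Fin n), l.length = m ∧ w = D.word l := ⟨_, l, rfl, hl⟩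
  obtain ⟨l, hl1, hl2⟩ := Nat.find_spec hex
  have hmin : ∀ l' : List (Fin n), w = D.word l' → l.length ≤ l'.length := by
    intro l' hl'
    rw [hl1]
    exact Nat.find_min' hex ⟨l', rfl, hl'⟩
  rcases List.eq_nil_or_concat l with rfl | ⟨l1, i, rfl⟩
  · simpa [word] using hl2
  · exfalso
    have hw1 : w = D.word l1 * CL.refl A i := by simp [hl2, word]
    have h1 : w *ᵥ A i = -(D.word l1 *ᵥ A i) := by
      rw [hw1, ← Matrix.mulVec_mulVec, refl_mulVec, D.diag i, ← Matrix.mulVec_neg]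
      congr 1; module
    have h2 := h i
    rw [h1] at h2
    obtain ⟨l', hl', h3⟩ := D.exchange l1 i h2
    have := hmin l' (hw1.trans h3)
    simp at this
    omega

lemma eq_one_of_dom {w} (hw : w ∈ CL.weyl A) {κ μ : Fin n → ℤ} (hκ : ∀ i, 0 < κ i) (hμ : ∀ i, 0 < μ i)
    (h : w *ᵥ κ = μ) : w = 1 := by
  refine D.eq_one_of_pos hw fun i => ?_
  have h1 : w *ᵥ A i ∈ D.R := D.W_mem hw _ (D.simple_mem i)
  refine (D.pos_or_neg h1).resolve_right fun h2 => ?_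
  obtain ⟨-, k, hk, hk2⟩ := D.mem_Rp.mp h2
  have h3 := D.B_q_nonneg (fun i => (hμ i).le) hk
  rw [← hk2, ← h, map_neg, D.B_W hw] at h3
  have h4 := D.simple κ i
  have h5 := D.bpos i
  have h6 : (0:ℝ) < κ i := by exact_mod_cast hκ i
  have : 0 < (κ i : ℝ) * D.B (A i) (A i) := by positivity
  linarith

/-- The alternant with complex coefficients. -/
def altC (ν : Fin n → ℤ) : AddMonoidAlgebra ℂ (Fin n → ℤ) :=
  ∑ w ∈ D.fin.toFinset, AddMonoidAlgebra.single (w *ᵥ ν) ((w.det : ℤ) : ℂ)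

omit D in
/-- Skew-symmetric elements. -/
def Skew (A : Fin n → Fin n → ℤ) (F : AddMonoidAlgebra ℂ (Fin n → ℤ)) : Prop :=
  ∀ i μ, F.coeff (μ - μ i • A i) = - F.coeff μ

lemma altC_coeff (ν μ : Fin n → ℤ) :
    (D.altC ν).coeff μ = ∑ w ∈ D.fin.toFinset, if w *ᵥ ν = μ then ((w.det : ℤ) : ℂ) else 0 := by
  simp [altC, AddMonoidAlgebra.coeff_sum, Finsupp.finsetSum_apply, Finsupp.single_apply]

lemma altC_skew (ν : Fin n → ℤ) : Skew A (D.altC ν) := by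
  intro i μ
  rw [altC_coeff, altC_coeff, ← Finset.sum_neg_distrib]
  have hm : ∀ w ∈ D.fin.toFinset, CL.refl A i * w ∈ D.fin.toFinset := by
    intro w hw
    rw [Set.Finite.mem_toFinset] at hw ⊢
    exact mul_mem (Submonoid.subset_closure ⟨i, rfl⟩) hw
  have hi : ∀ w, CL.refl A i * (CL.refl A i * w) = w := by
    intro w
    rw [← Matrix.mul_assoc, D.refl_sq, Matrix.one_mul]
  refine Finset.sum_nbij' (fun w => CL.refl A i * w) (fun w => CL.refl A i * w) hm hm
    (fun w _ => hi w) (fun w _ => hi w) ?_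
  intro w _
  have : (CL.refl A i * w) *ᵥ ν = μ ↔ w *ᵥ ν = μ - μ i • A i := by
    rw [← Matrix.mulVec_mulVec]
    constructor
    · rintro rfl
      rw [refl_mulVec, D.refl_refl]
    · intro h; rw [h, refl_mulVec, D.refl_refl]
  simp only [this, Matrix.det_mul, D.det_refl]
  split_ifs <;> simp

lemma skew_unique {F : AddMonoidAlgebra ℂ (Fin n → ℤ)} (hF : Skew A F)
    (h : ∀ μ : Fin n → ℤ, (∀ i, 0 < μ i) → F.coeff μ = 0) : F = 0 := by
  by_contra hne
  have hs : F.coeff.support.Nonempty := by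
    rw [Finsupp.support_nonempty_iff]
    intro h0
    exact hne (AddMonoidAlgebra.ext (by simpa using h0))
  obtain ⟨ν, hν, hmax⟩ := Finset.exists_max_image F.coeff.support (fun ν => D.B ν (fun _ => 1)) hs
  rw [Finsupp.mem_support_iff] at hν
  apply hν
  apply h
  intro i
  have h1 : F.coeff (ν - ν i • A i) ≠ 0 := by rw [hF]; simpa using hν
  have h2 := hmax _ (Finsupp.mem_support_iff.mpr h1)
  simp only [map_sub, AddMonoidHom.sub_apply, B_smul_left, B_smul_right] at h2
  have h3 := D.simple (fun _ => 1) i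
  rw [D.symm] at h3
  have h4 := D.bpos i
  have h5 : 0 < D.B (A i) (fun _ => 1) := by
    push_cast at h3
    linarith
  have h6 : (0:ℝ) ≤ ν i := by
    by_contra hlt
    push Not at hlt
    nlinarith
  have h7 : 0 ≤ ν i := by exact_mod_cast h6
  refine lt_of_le_of_ne h7 fun h8 => hν ?_
  have h9 := hF i ν
  rw [← h8, zero_smul, sub_zero] at h9
  exact self_eq_neg.mp h9

lemma altC_dom {κ μ : Fin n → ℤ} (hκ : ∀ i, 0 < κ i) (hμ : ∀ i, 0 < μ i) :
    (D.altC κ).coeff μ = if κ = μ then 1 else 0 := by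
  rw [altC_coeff, Finset.sum_eq_single 1]
  · simp
  · intro w hw hw1
    rw [Set.Finite.mem_toFinset] at hw
    rw [if_neg]
    exact fun h => hw1 (D.eq_one_of_dom hw hκ hμ h)
  · intro h
    exact absurd (D.fin.mem_toFinset.mpr (one_mem (CL.weyl A))) h

lemma eq_altC {F : AddMonoidAlgebra ℂ (Fin n → ℤ)} (hF : Skew A F) {κ : Fin n → ℤ} (hκ : ∀ i, 0 < κ i)
    (h1 : F.coeff κ = 1) (h : ∀ μ : Fin n → ℤ, (∀ i, 0 < μ i) → F.coeff μ ≠ 0 → μ = κ) :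
    F = D.altC κ := by
  have hs : Skew A (F - D.altC κ) := by
    intro i μ
    have h1 := hF i μ
    have h2 := D.altC_skew κ i μ
    simp only [AddMonoidAlgebra.coeff_sub, Finsupp.sub_apply] at *
    rw [h1, h2]; ring
  refine sub_eq_zero.mp (D.skew_unique hs fun μ hμ => ?_)
  rw [AddMonoidAlgebra.coeff_sub, Finsupp.sub_apply, D.altC_dom hκ hμ]
  split_ifs with h2
  · subst h2; rw [h1]; simp
  · rw [sub_zero]
    by_contra h3
    exact h2 (h μ hμ h3).symm

end RD
end WCF

namespace WCF
open Matrix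

/-- The inner derivation `a ↦ N a - a N`. -/
def adN {R : Type*} [Ring R] [Algebra ℂ R] (N : R) : Module.End ℂ R :=
  LinearMap.mulLeft ℂ N + LinearMap.mulRight ℂ (-N)

lemma adN_apply {R : Type*} [Ring R] [Algebra ℂ R] (N a : R) : adN N a = N * a - a * N := by
  simp [adN, sub_eq_add_neg]

lemma adN_nil {R : Type*} [Ring R] [Algebra ℂ R] {N : R} (hN : IsNilpotent N) :
    IsNilpotent (adN N) := by
  refine Commute.isNilpotent_add (LinearMap.commute_mulLeft_right _ _) ?_ ?_
  · exact (LinearMap.isNilpotent_mulLeft_iff ℂ N).mpr hN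
  · exact (LinearMap.isNilpotent_mulRight_iff ℂ (-N)).mpr hN.neg

lemma exp_facts_aux {R : Type*} [Ring R] [Algebra ℂ R] [Module ℚ R] [SMulCommClass ℂ ℚ R]
    {N : R} (hN : IsNilpotent N) (b : R) :
    IsNilpotent.exp N * b * IsNilpotent.exp (-N) = IsNilpotent.exp (adN N) • b := by
  rw [adN, IsNilpotent.exp_add_of_commute (LinearMap.commute_mulLeft_right _ _)
    ((LinearMap.isNilpotent_mulLeft_iff ℂ N).mpr hN)
    ((LinearMap.isNilpotent_mulRight_iff ℂ (-N)).mpr hN.neg)]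
  obtain ⟨k, hk⟩ := hN
  have h1 : (-N) ^ k = 0 := by rw [neg_pow, hk, mul_zero]
  rw [IsNilpotent.exp_eq_sum hk, IsNilpotent.exp_eq_sum h1,
    IsNilpotent.exp_eq_sum (a := LinearMap.mulLeft ℂ N) (k := k) (by
      rw [LinearMap.pow_mulLeft, hk, LinearMap.mulLeft_zero_eq_zero]),
    IsNilpotent.exp_eq_sum (a := LinearMap.mulRight ℂ (-N)) (k := k) (by
      rw [LinearMap.pow_mulRight, h1, LinearMap.mulRight_zero_eq_zero])]
  have e1 : ∀ (c : ℚ) (u v : R), (c • u) * v = c • (u * v) := fun c u v =>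
    map_rat_smul (AddMonoidHom.mulRight v) c u
  have e2 : ∀ (c : ℚ) (u v : R), u * (c • v) = c • (u * v) := fun c u v =>
    map_rat_smul (AddMonoidHom.mulLeft u) c v
  simp only [Module.End.smul_def, LinearMap.pow_mulLeft, LinearMap.pow_mulRight, Module.End.mul_apply,
    LinearMap.sum_apply, LinearMap.smul_apply, LinearMap.mulLeft_apply, LinearMap.mulRight_apply]
  simp only [Finset.sum_mul, Finset.mul_sum, e1, e2, mul_assoc, Finset.smul_sum]
  rw [Finset.sum_comm]
  refine Finset.sum_congr rfl fun i _ => Finset.sum_congr rfl fun j _ => ?_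
  rw [smul_comm]

lemma exists_exp {R : Type*} [Ring R] [Algebra ℂ R] {N : R} (hN : IsNilpotent N) :
    ∃ E E' : R, E * E' = 1 ∧ E' * E = 1 ∧
      (∀ b c d : R, b * N - N * b = c → c * N - N * c = d → d * N - N * d = 0 →
        b * E = E * (b + c + (1/2 : ℂ) • d)) ∧
      (∀ G : Submodule ℂ R, (∀ a ∈ G, N * a - a * N ∈ G) → ∀ a ∈ G, E * a * E' ∈ G ∧ E' * a * E ∈ G) := by
  let _ : Module ℚ R := Module.compHom R (algebraMap ℚ ℂ)
  have hq : ∀ (c : ℚ) (r : R), c • r = (c : ℂ) • r := fun c r => rfl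
  have _ : SMulCommClass ℂ ℚ R := ⟨fun a c r => by rw [hq, hq, smul_comm]⟩
  have hN' : IsNilpotent (-N) := hN.neg
  refine ⟨IsNilpotent.exp N, IsNilpotent.exp (-N), IsNilpotent.exp_mul_exp_neg_self hN,
    IsNilpotent.exp_neg_mul_exp_self hN, ?_, ?_⟩
  · intro b c d hc hd h0
    have h1 := exp_facts_aux hN' b
    rw [neg_neg] at h1
    have a1 : adN (-N) b = c := by rw [adN_apply, ← hc]; noncomm_ring
    have a2 : adN (-N) c = d := by rw [adN_apply, ← hd]; noncomm_ring
    have a3 : adN (-N) d = 0 := by rw [adN_apply, ← h0]; noncomm_ring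
    rw [IsNilpotent.exp_smul_eq_sum (k := 3) (by
      simp [pow_succ, Module.End.smul_def, a1, a2, a3]) (adN_nil hN')] at h1
    simp [Finset.sum_range_succ, pow_succ, Module.End.smul_def, a1, a2] at h1
    have h2 : IsNilpotent.exp N * (IsNilpotent.exp (-N) * b * IsNilpotent.exp N) =
        b * IsNilpotent.exp N := by
      rw [← mul_assoc, ← mul_assoc, IsNilpotent.exp_mul_exp_neg_self hN, one_mul]
    rw [← h2, h1, hq]
    norm_num
  · intro G hG a ha
    have key : ∀ M : R, IsNilpotent M → (∀ a ∈ G, M * a - a * M ∈ G) →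
        IsNilpotent.exp M * a * IsNilpotent.exp (-M) ∈ G := by
      intro M hM hMG
      rw [exp_facts_aux hM]
      obtain ⟨k, hk⟩ := adN_nil hM
      rw [IsNilpotent.exp_smul_eq_sum (k := k) (by rw [hk, zero_smul]) ⟨k, hk⟩]
      refine Submodule.sum_mem _ fun i hi => ?_
      rw [hq]
      clear hi
      refine Submodule.smul_mem _ _ ?_
      induction i with
      | zero => simpa using ha
      | succ i ih =>
        rw [pow_succ', mul_smul, Module.End.smul_def, adN_apply]
        exact hMG _ ih
    refine ⟨key N hN hG, ?_⟩
    have := key (-N) hN' (fun a ha => by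
      have := G.neg_mem (hG a ha)
      convert this using 1
      noncomm_ring)
    rwa [neg_neg] at this

end WCF

namespace WCF
open Matrix

/-- A finite dimensional module with a basis of weight vectors. -/
structure WM {n : ℕ} (A : Fin n → Fin n → ℤ) (ι V : Type*) [AddCommGroup V] [Module ℂ V] where
  x : Fin n → Module.End ℂ V
  y : Fin n → Module.End ℂ V
  h : Fin n → Module.End ℂ V
  xy : ∀ i j, x i * y j - y j * x i = if i = j then h i else 0
  hx : ∀ i j, h i * x j - x j * h i = (A j i : ℂ) • x j
  hy : ∀ i j, h i * y j - y j * h i = -((A j i : ℂ) • y j)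
  b : Module.Basis ι ℂ V
  wt : ι → (Fin n → ℤ)
  hb : ∀ i k, h i (b k) = (wt k i : ℂ) • b k

namespace WM

variable {n : ℕ} {A : Fin n → Fin n → ℤ} {ι V : Type*} [AddCommGroup V] [Module ℂ V]
  (M : WM A ι V)

/-- Diagonal operators. -/
def dg (φ : (Fin n → ℤ) → ℂ) : Module.End ℂ V := M.b.constr ℂ (fun k => φ (M.wt k) • M.b k)

lemma dg_b (φ k) : M.dg φ (M.b k) = φ (M.wt k) • M.b k := by simp [dg]

lemma h_eq (i) : M.h i = M.dg (fun μ => (μ i : ℂ)) := by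
  refine M.b.ext fun k => ?_
  rw [M.hb, M.dg_b]

lemma dg_mul (φ ψ) : M.dg φ * M.dg ψ = M.dg (fun μ => φ μ * ψ μ) := by
  refine M.b.ext fun k => ?_
  simp [M.dg_b, mul_comm, smul_smul]

lemma dg_add (φ ψ) : M.dg φ + M.dg ψ = M.dg (fun μ => φ μ + ψ μ) := by
  refine M.b.ext fun k => ?_
  simp [M.dg_b, add_smul]

lemma dg_sub (φ ψ) : M.dg φ - M.dg ψ = M.dg (fun μ => φ μ - ψ μ) := by
  refine M.b.ext fun k => ?_
  simp [M.dg_b, sub_smul]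

lemma dg_smul (c : ℂ) (φ) : c • M.dg φ = M.dg (fun μ => c * φ μ) := by
  refine M.b.ext fun k => ?_
  simp [M.dg_b, smul_smul]

lemma dg_const (c : ℂ) : M.dg (fun _ => c) = c • 1 := by
  refine M.b.ext fun k => ?_
  simp [M.dg_b]

lemma dg_repr (φ v k) : M.b.repr (M.dg φ v) k = φ (M.wt k) * M.b.repr v k := by
  have : (Finsupp.lapply k ∘ₗ M.b.repr.toLinearMap) ∘ₗ M.dg φ =
      φ (M.wt k) • (Finsupp.lapply k ∘ₗ M.b.repr.toLinearMap) := by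
    refine M.b.ext fun l => ?_
    simp only [LinearMap.comp_apply, M.dg_b, LinearMap.smul_apply, map_smul]
    simp only [LinearEquiv.coe_coe, Module.Basis.repr_self, Finsupp.lapply_apply, Finsupp.single_apply]
    split_ifs with h
    · rw [h]
    · simp
  exact LinearMap.congr_fun this v

/-- Weight vectors. -/
def IsWt (v : V) (μ : Fin n → ℤ) : Prop := ∀ φ, M.dg φ v = φ μ • v

lemma isWt_b (k) : M.IsWt (M.b k) (M.wt k) := fun φ => M.dg_b φ k

lemma isWt_of_h {v : V} {μ : Fin n → ℤ} (h : ∀ i, M.h i v = (μ i : ℂ) • v) : M.IsWt v μ := by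
  intro φ
  apply M.b.repr.injective
  ext k
  rw [dg_repr, map_smul, Finsupp.smul_apply, smul_eq_mul]
  by_cases h0 : M.b.repr v k = 0
  · simp [h0]
  · congr 2
    ext i
    have h1 := congrArg (fun u => M.b.repr u k) (h i)
    simp only [h_eq, dg_repr, map_smul, Finsupp.smul_apply, smul_eq_mul] at h1
    have := mul_right_cancel₀ h0 h1
    exact_mod_cast this

lemma IsWt.uniq {M : WM A ι V} {v : V} {μ ν} (h : M.IsWt v μ) (h' : M.IsWt v ν) (hv : v ≠ 0) : μ = ν := by
  by_contra hne
  have h1 := h (fun κ => if κ = μ then 1 else 0)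
  rw [h'] at h1
  simp [Ne.symm hne] at h1
  exact hv h1.symm

lemma IsWt.exists_wt {M : WM A ι V} {v : V} {μ} (h : M.IsWt v μ) (hv : v ≠ 0) : ∃ k, M.wt k = μ := by
  by_contra hcon
  push Not at hcon
  have h1 := h (fun κ => if κ = μ then 1 else 0)
  have h2 : M.dg (fun κ => if κ = μ then 1 else 0) = 0 := by
    refine M.b.ext fun k => ?_
    simp [M.dg_b, hcon k]
  rw [h2] at h1
  simp at h1
  exact hv h1.symm

/-- Homogeneous operators. -/
def HasWt (a : Module.End ℂ V) (β : Fin n → ℤ) : Prop :=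
  ∀ φ, M.dg φ * a = a * M.dg (fun μ => φ (μ + β))

lemma hasWt_of_b {a : Module.End ℂ V} {β} (h : ∀ k, M.IsWt (a (M.b k)) (M.wt k + β)) : M.HasWt a β := by
  intro φ
  refine M.b.ext fun k => ?_
  rw [Module.End.mul_apply, Module.End.mul_apply, h k, M.dg_b, map_smul]

variable {M}

lemma HasWt.isWt {a : Module.End ℂ V} {β μ} {v : V} (h : M.HasWt a β) (hv : M.IsWt v μ) :
    M.IsWt (a v) (μ + β) := by
  intro φ
  have := LinearMap.congr_fun (h φ) v
  simp only [Module.End.mul_apply] at this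
  rw [this, hv, map_smul]

lemma hasWt_of_h {a : Module.End ℂ V} {β : Fin n → ℤ}
    (h : ∀ i, M.h i * a - a * M.h i = (β i : ℂ) • a) : M.HasWt a β := by
  refine M.hasWt_of_b fun k => M.isWt_of_h fun i => ?_
  have := LinearMap.congr_fun (h i) (M.b k)
  simp only [LinearMap.sub_apply, Module.End.mul_apply, LinearMap.smul_apply, M.hb, map_smul] at this
  rw [sub_eq_iff_eq_add] at this
  rw [this, ← add_smul]
  congr 1
  push_cast [Pi.add_apply]
  ring

lemma hasWt_x (i) : M.HasWt (M.x i) (A i) := hasWt_of_h fun j => M.hx j i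

lemma hasWt_y (i) : M.HasWt (M.y i) (-A i) := hasWt_of_h fun j => by
  rw [M.hy j i]; simp

lemma hasWt_dg (φ) : M.HasWt (M.dg φ) 0 := by
  intro ψ
  simp only [dg_mul, add_zero]
  congr 1; ext; ring

lemma hasWt_h (i) : M.HasWt (M.h i) 0 := by rw [h_eq]; exact hasWt_dg _

lemma HasWt.add {a b : Module.End ℂ V} {β} (ha : M.HasWt a β) (hb : M.HasWt b β) : M.HasWt (a + b) β := by
  intro φ; rw [mul_add, ha, hb, add_mul]

lemma HasWt.sub {a b : Module.End ℂ V} {β} (ha : M.HasWt a β) (hb : M.HasWt b β) : M.HasWt (a - b) β := by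
  intro φ; rw [mul_sub, ha, hb, sub_mul]

lemma HasWt.smul {a : Module.End ℂ V} {β} (c : ℂ) (ha : M.HasWt a β) : M.HasWt (c • a) β := by
  intro φ; rw [mul_smul_comm, ha, smul_mul_assoc]

lemma HasWt.mul {a b : Module.End ℂ V} {α β} (ha : M.HasWt a α) (hb : M.HasWt b β) :
    M.HasWt (a * b) (α + β) := by
  intro φ
  rw [← mul_assoc, ha, mul_assoc, hb, mul_assoc]
  congr 3; ext μ; congr 1; abel

lemma HasWt.brk {a b : Module.End ℂ V} {α β} (ha : M.HasWt a α) (hb : M.HasWt b β) :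
    M.HasWt (a * b - b * a) (α + β) :=
  (ha.mul hb).sub (by rw [add_comm]; exact hb.mul ha)

lemma HasWt.pow {a : Module.End ℂ V} {α} (ha : M.HasWt a α) (m : ℕ) : M.HasWt (a ^ m) (m • α) := by
  induction m with
  | zero => rw [zero_smul, pow_zero]; intro φ; simp
  | succ m ih => rw [pow_succ, succ_nsmul]; exact ih.mul ha

lemma HasWt.uniq {a : Module.End ℂ V} {α β} (ha : M.HasWt a α) (hb : M.HasWt a β) (h0 : a ≠ 0) : α = β := by
  have : ∃ k, a (M.b k) ≠ 0 := by
    by_contra hcon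
    push Not at hcon
    exact h0 (M.b.ext fun k => by simp [hcon k])
  obtain ⟨k, hk⟩ := this
  have := (ha.isWt (M.isWt_b k)).uniq (hb.isWt (M.isWt_b k)) hk
  simpa using this

lemma HasWt.nil [Finite ι] {a : Module.End ℂ V} {β} (ha : M.HasWt a β) (hβ : β ≠ 0) : IsNilpotent a := by
  obtain ⟨i, hi⟩ := Function.ne_iff.mp hβ
  have : ∃ C : ℕ, ∀ k, (M.wt k i).natAbs ≤ C := by
    have := Fintype.ofFinite ι
    exact ⟨∑ k, (M.wt k i).natAbs, fun k => Finset.single_le_sum (f := fun k => (M.wt k i).natAbs)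
      (fun _ _ => Nat.zero_le _) (Finset.mem_univ k)⟩
  obtain ⟨C, hC⟩ := this
  refine ⟨2 * C + 1, M.b.ext fun k => ?_⟩
  rw [LinearMap.zero_apply]
  by_contra hne
  obtain ⟨l, hl⟩ := ((ha.pow (2 * C + 1)).isWt (M.isWt_b k)).exists_wt hne
  have h1 := congrFun hl i
  have h2 := hC k
  have h3 := hC l
  rw [Pi.add_apply, Pi.smul_apply, nsmul_eq_mul] at h1
  rw [Pi.zero_apply] at hi
  push_cast at h1
  have h4 : ((2 * C + 1 : ℕ) : ℤ) ≤ |(2 * (C:ℤ) + 1) * β i| := by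
    rw [abs_mul]
    have : 1 ≤ |β i| := Int.one_le_abs hi
    have h5 : |2 * (C:ℤ) + 1| = 2 * C + 1 := abs_of_nonneg (by positivity)
    rw [h5]; push_cast; nlinarith
  have h6 : (2 * (C:ℤ) + 1) * β i = M.wt l i - M.wt k i := by linarith
  rw [h6] at h4
  rcases abs_cases (M.wt l i - M.wt k i) with ⟨h, _⟩ | ⟨h, _⟩ <;> omega

/-- Homogeneous component of an operator. -/
def pr (M : WM A ι V) (β : Fin n → ℤ) (a : Module.End ℂ V) : Module.End ℂ V :=
  M.b.constr ℂ (fun k => M.dg (fun μ => if μ = M.wt k + β then 1 else 0) (a (M.b k)))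

lemma pr_b (β a k) : M.pr β a (M.b k) = M.dg (fun μ => if μ = M.wt k + β then 1 else 0) (a (M.b k)) := by
  simp [pr]

lemma span_wt {S : Set (Module.End ℂ V)} (hS : ∀ s ∈ S, ∃ β, M.HasWt s β) {a : Module.End ℂ V} {β}
    (ha : a ∈ Submodule.span ℂ S) (hβ : M.HasWt a β) :
    a ∈ Submodule.span ℂ {s ∈ S | M.HasWt s β} := by
  have h1 : M.pr β a = a := by
    refine M.b.ext fun k => ?_
    rw [pr_b, hβ.isWt (M.isWt_b k)]
    simp
  rw [← h1]
  clear h1 hβ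
  induction ha using Submodule.span_induction with
  | mem s hs =>
    by_cases h : M.HasWt s β
    · have h1 : M.pr β s = s := by
        refine M.b.ext fun k => ?_
        rw [pr_b, h.isWt (M.isWt_b k)]
        simp
      rw [h1]
      exact Submodule.subset_span ⟨hs, h⟩
    · obtain ⟨γ, hγ⟩ := hS s hs
      have h1 : M.pr β s = 0 := by
        refine M.b.ext fun k => ?_
        rw [pr_b, hγ.isWt (M.isWt_b k), if_neg]
        · simp
        · intro h2
          have : γ = β := by simpa using h2
          exact h (this ▸ hγ)
      rw [h1]; exact Submodule.zero_mem _
  | zero =>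
    have : M.pr β 0 = 0 := M.b.ext fun k => by simp [pr_b]
    rw [this]; exact Submodule.zero_mem _
  | add a b _ _ iha ihb =>
    have : M.pr β (a + b) = M.pr β a + M.pr β b := M.b.ext fun k => by simp [pr_b]
    rw [this]; exact Submodule.add_mem _ iha ihb
  | smul c a _ iha =>
    have : M.pr β (c • a) = c • M.pr β a := M.b.ext fun k => by simp [pr_b]
    rw [this]; exact Submodule.smul_mem _ _ iha

variable (M)

lemma exists_T (D : RD A) [Finite ι] (i : Fin n) : ∃ T T' : Module.End ℂ V, T * T' = 1 ∧ T' * T = 1 ∧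
    (∀ φ, M.dg φ * T = T * M.dg (fun μ => φ (μ - μ i • A i))) ∧
    (∀ G : Submodule ℂ (Module.End ℂ V), (∀ a ∈ G, M.x i * a - a * M.x i ∈ G) →
      (∀ a ∈ G, M.y i * a - a * M.y i ∈ G) → ∀ a ∈ G, T * a * T' ∈ G ∧ T' * a * T ∈ G) := by
  have nx : IsNilpotent (M.x i) := (hasWt_x i).nil (D.A_ne i)
  have ny : IsNilpotent (-M.y i) := ((hasWt_y (M := M) i).nil (neg_ne_zero.mpr (D.A_ne i))).neg
  obtain ⟨E, E', hE1, hE2, hE3, hE4⟩ := exists_exp nx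
  obtain ⟨F, F', hF1, hF2, hF3, hF4⟩ := exists_exp ny
  have hxi : ∀ j, M.h j * E = E * (M.h j + (A i j : ℂ) • M.x i) := by
    intro j
    have := hE3 (M.h j) ((A i j : ℂ) • M.x i) 0 (M.hx j i) (by simp) (by simp)
    simpa using this
  have hyi : ∀ j, M.h j * F = F * (M.h j + (A i j : ℂ) • M.y i) := by
    intro j
    have := hF3 (M.h j) ((A i j : ℂ) • M.y i) 0 (by
      have := M.hy j i
      rw [mul_neg, neg_mul, sub_neg_eq_add, neg_add_eq_sub, ← neg_sub, this, neg_neg]) (by simp) (by simp)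
    simpa using this
  have hxF : M.x i * F = F * (M.x i - M.h i - M.y i) := by
    have h1 := M.xy i i
    rw [if_pos rfl] at h1
    have h2 := M.hy i i
    rw [D.diag i] at h2
    have := hF3 (M.x i) (-M.h i) (-((2:ℂ) • M.y i)) (by
      rw [← h1]; noncomm_ring) (by rw [neg_mul_neg, neg_mul, mul_neg, neg_neg, h2]; push_cast; rfl) (by simp)
    rw [this]
    congr 1
    rw [smul_neg, smul_smul]
    norm_num
    abel
  have key : ∀ j, M.h j * (E * F * E) = (E * F * E) * (M.h j - (A i j : ℂ) • M.h i) := by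
    intro j
    have h1 : M.h j * (E * F * E) = E * (M.h j + (A i j : ℂ) • M.x i) * F * E := by
      rw [← hxi j]; noncomm_ring
    have h2 : (M.h j + (A i j : ℂ) • M.x i) * F = F * (M.h j + (A i j : ℂ) • M.x i - (A i j : ℂ) • M.h i) := by
      rw [add_mul, smul_mul_assoc, hyi, hxF, ← mul_smul_comm, ← mul_add]
      congr 1
      module
    have hxE : M.x i * E = E * M.x i := by
      have := hE3 (M.x i) 0 0 (by simp) (by simp) (by simp)
      simpa using this
    have h3 : (M.h j + (A i j : ℂ) • M.x i - (A i j : ℂ) • M.h i) * E = E * (M.h j - (A i j : ℂ) • M.h i) := by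
      rw [sub_mul, add_mul, smul_mul_assoc, smul_mul_assoc, hxi, hxi, hxE, D.diag i, ← mul_smul_comm,
        ← mul_smul_comm, ← mul_add, ← mul_sub]
      congr 1
      push_cast
      module
    calc M.h j * (E * F * E) = E * ((M.h j + (A i j : ℂ) • M.x i) * F) * E := by rw [h1]; noncomm_ring
      _ = E * F * ((M.h j + (A i j : ℂ) • M.x i - (A i j : ℂ) • M.h i) * E) := by rw [h2]; simp only [mul_assoc]
      _ = _ := by rw [h3]; simp only [mul_assoc]
  refine ⟨E * F * E, E' * F' * E', ?_, ?_, ?_, ?_⟩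
  · calc E * F * E * (E' * F' * E') = E * (F * (E * E') * F') * E' := by simp only [mul_assoc]
      _ = 1 := by rw [hE1, mul_one, hF1, mul_one, hE1]
  · calc E' * F' * E' * (E * F * E) = E' * (F' * (E' * E) * F) * E := by simp only [mul_assoc]
      _ = 1 := by rw [hE2, mul_one, hF2, mul_one, hE2]
  · intro φ
    generalize E * F * E = T at key ⊢
    refine M.b.ext fun k => ?_
    have : M.IsWt (T (M.b k)) (M.wt k - M.wt k i • A i) := by
      refine M.isWt_of_h fun j => ?_
      have := LinearMap.congr_fun (key j) (M.b k)
      rw [Module.End.mul_apply, Module.End.mul_apply] at this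
      rw [this]
      simp only [LinearMap.sub_apply, LinearMap.smul_apply, M.hb, map_sub, map_smul, smul_smul, ← sub_smul]
      congr 1
      simp [mul_comm]
    rw [Module.End.mul_apply, Module.End.mul_apply, this, M.dg_b, map_smul]
  · intro G hx hy a ha
    have hy' : ∀ a ∈ G, -M.y i * a - a * -M.y i ∈ G := by
      intro a ha
      have := G.neg_mem (hy a ha)
      convert this using 1
      noncomm_ring
    have h1 : ∀ a, E * F * E * a * (E' * F' * E') = E * (F * (E * a * E') * F') * E' := by
      intro a; simp only [mul_assoc]
    have h2 : ∀ a, E' * F' * E' * a * (E * F * E) = E' * (F' * (E' * a * E) * F) * E := by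
      intro a; simp only [mul_assoc]
    rw [h1, h2]
    exact ⟨(hE4 G hx _ (hF4 G hy' _ (hE4 G hx a ha).1).1).1,
      (hE4 G hx _ (hF4 G hy' _ (hE4 G hx a ha).2).2).2⟩

lemma exists_Th (D : RD A) [Finite ι] {w} (hw : w ∈ CL.weyl A) :
    ∃ T T' : Module.End ℂ V, T * T' = 1 ∧ T' * T = 1 ∧
    (∀ φ, M.dg φ * T = T * M.dg (fun μ => φ (w *ᵥ μ))) ∧
    (∀ G : Submodule ℂ (Module.End ℂ V), (∀ i, ∀ a ∈ G, M.x i * a - a * M.x i ∈ G) →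
      (∀ i, ∀ a ∈ G, M.y i * a - a * M.y i ∈ G) → ∀ a ∈ G, T * a * T' ∈ G ∧ T' * a * T ∈ G) := by
  induction hw using Submonoid.closure_induction with
  | mem x hx =>
    obtain ⟨i, rfl⟩ := hx
    obtain ⟨T, T', h1, h2, h3, h4⟩ := M.exists_T D i
    refine ⟨T, T', h1, h2, ?_, fun G hx hy => h4 G (hx i) (hy i)⟩
    intro φ; rw [h3]; simp only [refl_mulVec]
  | one => exact ⟨1, 1, by simp, by simp, by simp, fun G _ _ a ha => by simpa using ha⟩
  | mul w w' _ _ hx hy =>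
    obtain ⟨T, T', h1, h2, h3, h4⟩ := hx
    obtain ⟨S, S', g1, g2, g3, g4⟩ := hy
    refine ⟨T * S, S' * T', ?_, ?_, ?_, ?_⟩
    · calc T * S * (S' * T') = T * (S * S') * T' := by simp only [mul_assoc]
        _ = 1 := by rw [g1, mul_one, h1]
    · calc S' * T' * (T * S) = S' * (T' * T) * S := by simp only [mul_assoc]
        _ = 1 := by rw [h2, mul_one, g2]
    · intro φ
      rw [← mul_assoc, h3, mul_assoc, g3, mul_assoc]
      simp only [Matrix.mulVec_mulVec]
    · intro G hx hy a ha
      have e1 : T * S * a * (S' * T') = T * (S * a * S') * T' := by simp only [mul_assoc]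
      have e2 : S' * T' * a * (T * S) = S' * (T' * a * T) * S := by simp only [mul_assoc]
      rw [e1, e2]
      exact ⟨(h4 G hx hy _ (g4 G hx hy a ha).1).1, (g4 G hx hy _ (h4 G hx hy a ha).2).2⟩

end WM
end WCF

namespace WCF
open Matrix

/-- Iterated brackets of a family. -/
inductive BM {n : ℕ} {R : Type*} [Ring R] (z : Fin n → R) : (Fin n → ℤ) → R → Prop
  | base (i : Fin n) : BM z (Pi.single i 1) (z i)
  | step (i : Fin n) (k : Fin n → ℤ) (a : R) : BM z k a → BM z (k + Pi.single i 1) (z i * a - a * z i)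

section BM
variable {n : ℕ} {R : Type*} [Ring R] [Algebra ℂ R] {z z' h : Fin n → R}

lemma single_nonneg (i j : Fin n) : 0 ≤ (Pi.single i 1 : Fin n → ℤ) j := by
  by_cases hj : j = i
  · subst hj; simp
  · simp [Pi.single_eq_of_ne hj]

omit [Algebra ℂ R] in
lemma BM.pos {k a} (hb : BM z k a) : (∀ j, 0 ≤ k j) ∧ ∃ j, 0 < k j := by
  induction hb with
  | base i => exact ⟨single_nonneg i, i, by simp⟩
  | step i k a _ ih =>
    obtain ⟨h1, j, hj⟩ := ih
    refine ⟨fun l => add_nonneg (h1 l) (single_nonneg i l), j, ?_⟩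
    have := single_nonneg i j
    simp only [Pi.add_apply]
    omega

omit [Algebra ℂ R] in
lemma BM.single {k a} (hb : BM z k a) : ∀ i (m : ℤ), k = Pi.single i m → (m = 1 ∧ a = z i) ∨ a = 0 := by
  induction hb with
  | base j =>
    intro i m h
    left
    have h1 := congrFun h j
    by_cases hj : j = i
    · subst hj; simp at h1; exact ⟨h1.symm, rfl⟩
    · simp [Pi.single_eq_of_ne hj] at h1
  | step j k a hk ih =>
    intro i m h
    right
    have h1 := congrFun h j
    have h2 := hk.pos.1 j
    by_cases hj : j = i
    · subst hj
      have h3 : k = Pi.single j (m - 1) := by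
        rw [Pi.single_sub, ← h]; simp
      rcases ih j _ h3 with h4 | h4
      · rw [h4.2, sub_self]
      · rw [h4]; simp
    · simp [Pi.single_eq_of_ne hj] at h1
      omega

/-- Half of the triangular decomposition. -/
def NH (z h : Fin n → R) : Submodule ℂ R := Submodule.span ℂ ({a | ∃ k, BM z k a} ∪ Set.range h)

lemma NH_z (H2 : ∀ i k a, BM z k a → ∃ c : ℂ, h i * a - a * h i = c • a) (j : Fin n) :
    ∀ a ∈ NH z h, z j * a - a * z j ∈ NH z h := by
  intro a ha
  induction ha using Submodule.span_induction with
  | mem a ha =>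
    rcases ha with ⟨k, hk⟩ | ⟨i, rfl⟩
    · exact Submodule.subset_span (Or.inl ⟨_, hk.step j⟩)
    · obtain ⟨c, hc⟩ := H2 i _ _ (BM.base (z := z) j)
      rw [← neg_sub, hc]
      exact Submodule.neg_mem _ (Submodule.smul_mem _ _ (Submodule.subset_span (Or.inl ⟨_, BM.base j⟩)))
  | zero => simp
  | add a b _ _ ha hb =>
    have : z j * (a + b) - (a + b) * z j = (z j * a - a * z j) + (z j * b - b * z j) := by noncomm_ring
    rw [this]; exact Submodule.add_mem _ ha hb
  | smul c a _ ha =>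
    have : z j * (c • a) - (c • a) * z j = c • (z j * a - a * z j) := by
      rw [mul_smul_comm, smul_mul_assoc, smul_sub]
    rw [this]; exact Submodule.smul_mem _ _ ha

lemma NH_z' (H1 : ∀ i j, z' i * z j - z j * z' i ∈ Submodule.span ℂ (Set.range h))
    (H2 : ∀ i k a, BM z k a → ∃ c : ℂ, h i * a - a * h i = c • a) (i : Fin n) {k a} (hb : BM z k a) :
    z' i * a - a * z' i ∈ NH z h := by
  induction hb with
  | base j => exact Submodule.span_mono Set.subset_union_right (H1 i j)
  | step j k a hk ih =>
    have : z' i * (z j * a - a * z j) - (z j * a - a * z j) * z' i =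
      ((z' i * z j - z j * z' i) * a - a * (z' i * z j - z j * z' i)) +
      (z j * (z' i * a - a * z' i) - (z' i * a - a * z' i) * z j) := by noncomm_ring
    rw [this]
    refine Submodule.add_mem _ ?_ (NH_z H2 j _ ih)
    have h1 : ∀ b ∈ Submodule.span ℂ (Set.range h), b * a - a * b ∈ NH z h := by
      intro b hb
      induction hb using Submodule.span_induction with
      | mem b hb =>
        obtain ⟨l, rfl⟩ := hb
        obtain ⟨c, hc⟩ := H2 l _ _ hk
        rw [hc]
        exact Submodule.smul_mem _ _ (Submodule.subset_span (Or.inl ⟨_, hk⟩))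
      | zero => simp
      | add b c _ _ hb hc =>
        have : (b + c) * a - a * (b + c) = (b * a - a * b) + (c * a - a * c) := by noncomm_ring
        rw [this]; exact Submodule.add_mem _ hb hc
      | smul c b _ hb =>
        have : (c • b) * a - a * (c • b) = c • (b * a - a * b) := by
          rw [mul_smul_comm, smul_mul_assoc, smul_sub]
        rw [this]; exact Submodule.smul_mem _ _ hb
    exact h1 _ (H1 i j)

end BM

namespace WM

variable {n : ℕ} {A : Fin n → Fin n → ℤ} {ι V : Type*} [AddCommGroup V] [Module ℂ V]
  (M : WM A ι V)

/-- Homogeneous spanning set of the Lie algebra image. -/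
def GS : Set (Module.End ℂ V) := ({a | ∃ k, BM M.x k a} ∪ Set.range M.h) ∪ {a | ∃ k, BM M.y k a}

/-- The image of the Lie algebra in `End V`. -/
def G : Submodule ℂ (Module.End ℂ V) := Submodule.span ℂ M.GS

variable {M}

lemma BM_x_wt {k a} (hb : BM M.x k a) : M.HasWt a (q A k) := by
  induction hb with
  | base i => rw [q_single, one_smul]; exact hasWt_x i
  | step i k a _ ih => rw [q_add, q_single, one_smul, add_comm]; exact (hasWt_x i).brk ih

lemma BM_y_wt {k a} (hb : BM M.y k a) : M.HasWt a (q A (-k)) := by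
  induction hb with
  | base i => rw [q_neg, q_single, one_smul]; exact hasWt_y i
  | step i k a _ ih =>
    rw [neg_add, q_add, q_neg (Pi.single i 1), q_single, one_smul, add_comm]; exact (hasWt_y i).brk ih

lemma HasWt.h_brk {a β} (ha : M.HasWt a β) (i : Fin n) : M.h i * a - a * M.h i = (β i : ℂ) • a := by
  rw [h_eq, ha, ← mul_sub, dg_sub]
  have : (fun μ : Fin n → ℤ => (((μ + β) i : ℤ) : ℂ) - ((μ i : ℤ) : ℂ)) = fun _ => (β i : ℂ) := by
    ext μ; push_cast [Pi.add_apply]; ring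
  rw [this, dg_const, mul_smul_comm, mul_one]

lemma GS_wt {a} (ha : a ∈ M.GS) : ∃ β, M.HasWt a β := by
  rcases ha with (⟨k, hk⟩ | ⟨i, rfl⟩) | ⟨k, hk⟩
  · exact ⟨_, BM_x_wt hk⟩
  · exact ⟨_, hasWt_h i⟩
  · exact ⟨_, BM_y_wt hk⟩

lemma x_mem (i) : M.x i ∈ M.G := Submodule.subset_span (Or.inl (Or.inl ⟨_, BM.base i⟩))
lemma y_mem (i) : M.y i ∈ M.G := Submodule.subset_span (Or.inr ⟨_, BM.base i⟩)
lemma h_mem (i) : M.h i ∈ M.G := Submodule.subset_span (Or.inl (Or.inr ⟨i, rfl⟩))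

lemma stable_of_GS {c : Module.End ℂ V} (hc : ∀ a ∈ M.GS, c * a - a * c ∈ M.G) :
    ∀ a ∈ M.G, c * a - a * c ∈ M.G := by
  intro a ha
  induction ha using Submodule.span_induction with
  | mem a ha => exact hc a ha
  | zero => simp
  | add a b _ _ ha hb =>
    have : c * (a + b) - (a + b) * c = (c * a - a * c) + (c * b - b * c) := by noncomm_ring
    rw [this]; exact Submodule.add_mem _ ha hb
  | smul r a _ ha =>
    have : c * (r • a) - (r • a) * c = r • (c * a - a * c) := by
      rw [mul_smul_comm, smul_mul_assoc, smul_sub]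
    rw [this]; exact Submodule.smul_mem _ _ ha

lemma G_h (i) : ∀ a ∈ M.G, M.h i * a - a * M.h i ∈ M.G := by
  refine stable_of_GS fun a ha => ?_
  obtain ⟨β, hβ⟩ := GS_wt ha
  rw [hβ.h_brk]
  exact Submodule.smul_mem _ _ (Submodule.subset_span ha)

lemma G_x (i) : ∀ a ∈ M.G, M.x i * a - a * M.x i ∈ M.G := by
  refine stable_of_GS fun a ha => ?_
  rcases ha with (⟨k, hk⟩ | ⟨j, rfl⟩) | ⟨k, hk⟩
  · exact Submodule.subset_span (Or.inl (Or.inl ⟨_, hk.step i⟩))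
  · rw [← neg_sub, M.hx]
    exact Submodule.neg_mem _ (Submodule.smul_mem _ _ (x_mem i))
  · have h1 := NH_z' (z := M.y) (z' := M.x) (h := M.h) (fun i j => by
      rw [M.xy]; split_ifs
      · exact Submodule.subset_span ⟨i, rfl⟩
      · exact Submodule.zero_mem _) (fun i k a hk => ⟨_, (BM_y_wt hk).h_brk i⟩) i hk
    refine Submodule.span_mono ?_ h1
    rintro a (ha | ha)
    · exact Or.inr ha
    · exact Or.inl (Or.inr ha)

lemma G_y (i) : ∀ a ∈ M.G, M.y i * a - a * M.y i ∈ M.G := by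
  refine stable_of_GS fun a ha => ?_
  rcases ha with (⟨k, hk⟩ | ⟨j, rfl⟩) | ⟨k, hk⟩
  · have h1 := NH_z' (z := M.x) (z' := M.y) (h := M.h) (fun i j => by
      rw [← neg_sub, M.xy]; split_ifs
      · exact Submodule.neg_mem _ (Submodule.subset_span ⟨j, rfl⟩)
      · simp) (fun i k a hk => ⟨_, (BM_x_wt hk).h_brk i⟩) i hk
    refine Submodule.span_mono ?_ h1
    rintro a (ha | ha)
    · exact Or.inl (Or.inl ha)
    · exact Or.inl (Or.inr ha)
  · rw [← neg_sub, M.hy]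
    exact Submodule.neg_mem _ (Submodule.neg_mem _ (Submodule.smul_mem _ _ (y_mem i)))
  · exact Submodule.subset_span (Or.inr ⟨_, hk.step i⟩)

lemma G_BM {z : Fin n → Module.End ℂ V} (hz : ∀ i, ∀ a ∈ M.G, z i * a - a * z i ∈ M.G) {k c}
    (hb : BM z k c) : ∀ a ∈ M.G, c * a - a * c ∈ M.G := by
  induction hb with
  | base i => exact hz i
  | step i k c _ ih =>
    intro a ha
    have : (z i * c - c * z i) * a - a * (z i * c - c * z i) =
      (z i * (c * a - a * c) - (c * a - a * c) * z i) - (c * (z i * a - a * z i) - (z i * a - a * z i) * c) := by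
      noncomm_ring
    rw [this]
    exact Submodule.sub_mem _ (hz i _ (ih a ha)) (ih _ (hz i a ha))

lemma G_lie {c a : Module.End ℂ V} (hc : c ∈ M.G) (ha : a ∈ M.G) : c * a - a * c ∈ M.G := by
  rw [← neg_sub]
  refine Submodule.neg_mem _ (stable_of_GS (fun c hc => ?_) c hc)
  rw [← neg_sub]
  refine Submodule.neg_mem _ ?_
  rcases hc with (⟨k, hk⟩ | ⟨j, rfl⟩) | ⟨k, hk⟩
  · exact G_BM G_x hk a ha
  · exact G_h j a ha
  · exact G_BM G_y hk a ha

section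
variable (D : RD A)
include D

lemma G_exists {a k} (ha : a ∈ M.G) (hk : M.HasWt a (q A k)) (h0 : a ≠ 0) :
    ∃ s, s ≠ 0 ∧ (BM M.x k s ∨ BM M.y (-k) s ∨ k = 0) := by
  have h1 := span_wt (fun s hs => GS_wt hs) ha hk
  have h2 : ∃ s ∈ {s ∈ M.GS | M.HasWt s (q A k)}, s ≠ 0 := by
    by_contra hcon
    push Not at hcon
    apply h0
    rw [Submodule.span_eq_bot.mpr hcon] at h1
    simpa using h1
  obtain ⟨s, ⟨hs, hs2⟩, hs0⟩ := h2
  refine ⟨s, hs0, ?_⟩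
  rcases hs with (⟨l, hl⟩ | ⟨j, rfl⟩) | ⟨l, hl⟩
  · left
    have := D.q_inj ((BM_x_wt hl).uniq hs2 hs0)
    exact this ▸ hl
  · right; right
    have := (hasWt_h j).uniq hs2 hs0
    rw [← q_zero (A := A)] at this
    exact (D.q_inj this).symm
  · right; left
    have := D.q_inj ((BM_y_wt hl).uniq hs2 hs0)
    rw [← this, neg_neg]; exact hl

lemma G_sign {a k} (ha : a ∈ M.G) (hk : M.HasWt a (q A k)) (h0 : a ≠ 0) :
    (∀ i, 0 ≤ k i) ∨ (∀ i, k i ≤ 0) := by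
  obtain ⟨s, -, h1 | h1 | h1⟩ := G_exists D ha hk h0
  · exact Or.inl h1.pos.1
  · right; intro i; have := h1.pos.1 i; simpa using this
  · subst h1; left; simp

lemma G_single {a i} {m : ℤ} (ha : a ∈ M.G) (hk : M.HasWt a (q A (Pi.single i m))) (h0 : a ≠ 0)
    (hm : m ≠ 0) : m = 1 ∨ m = -1 := by
  obtain ⟨s, hs, h1 | h1 | h1⟩ := G_exists D ha hk h0
  · rcases h1.single i m rfl with h2 | h2
    · exact Or.inl h2.1
    · exact absurd h2 hs
  · rcases h1.single i (-m) (by rw [Pi.single_neg]) with h2 | h2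
    · right; linarith [h2.1]
    · exact absurd h2 hs
  · exfalso; apply hm; have := congrFun h1 i; simpa using this

lemma G_eq_x {a i} (ha : a ∈ M.G) (hk : M.HasWt a (A i)) : ∃ c : ℂ, a = c • M.x i := by
  have h1 := span_wt (fun s hs => GS_wt hs) ha hk
  have h2 : Submodule.span ℂ {s ∈ M.GS | M.HasWt s (A i)} ≤ Submodule.span ℂ {M.x i} := by
    rw [Submodule.span_le]
    rintro s ⟨hs, hs2⟩
    by_cases hs0 : s = 0
    · subst hs0; exact Submodule.zero_mem _
    rw [← one_smul ℤ (A i), ← q_single] at hs2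
    rcases hs with (⟨l, hl⟩ | ⟨j, rfl⟩) | ⟨l, hl⟩
    · have := D.q_inj ((BM_x_wt hl).uniq hs2 hs0)
      rcases hl.single i 1 this with h3 | h3
      · rw [h3.2]; exact Submodule.mem_span_singleton_self _
      · exact absurd h3 hs0
    · have := (hasWt_h j).uniq hs2 hs0
      rw [← q_zero (A := A)] at this
      have := congrFun (D.q_inj this) i
      simp at this
    · have := D.q_inj ((BM_y_wt hl).uniq hs2 hs0)
      have h3 := congrFun this i
      have h4 := hl.pos.1 i
      simp at h3
      omega
  obtain ⟨c, hc⟩ := Submodule.mem_span_singleton.mp (h2 h1)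
  exact ⟨c, hc.symm⟩

lemma G_eq_y {a i} (ha : a ∈ M.G) (hk : M.HasWt a (-A i)) : ∃ c : ℂ, a = c • M.y i := by
  have h1 := span_wt (fun s hs => GS_wt hs) ha hk
  have h2 : Submodule.span ℂ {s ∈ M.GS | M.HasWt s (-A i)} ≤ Submodule.span ℂ {M.y i} := by
    rw [Submodule.span_le]
    rintro s ⟨hs, hs2⟩
    by_cases hs0 : s = 0
    · subst hs0; exact Submodule.zero_mem _
    rw [← one_smul ℤ (A i), ← q_single, ← q_neg] at hs2
    rcases hs with (⟨l, hl⟩ | ⟨j, rfl⟩) | ⟨l, hl⟩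
    · have := D.q_inj ((BM_x_wt hl).uniq hs2 hs0)
      have h3 := congrFun this i
      have h4 := hl.pos.1 i
      simp at h3
      omega
    · have := (hasWt_h j).uniq hs2 hs0
      rw [← q_zero (A := A)] at this
      have := congrFun (D.q_inj this) i
      simp at this
    · have := D.q_inj ((BM_y_wt hl).uniq hs2 hs0)
      rcases hl.single i 1 (neg_injective this) with h3 | h3
      · rw [h3.2]; exact Submodule.mem_span_singleton_self _
      · exact absurd h3 hs0
  obtain ⟨c, hc⟩ := Submodule.mem_span_singleton.mp (h2 h1)
  exact ⟨c, hc.symm⟩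

end

lemma conj_wt {T T' : Module.End ℂ V} {w : Matrix (Fin n) (Fin n) ℤ} (h1 : T * T' = 1) (h2 : T' * T = 1)
    (h3 : ∀ φ, M.dg φ * T = T * M.dg (fun μ => φ (w *ᵥ μ))) {a β} (ha : M.HasWt a β) :
    M.HasWt (T * a * T') (w *ᵥ β) := by
  have h4 : ∀ φ, T' * M.dg φ = M.dg (fun μ => φ (w *ᵥ μ)) * T' := by
    intro φ
    calc T' * M.dg φ = T' * (M.dg φ * T) * T' := by simp only [mul_assoc, h1, mul_one]
      _ = (T' * T) * (M.dg (fun μ => φ (w *ᵥ μ))) * T' := by rw [h3]; simp only [mul_assoc]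
      _ = _ := by rw [h2, one_mul]
  intro φ
  rw [← mul_assoc, ← mul_assoc, h3, mul_assoc T, ha, mul_assoc (T * a), h4]
  simp only [mul_assoc, Matrix.mulVec_add]

lemma conj_wt' {T T' : Module.End ℂ V} {w w' : Matrix (Fin n) (Fin n) ℤ} (h1 : T * T' = 1) (h2 : T' * T = 1)
    (hw : w * w' = 1)
    (h3 : ∀ φ, M.dg φ * T = T * M.dg (fun μ => φ (w *ᵥ μ))) {a β} (ha : M.HasWt a (w *ᵥ β)) :
    M.HasWt (T' * a * T) β := by
  have hw2 : w' * w = 1 := mul_eq_one_comm.mp hw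
  have h3' : ∀ φ, M.dg φ * T' = T' * M.dg (fun μ => φ (w' *ᵥ μ)) := by
    intro φ
    have h5 := h3 (fun μ => φ (w' *ᵥ μ))
    simp only [Matrix.mulVec_mulVec, hw2, Matrix.one_mulVec] at h5
    calc M.dg φ * T' = (T' * T) * M.dg φ * T' := by rw [h2, one_mul]
      _ = T' * (T * M.dg φ) * T' := by simp only [mul_assoc]
      _ = T' * M.dg (fun μ => φ (w' *ᵥ μ)) * (T * T') := by rw [← h5]; simp only [mul_assoc]
      _ = _ := by rw [h1, mul_one]
  have := conj_wt (M := M) h2 h1 h3' ha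
  rwa [Matrix.mulVec_mulVec, hw2, Matrix.one_mulVec] at this

end WM

lemma RD.exists_inv {n : ℕ} {A : Fin n → Fin n → ℤ} (D : RD A) {w} (hw : w ∈ CL.weyl A) :
    ∃ w' ∈ CL.weyl A, w * w' = 1 := by
  induction hw using Submonoid.closure_induction with
  | mem x hx => obtain ⟨i, rfl⟩ := hx; exact ⟨_, Submonoid.subset_closure ⟨i, rfl⟩, D.refl_sq i⟩
  | one => exact ⟨1, one_mem _, by simp⟩
  | mul x y _ _ hx hy =>
    obtain ⟨x', hx', h1⟩ := hx
    obtain ⟨y', hy', h2⟩ := hy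
    refine ⟨y' * x', mul_mem hy' hx', ?_⟩
    rw [Matrix.mul_assoc, ← Matrix.mul_assoc y, h2, Matrix.one_mul, h1]

end WCF

namespace WCF
open Matrix

namespace WM

variable {n : ℕ} {A : Fin n → Fin n → ℤ} {ι V : Type*} [AddCommGroup V] [Module ℂ V]
  {M : WM A ι V}

lemma conj_ne {T T' a : Module.End ℂ V} (h2 : T' * T = 1) (ha : a ≠ 0) : T * a * T' ≠ 0 := by
  intro h
  apply ha
  calc a = (T' * T) * a * (T' * T) := by rw [h2]; simp
    _ = T' * (T * a * T') * T := by simp only [mul_assoc]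
    _ = 0 := by rw [h]; simp

lemma G_root_aux (D : RD A) [Finite ι] (N : ℕ) : ∀ (k : Fin n → ℤ) (a : Module.End ℂ V),
    ∑ i, (k i).natAbs = N → a ∈ M.G → M.HasWt a (q A k) → a ≠ 0 → k ≠ 0 → q A k ∈ D.R := by
  induction N using Nat.strong_induction_on with
  | _ N ih =>
  intro k a hN ha hk h0 hk0
  have hβ0 : q A k ≠ 0 := by
    intro h
    rw [← q_zero (A := A)] at h
    exact hk0 (D.q_inj h)
  have hpos := D.pos _ hβ0
  rw [D.B_q (q A k) k] at hpos
  obtain ⟨i, -, hi⟩ := Finset.exists_lt_of_sum_lt (s := Finset.univ) (f := fun _ : Fin n => (0:ℝ))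
    (by simpa using hpos)
  have hb := D.bpos i
  have hi2 : 0 < k i * (q A k) i := by
    have : (0:ℝ) < (k i : ℝ) * ((q A k) i : ℝ) := by
      by_contra hcon
      push Not at hcon
      have : (k i : ℝ) * (((q A k) i : ℝ) * (D.B (A i) (A i) / 2)) ≤ 0 := by
        rw [← mul_assoc]
        exact mul_nonpos_of_nonpos_of_nonneg hcon (by positivity)
      linarith
    exact_mod_cast this
  have hsg := G_sign D ha hk h0
  by_cases hs : k = Pi.single i (k i)
  · rw [hs] at hk
    have hki : k i ≠ 0 := by rintro h; rw [h] at hi2; simp at hi2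
    rw [hs, q_single]
    rcases G_single D ha hk h0 hki with h | h
    · rw [h, one_smul]; exact D.simple_mem i
    · rw [h, neg_smul, one_smul]; exact D.neg_mem (D.simple_mem i)
  · have hj : ∃ j, j ≠ i ∧ k j ≠ 0 := by
      by_contra hcon
      push Not at hcon
      apply hs
      ext j
      by_cases hj : j = i
      · subst hj; simp
      · rw [Pi.single_eq_of_ne hj]; exact hcon j hj
    obtain ⟨j, hji, hkj⟩ := hj
    obtain ⟨T, T', h1, h2, h3, h4⟩ := M.exists_T D i
    set k' := k - Pi.single i ((q A k) i) with hk'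
    have hwt : M.HasWt (T * a * T') (q A k') := by
      have := conj_wt (w := CL.refl A i) h1 h2 (by intro φ; rw [h3]; simp only [refl_mulVec]) hk
      rwa [refl_mulVec, D.refl_q] at this
    have hG := (h4 M.G (G_x i) (G_y i) a ha).1
    have hne := conj_ne h2 h0
    have hk'j : k' j = k j := by simp [hk', Pi.single_eq_of_ne hji]
    have hk'i : k' i = k i - (q A k) i := by simp [hk']
    have hk'l : ∀ l, l ≠ i → k' l = k l := fun l hl => by simp [hk', Pi.single_eq_of_ne hl]
    have hlt : (k' i).natAbs < (k i).natAbs := by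
      rcases pos_and_pos_or_neg_and_neg_of_mul_pos hi2 with ⟨e1, e2⟩ | ⟨e1, e2⟩
      · rcases G_sign D hG hwt hne with g | g
        · have := g i; omega
        · have := g j
          have h5 : k j < 0 := by omega
          rcases hsg with g' | g'
          · have := g' j; omega
          · have := g' i; omega
      · rcases G_sign D hG hwt hne with g | g
        · have := g j
          have h5 : 0 < k j := by omega
          rcases hsg with g' | g'
          · have := g' i; omega
          · have := g' j; omega
        · have := g i; omega
    have hsum : ∑ l, (k' l).natAbs < N := by
      rw [← hN]
      refine Finset.sum_lt_sum (fun l _ => ?_) ⟨i, Finset.mem_univ i, hlt⟩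
      by_cases hl : l = i
      · subst hl; exact hlt.le
      · rw [hk'l l hl]
    have hmem := ih _ hsum k' _ rfl hG hwt hne (by
      intro h; apply hkj; rw [← hk'j, h]; rfl)
    have h6 := D.refl_mem _ hmem i
    rw [hk', ← D.refl_q, D.refl_refl] at h6
    exact h6

lemma G_root (D : RD A) [Finite ι] {k : Fin n → ℤ} {a : Module.End ℂ V} (ha : a ∈ M.G)
    (hk : M.HasWt a (q A k)) (h0 : a ≠ 0) (hk0 : k ≠ 0) : q A k ∈ D.R :=
  G_root_aux D _ k a rfl ha hk h0 hk0

lemma A_inj (D : RD A) {i j : Fin n} (h : A i = A j) : i = j := by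
  have : q A (Pi.single i 1) = q A (Pi.single j 1) := by simpa [q_single] using h
  have := congrFun (D.q_inj this) i
  by_contra hne
  simp [Pi.single_eq_of_ne hne] at this

/-- The specification of a pair of root vectors. -/
structure EF (D : RD A) (M : WM A ι V) (α : Fin n → ℤ) (e f : Module.End ℂ V) : Prop where
  eG : e ∈ M.G
  fG : f ∈ M.G
  ewt : M.HasWt e α
  fwt : M.HasWt f (-α)
  ef : e * f - f * e = M.dg (fun μ => ((2 * D.B μ α / D.B α α : ℝ) : ℂ))
  euniq : ∀ a ∈ M.G, M.HasWt a α → ∃ c : ℂ, a = c • e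
  funiq : ∀ a ∈ M.G, M.HasWt a (-α) → ∃ c : ℂ, a = c • f
  simp : ∀ j, α = A j → e = M.x j ∧ f = M.y j

lemma h_eq_B (D : RD A) (i : Fin n) :
    M.h i = M.dg (fun μ => ((2 * D.B μ (A i) / D.B (A i) (A i) : ℝ) : ℂ)) := by
  rw [h_eq]
  congr 1
  ext μ
  rw [D.simple, mul_div_assoc, div_self (D.bpos i).ne', mul_one]
  simp

lemma exists_EF (D : RD A) [Finite ι] {α} (hα : α ∈ D.R) : ∃ e f, EF D M α e f := by
  by_cases hs : ∃ j, α = A j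
  · obtain ⟨j, rfl⟩ := hs
    refine ⟨M.x j, M.y j, x_mem j, y_mem j, hasWt_x j, hasWt_y j, ?_, fun a ha hw => G_eq_x D ha hw,
      fun a ha hw => G_eq_y D ha hw, fun l hl => by rw [A_inj D hl]; exact ⟨rfl, rfl⟩⟩
    rw [M.xy, if_pos rfl, h_eq_B D]
  · obtain ⟨w, hw, i, rfl⟩ := D.orbit α hα
    obtain ⟨w', hw', hww⟩ := D.exists_inv hw
    obtain ⟨T, T', h1, h2, h3, h4⟩ := M.exists_Th D hw
    have h4' := h4 M.G G_x G_y
    have back : ∀ a, a = T * (T' * a * T) * T' := by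
      intro a
      calc a = (T * T') * a * (T * T') := by rw [h1]; simp
        _ = _ := by simp only [mul_assoc]
    refine ⟨T * M.x i * T', T * M.y i * T', (h4' _ (x_mem i)).1, (h4' _ (y_mem i)).1,
      conj_wt h1 h2 h3 (hasWt_x i), ?_, ?_, ?_, ?_, fun j hj => absurd ⟨j, hj⟩ hs⟩
    · rw [← Matrix.mulVec_neg]; exact conj_wt h1 h2 h3 (hasWt_y i)
    · have e1 : T * M.x i * T' * (T * M.y i * T') - T * M.y i * T' * (T * M.x i * T') =
        T * (M.x i * M.y i - M.y i * M.x i) * T' := by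
        calc _ = T * M.x i * (T' * T) * M.y i * T' - T * M.y i * (T' * T) * M.x i * T' := by
              simp only [mul_assoc]
          _ = _ := by rw [h2]; noncomm_ring
      rw [e1, M.xy, if_pos rfl, h_eq_B D]
      have e2 := h3 (fun μ => ((2 * D.B μ (w *ᵥ A i) / D.B (w *ᵥ A i) (w *ᵥ A i) : ℝ) : ℂ))
      simp only [D.B_W hw] at e2 ⊢
      rw [← e2, mul_assoc, h1, mul_one]
    · intro a ha hwt
      obtain ⟨c, hc⟩ := G_eq_x D (h4' a ha).2 (conj_wt' h1 h2 hww h3 hwt)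
      refine ⟨c, ?_⟩
      rw [back a, hc, mul_smul_comm, smul_mul_assoc]
    · intro a ha hwt
      rw [← Matrix.mulVec_neg] at hwt
      obtain ⟨c, hc⟩ := G_eq_y D (h4' a ha).2 (conj_wt' h1 h2 hww h3 hwt)
      refine ⟨c, ?_⟩
      rw [back a, hc, mul_smul_comm, smul_mul_assoc]

end WM
end WCF

namespace WCF
open Matrix

lemma RD.gram {n : ℕ} {A : Fin n → Fin n → ℤ} (D : RD A) {β : Fin n → ℤ} {j : Fin n} (hβ : β ∈ D.Rp)
    (hβj : β ≠ A j) : D.B β (A j) * D.B β (A j) < D.B β β * D.B (A j) (A j) := by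
  obtain ⟨h1, k, hk, rfl⟩ := D.mem_Rp.mp hβ
  obtain ⟨l, hl, hl2⟩ := D.exists_other hk h1 hβj
  set β := q A k
  have hu : (2 : ℤ) • β - β j • A j ≠ 0 := by
    intro h
    have h2 : q A (k + k - Pi.single j (β j)) = q A 0 := by
      rw [q_sub, q_add, q_single, q_zero, ← h, two_smul]
    have := congrFun (D.q_inj h2) l
    simp [Pi.single_eq_of_ne hl] at this
    omega
  have h3 := D.pos _ hu
  have h4 := D.simple β j
  have h5 := D.bpos j
  simp only [map_sub, AddMonoidHom.sub_apply, D.B_smul_left, D.B_smul_right, D.symm (A j) β] at h3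
  push_cast at h3
  nlinarith

namespace WM

variable {n : ℕ} {A : Fin n → Fin n → ℤ} {ι V : Type*} [AddCommGroup V] [Module ℂ V]
  {M : WM A ι V}

lemma dg_zero {φ} (h : M.dg φ = 0) (k) : φ (M.wt k) = 0 := by
  have := LinearMap.congr_fun h (M.b k)
  rw [M.dg_b] at this
  simpa [M.b.ne_zero k] using this

lemma HasWt.ell {a : Module.End ℂ V} {γ} (ha : M.HasWt a γ) (h0 : a ≠ 0) {φ} (hφ : M.dg φ = 0)
    (hadd : ∀ μ ν, φ (μ + ν) = φ μ + φ ν) : φ γ = 0 := by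
  have : ∃ k, a (M.b k) ≠ 0 := by
    by_contra hcon
    push Not at hcon
    exact h0 (M.b.ext fun k => by simp [hcon k])
  obtain ⟨k, hk⟩ := this
  obtain ⟨l, hl⟩ := (ha.isWt (M.isWt_b k)).exists_wt hk
  have h1 := dg_zero hφ l
  rw [hl, hadd, dg_zero hφ k, zero_add] at h1
  exact h1

lemma pair (D : RD A) {β : Fin n → ℤ} {j : Fin n} (hβ : β ∈ D.Rp) (hα : β + A j ∈ D.Rp)
    (hβj : β ≠ A j) {eb fb ea fa : Module.End ℂ V} (E : EF D M β eb fb) (E' : EF D M (β + A j) ea fa) :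
    ((D.B (β + A j) (β + A j) / 2 : ℝ) : ℂ) •
      ((ea * M.y j - M.y j * ea) * fa + fa * (ea * M.y j - M.y j * ea)) +
    ((D.B β β / 2 : ℝ) : ℂ) • (eb * (fb * M.y j - M.y j * fb) + (fb * M.y j - M.y j * fb) * eb) = 0 := by
  by_cases hy0 : M.y j = 0
  · simp [hy0]
  obtain ⟨N, hN⟩ := E.euniq _ (G_lie E'.eG (y_mem j)) (by
    have := E'.ewt.brk (hasWt_y (M := M) j)
    rwa [add_neg_cancel_right] at this)
  obtain ⟨K, hK⟩ := E'.funiq _ (G_lie E.fG (y_mem j)) (by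
    have := E.fwt.brk (hasWt_y (M := M) j)
    rwa [← neg_add] at this)
  obtain ⟨Q, hQ⟩ := G_eq_x D (i := j) (G_lie E'.eG E.fG) (by
    have := E'.ewt.brk E.fwt
    rwa [add_assoc, add_comm (A j), ← add_assoc, add_neg_cancel, zero_add] at this)
  rw [hN, hK]
  by_cases he0 : eb = 0
  · simp [he0]
  have hbb : 0 < D.B β β := D.pos _ (fun h => D.zero_notMem (h ▸ D.Rp_sub hβ))
  have haa : 0 < D.B (β + A j) (β + A j) := D.pos _ (fun h => D.zero_notMem (h ▸ D.Rp_sub hα))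
  have hjj := D.bpos j
  have jac : (ea * fb - fb * ea) * M.y j - M.y j * (ea * fb - fb * ea) =
      ((ea * M.y j - M.y j * ea) * fb - fb * (ea * M.y j - M.y j * ea)) +
      (ea * (fb * M.y j - M.y j * fb) - (fb * M.y j - M.y j * fb) * ea) := by noncomm_ring
  rw [hQ, hN, hK, smul_mul_assoc, mul_smul_comm, ← smul_sub, M.xy, if_pos rfl, smul_mul_assoc,
    mul_smul_comm, ← smul_sub, E.ef, smul_mul_assoc, mul_smul_comm, ← smul_sub, E'.ef, h_eq_B D,
    dg_smul, dg_smul, dg_smul, dg_add] at jac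
  have jac2 := sub_eq_zero.mpr jac
  rw [dg_sub] at jac2
  have hadd : ∀ μ ν : Fin n → ℤ, Q * ((2 * D.B (μ + ν) (A j) / D.B (A j) (A j) : ℝ) : ℂ) -
      (N * ((2 * D.B (μ + ν) β / D.B β β : ℝ) : ℂ) +
        K * ((2 * D.B (μ + ν) (β + A j) / D.B (β + A j) (β + A j) : ℝ) : ℂ)) =
      (Q * ((2 * D.B μ (A j) / D.B (A j) (A j) : ℝ) : ℂ) -
      (N * ((2 * D.B μ β / D.B β β : ℝ) : ℂ) +
        K * ((2 * D.B μ (β + A j) / D.B (β + A j) (β + A j) : ℝ) : ℂ))) +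
      (Q * ((2 * D.B ν (A j) / D.B (A j) (A j) : ℝ) : ℂ) -
      (N * ((2 * D.B ν β / D.B β β : ℝ) : ℂ) +
        K * ((2 * D.B ν (β + A j) / D.B (β + A j) (β + A j) : ℝ) : ℂ))) := by
    intro μ ν
    simp only [map_add, AddMonoidHom.add_apply]
    push_cast
    ring
  have l1 := E.ewt.ell he0 jac2 hadd
  have l2 := (hasWt_y (M := M) j).ell hy0 jac2 hadd
  have hg := D.gram hβ hβj
  have hs : D.B (A j) β = D.B β (A j) := D.symm _ _
  have haa' : D.B (β + A j) (β + A j) = D.B β β + 2 * D.B β (A j) + D.B (A j) (A j) := by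
    simp only [map_add, AddMonoidHom.add_apply, hs]; ring
  clear jac jac2 hadd haa'
  generalize D.B (β + A j) (β + A j) = aa at *
  simp only [map_add, map_neg, AddMonoidHom.neg_apply, hs] at l1 l2
  generalize D.B β (A j) = bj at *
  generalize D.B β β = bb at *
  generalize D.B (A j) (A j) = jj at *
  have hjj' : (jj : ℂ) ≠ 0 := by exact_mod_cast hjj.ne'
  have hbb' : (bb : ℂ) ≠ 0 := by exact_mod_cast hbb.ne'
  have haa'' : (aa : ℂ) ≠ 0 := by exact_mod_cast haa.ne'
  have hg' : (bb : ℂ) * jj - bj * bj ≠ 0 := by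
    have : bb * jj - bj * bj ≠ 0 := by linarith
    exact_mod_cast this
  have hP : (N / bb + K / aa) * ((bb : ℂ) * jj - bj * bj) = 0 := by
    push_cast at l1 l2
    field_simp at l1 l2 ⊢
    linear_combination (-(bb : ℂ) / 2) * l1 - (bj : ℂ) / 2 * l2
  have hP2 : N / (bb : ℂ) + K / aa = 0 := (mul_eq_zero.mp hP).resolve_right hg'
  have hP3 : (aa : ℂ) * N + bb * K = 0 := by
    field_simp at hP2
    linear_combination hP2
  rw [smul_mul_assoc, mul_smul_comm, mul_smul_comm, smul_mul_assoc, ← smul_add, ← smul_add, smul_smul,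
    smul_smul, ← add_smul]
  have : ((aa / 2 : ℝ) : ℂ) * N + ((bb / 2 : ℝ) : ℂ) * K = 0 := by
    push_cast; linear_combination hP3 / 2
  rw [this, zero_smul]

/-- The Casimir operator. -/
def Om (D : RD A) (M : WM A ι V) (e f : (Fin n → ℤ) → Module.End ℂ V) : Module.End ℂ V :=
  M.dg (fun μ => ((D.B μ μ : ℝ) : ℂ)) +
    ∑ α ∈ D.Rp, ((D.B α α / 2 : ℝ) : ℂ) • (e α * f α + f α * e α)

lemma Om_y (D : RD A) [Finite ι] {e f : (Fin n → ℤ) → Module.End ℂ V}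
    (hE : ∀ α ∈ D.Rp, EF D M α (e α) (f α)) (j : Fin n) :
    Om D M e f * M.y j = M.y j * Om D M e f := by
  set F : (Fin n → ℤ) → Module.End ℂ V := fun α => ((D.B α α / 2 : ℝ) : ℂ) •
      ((e α * M.y j - M.y j * e α) * f α + f α * (e α * M.y j - M.y j * e α)) with hF
  set K : (Fin n → ℤ) → Module.End ℂ V := fun β => ((D.B β β / 2 : ℝ) : ℂ) •
      (e β * (f β * M.y j - M.y j * f β) + (f β * M.y j - M.y j * f β) * e β) with hK
  have hterm : ∀ α, (((D.B α α / 2 : ℝ) : ℂ) • (e α * f α + f α * e α)) * M.y j -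
      M.y j * (((D.B α α / 2 : ℝ) : ℂ) • (e α * f α + f α * e α)) = F α + K α := by
    intro α
    rw [hF, hK, smul_mul_assoc, mul_smul_comm, ← smul_sub, ← smul_add]
    congr 1
    noncomm_ring
  rw [← sub_eq_zero, Om, add_mul, mul_add, add_sub_add_comm, Finset.sum_mul, Finset.mul_sum,
    ← Finset.sum_sub_distrib, Finset.sum_congr rfl (fun α _ => hterm α),
    ← Finset.add_sum_erase _ _ (D.simple_mem_Rp j), Finset.sum_add_distrib]
  have hj := (hE _ (D.simple_mem_Rp j)).simp j rfl
  have hKj : K (A j) = 0 := by simp [hK, hj.2]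
  have hFj : (M.dg (fun μ => ((D.B μ μ : ℝ) : ℂ)) * M.y j - M.y j * M.dg (fun μ => ((D.B μ μ : ℝ) : ℂ))) +
      F (A j) = 0 := by
    have e1 := (hasWt_y (M := M) j) (fun μ => ((D.B μ μ : ℝ) : ℂ))
    have e2 := M.xy j j
    rw [if_pos rfl, h_eq_B D] at e2
    have e3 := (hasWt_y (M := M) j) (fun μ => ((2 * D.B μ (A j) / D.B (A j) (A j) : ℝ) : ℂ))
    rw [hF]
    simp only [hj.1, hj.2, e2, e3]
    rw [e1, ← mul_sub, dg_sub, ← mul_add, dg_add, ← mul_smul_comm, dg_smul, ← mul_add, dg_add]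
    have : (fun μ : Fin n → ℤ => ((D.B (μ + -A j) (μ + -A j) : ℝ) : ℂ) - ((D.B μ μ : ℝ) : ℂ) +
        ((D.B (A j) (A j) / 2 : ℝ) : ℂ) * (((2 * D.B (μ + -A j) (A j) / D.B (A j) (A j) : ℝ) : ℂ) +
        ((2 * D.B μ (A j) / D.B (A j) (A j) : ℝ) : ℂ))) = fun _ => 0 := by
      ext μ
      have hjj := (D.bpos j).ne'
      rw [← Complex.ofReal_sub, ← Complex.ofReal_add, ← Complex.ofReal_mul, ← Complex.ofReal_add]
      norm_cast
      simp only [map_add, map_neg, AddMonoidHom.add_apply, AddMonoidHom.neg_apply, D.symm (A j) μ]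
      field_simp
      ring
    rw [this, dg_const, zero_smul, mul_zero]
  -- the remaining roots
  set P := D.Rp.erase (A j) with hP
  have hR2 : ∀ m : ℤ, 1 < m → m • A j ∉ D.R := by
    intro m hm h
    rcases D.red _ _ h with h | h <;> omega
  have hFz : ∀ α ∈ P, α - A j ∉ P → F α = 0 := by
    intro α hα hn
    obtain ⟨hα1, hα2⟩ := Finset.mem_erase.mp hα
    have : e α * M.y j - M.y j * e α = 0 := by
      by_contra hne
      obtain ⟨h1, k, hk, hk2⟩ := D.mem_Rp.mp hα2
      have hw := (hE α hα2).ewt.brk (hasWt_y (M := M) j)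
      have e1 : α + -A j = q A (k - Pi.single j 1) := by
        rw [q_sub, q_single, one_smul, ← hk2, sub_eq_add_neg]
      rw [hk2] at h1 hα1
      obtain ⟨l, hl, hl2⟩ := D.exists_other hk h1 hα1
      have hl3 : 0 < (k - Pi.single j 1 : Fin n → ℤ) l := by simpa [Pi.single_eq_of_ne hl] using hl2
      rw [e1] at hw
      have h3 := G_root D (G_lie (hE α hα2).eG (y_mem j)) hw hne (by
        intro h; rw [h] at hl3; simp at hl3)
      have h4 := D.pos_of_coeff h3 hl3
      rw [← e1, ← sub_eq_add_neg] at h4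
      apply hn
      rw [hP, Finset.mem_erase]
      refine ⟨fun h5 => ?_, h4⟩
      apply hR2 2 (by norm_num)
      have : (2 : ℤ) • A j = α := by
        rw [two_smul]; nth_rw 1 [← h5]; abel
      rw [this]; exact D.Rp_sub hα2
    simp [hF, this]
  have hKz : ∀ β ∈ P, β + A j ∉ P → K β = 0 := by
    intro β hβ hn
    obtain ⟨hβ1, hβ2⟩ := Finset.mem_erase.mp hβ
    have : f β * M.y j - M.y j * f β = 0 := by
      by_contra hne
      obtain ⟨h1, k, hk, hk2⟩ := D.mem_Rp.mp hβ2
      have hw := (hE β hβ2).fwt.brk (hasWt_y (M := M) j)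
      have e1 : -β + -A j = q A (-(k + Pi.single j 1)) := by
        rw [q_neg, q_add, q_single, one_smul, ← hk2, neg_add]
      rw [hk2] at h1 hβ1
      obtain ⟨l, hl, hl2⟩ := D.exists_other hk h1 hβ1
      have hl3 : 0 < (k + Pi.single j 1 : Fin n → ℤ) l := by simpa [Pi.single_eq_of_ne hl] using hl2
      rw [e1] at hw
      have h3 := G_root D (G_lie (hE β hβ2).fG (y_mem j)) hw hne (by
        intro h; rw [neg_eq_zero] at h; rw [h] at hl3; simp at hl3)
      have h3' := D.neg_mem h3
      rw [← q_neg, neg_neg] at h3'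
      have h4 := D.pos_of_coeff h3' hl3
      rw [q_add, q_single, one_smul, ← hk2] at h4
      apply hn
      rw [hP, Finset.mem_erase]
      refine ⟨fun h5 => ?_, h4⟩
      rw [add_eq_right] at h5
      exact D.zero_notMem (h5 ▸ D.Rp_sub hβ2)
    simp [hK, this]
  have hmain : ∑ α ∈ P, F α + ∑ β ∈ P, K β = 0 := by
    have s1 : ∑ α ∈ P, F α = ∑ α ∈ P with α - A j ∈ P, F α := by
      rw [Finset.sum_filter]
      refine Finset.sum_congr rfl fun α hα => ?_
      split_ifs with h
      · rfl
      · exact hFz α hα h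
    have s2 : ∑ α ∈ P, K α = ∑ α ∈ P with α + A j ∈ P, K α := by
      rw [Finset.sum_filter]
      refine Finset.sum_congr rfl fun α hα => ?_
      split_ifs with h
      · rfl
      · exact hKz α hα h
    have s3 : ∑ α ∈ P with α - A j ∈ P, F α = ∑ β ∈ P with β + A j ∈ P, F (β + A j) := by
      refine Finset.sum_nbij' (fun α => α - A j) (fun β => β + A j) ?_ ?_ ?_ ?_ ?_
      · intro α hα
        rw [Finset.mem_filter] at hα ⊢
        exact ⟨hα.2, by rw [sub_add_cancel]; exact hα.1⟩
      · intro α hα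
        rw [Finset.mem_filter] at hα ⊢
        exact ⟨hα.2, by rw [add_sub_cancel_right]; exact hα.1⟩
      · intro α _; exact sub_add_cancel _ _
      · intro α _; exact add_sub_cancel_right _ _
      · intro α _; rw [sub_add_cancel]
    rw [s1, s2, s3, ← Finset.sum_add_distrib]
    refine Finset.sum_eq_zero fun β hβ => ?_
    obtain ⟨h1, h2⟩ := Finset.mem_filter.mp hβ
    have h1' := Finset.mem_erase.mp h1
    have h2' := Finset.mem_erase.mp h2
    exact pair D h1'.2 h2'.2 h1'.1 (hE _ h1'.2) (hE _ h2'.2)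
  rw [hKj, add_zero, ← add_assoc, hFj, zero_add, hmain]

end WM
end WCF

namespace WCF
open Matrix

/-- Monomials in the lowering operators applied to a vector. -/
inductive Mon {n : ℕ} {V : Type*} [AddCommGroup V] [Module ℂ V] (y : Fin n → Module.End ℂ V) (v0 : V) :
    (Fin n → ℤ) → V → Prop
  | base : Mon y v0 0 v0
  | step {k : Fin n → ℤ} {v : V} (i : Fin n) : Mon y v0 k v → Mon y v0 (k + Pi.single i 1) (y i v)

section
variable {n : ℕ} {A : Fin n → Fin n → ℤ} {V : Type*} [AddCommGroup V] [Module ℂ V]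
  {x y h : Fin n → Module.End ℂ V} {v0 : V} {lam : Fin n → ℤ}

lemma Mon.nonneg {k v} (hm : Mon y v0 k v) : ∀ i, 0 ≤ k i := by
  induction hm with
  | base => intro i; simp
  | step i _ ih =>
    intro j
    rw [Pi.add_apply]
    refine add_nonneg (ih j) ?_
    by_cases hj : j = i
    · subst hj; simp
    · simp [Pi.single_eq_of_ne hj]

lemma Mon.eq_zero {k v} (hm : Mon y v0 k v) (hk : k = 0) : v = v0 := by
  cases hm with
  | base => rfl
  | step i hm' =>
    exfalso
    have h1 := congrFun hk i
    have h2 := hm'.nonneg i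
    simp at h1
    omega

lemma Mon.h_act (hy : ∀ i j, h i * y j - y j * h i = -((A j i : ℂ) • y j))
    (h0 : ∀ i, h i v0 = (lam i : ℂ) • v0) {k v} (hm : Mon y v0 k v) :
    ∀ i, h i v = (((lam - q A k) i : ℤ) : ℂ) • v := by
  induction hm with
  | base => intro i; rw [q_zero, sub_zero]; exact h0 i
  | @step k v j _ ih =>
    intro i
    have h1 := LinearMap.congr_fun (hy i j) v
    simp only [LinearMap.sub_apply, Module.End.mul_apply, LinearMap.neg_apply, LinearMap.smul_apply] at h1
    rw [ih i, map_smul, sub_eq_iff_eq_add] at h1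
    rw [h1, q_add, q_single, one_smul, ← neg_smul, ← add_smul]
    congr 1
    simp only [Pi.sub_apply, Pi.add_apply]
    push_cast
    ring

lemma Mon.span (hxy : ∀ i j, x i * y j - y j * x i = if i = j then h i else 0)
    (hy : ∀ i j, h i * y j - y j * h i = -((A j i : ℂ) • y j))
    (h0 : ∀ i, h i v0 = (lam i : ℂ) • v0) (hx0 : ∀ i, x i v0 = 0)
    (cyc : ∀ U : Submodule ℂ V, (∀ i, ∀ v ∈ U, x i v ∈ U ∧ y i v ∈ U ∧ h i v ∈ U) → v0 ∈ U → U = ⊤) :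
    Submodule.span ℂ {v | ∃ k, Mon y v0 k v} = ⊤ := by
  set S := Submodule.span ℂ {v | ∃ k, Mon y v0 k v} with hS
  have hH : ∀ k v, Mon y v0 k v → ∀ i, h i v ∈ S := by
    intro k v hm i
    rw [hm.h_act hy h0]
    exact S.smul_mem _ (Submodule.subset_span ⟨k, hm⟩)
  have hY : ∀ i, ∀ v ∈ S, y i v ∈ S := by
    intro i v hv
    have : S ≤ S.comap (y i) := by
      conv_lhs => rw [hS]
      rw [Submodule.span_le]
      rintro w ⟨k, hw⟩
      exact Submodule.subset_span ⟨_, hw.step i⟩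
    exact this hv
  have hX : ∀ k v, Mon y v0 k v → ∀ i, x i v ∈ S := by
    intro k v hm
    induction hm with
    | base => intro i; rw [hx0]; exact S.zero_mem
    | @step k v j hm ih =>
      intro i
      have h1 := LinearMap.congr_fun (hxy i j) v
      simp only [LinearMap.sub_apply, Module.End.mul_apply] at h1
      rw [sub_eq_iff_eq_add] at h1
      rw [h1]
      refine S.add_mem ?_ (hY j _ (ih i))
      split_ifs
      · exact hH _ _ hm i
      · exact S.zero_mem
  refine cyc S (fun i v hv => ⟨?_, hY i v hv, ?_⟩) (Submodule.subset_span ⟨0, Mon.base⟩)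
  · have : S ≤ S.comap (x i) := by
      conv_lhs => rw [hS]
      rw [Submodule.span_le]
      rintro w ⟨k, hw⟩
      exact hX _ _ hw i
    exact this hv
  · have : S ≤ S.comap (h i) := by
      conv_lhs => rw [hS]
      rw [Submodule.span_le]
      rintro w ⟨k, hw⟩
      exact hH _ _ hw i
    exact this hv

lemma exists_WM [FiniteDimensional ℂ V] (hxy : ∀ i j, x i * y j - y j * x i = if i = j then h i else 0)
    (hx : ∀ i j, h i * x j - x j * h i = (A j i : ℂ) • x j)
    (hy : ∀ i j, h i * y j - y j * h i = -((A j i : ℂ) • y j))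
    (h0 : ∀ i, h i v0 = (lam i : ℂ) • v0) (hx0 : ∀ i, x i v0 = 0)
    (cyc : ∀ U : Submodule ℂ V, (∀ i, ∀ v ∈ U, x i v ∈ U ∧ y i v ∈ U ∧ h i v ∈ U) → v0 ∈ U → U = ⊤) :
    ∃ M : WM A (Fin (Module.finrank ℂ V)) V, M.x = x ∧ M.y = y ∧ M.h = h := by
  have hs := Mon.span hxy hy h0 hx0 cyc
  let b := Module.Basis.ofSpan hs.ge
  have hb : ∀ i, ∃ k, Mon y v0 k (b i) := fun i =>
    Module.Basis.ofSpan_subset hs.ge ⟨i, rfl⟩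
  have : Finite (↑((linearIndepOn_empty ℂ id).extend (Set.empty_subset {v | ∃ k, Mon y v0 k v}))) :=
    Module.Finite.finite_basis b
  cases nonempty_fintype (↑((linearIndepOn_empty ℂ id).extend (Set.empty_subset {v | ∃ k, Mon y v0 k v})))
  let eqv := Fintype.equivFinOfCardEq (Module.finrank_eq_card_basis b).symm
  let c := b.reindex eqv
  have hc : ∀ i, ∃ k, Mon y v0 k (c i) := by
    intro i
    simp only [c, Module.Basis.reindex_apply]
    exact hb _
  choose k hk using hc
  exact ⟨⟨x, y, h, hxy, hx, hy, c, fun l => lam - q A (k l), fun i l => (hk l).h_act hy h0 i⟩, rfl, rfl, rfl⟩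

end

namespace WM

variable {n : ℕ} {A : Fin n → Fin n → ℤ} {ι V : Type*} [AddCommGroup V] [Module ℂ V]

/-- Cyclic highest weight modules. -/
structure HW (M : WM A ι V) (v0 : V) (lam : Fin n → ℤ) : Prop where
  ne : v0 ≠ 0
  h0 : ∀ i, M.h i v0 = (lam i : ℂ) • v0
  x0 : ∀ i, M.x i v0 = 0
  cyc : ∀ U : Submodule ℂ V, (∀ i, ∀ v ∈ U, M.x i v ∈ U ∧ M.y i v ∈ U ∧ M.h i v ∈ U) → v0 ∈ U → U = ⊤

variable {M : WM A ι V} {v0 : V} {lam : Fin n → ℤ}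

lemma HW.span (H : HW M v0 lam) : Submodule.span ℂ {v | ∃ k, Mon M.y v0 k v} = ⊤ :=
  Mon.span M.xy M.hy H.h0 H.x0 H.cyc

lemma HW.mon (H : HW M v0 lam) {k v} (hm : Mon M.y v0 k v) : M.IsWt v (lam - q A k) :=
  M.isWt_of_h (hm.h_act M.hy H.h0)

lemma HW.isWt (H : HW M v0 lam) : M.IsWt v0 lam := M.isWt_of_h H.h0

/-- An operator vanishing on all monomials vanishes. -/
lemma HW.ext (H : HW M v0 lam) {a c : Module.End ℂ V} (h : ∀ k v, Mon M.y v0 k v → a v = c v) : a = c := by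
  refine LinearMap.ext_on H.span ?_
  rintro v ⟨k, hv⟩
  exact h k v hv

lemma HW.wt_le (H : HW M v0 lam) (l : ι) : ∃ k, (∀ i, 0 ≤ k i) ∧ M.wt l = lam - q A k := by
  by_contra hcon
  push Not at hcon
  have : M.dg (fun μ => if μ = M.wt l then 1 else 0) = 0 := by
    refine H.ext fun k v hm => ?_
    rw [H.mon hm, if_neg (fun h => hcon k hm.nonneg h.symm)]
    simp
  have h2 := dg_zero this l
  simp at h2

lemma HW.top (D : RD A) (H : HW M v0 lam) : ∃ k, M.wt k = lam ∧ ∀ l, M.wt l = lam → l = k := by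
  obtain ⟨k, hk⟩ := H.isWt.exists_wt H.ne
  refine ⟨k, hk, fun l hl => ?_⟩
  have key : ∀ v, M.dg (fun μ => if μ = lam then 1 else 0) v ∈ Submodule.span ℂ {v0} := by
    intro v
    have : (⊤ : Submodule ℂ V) ≤ (Submodule.span ℂ {v0}).comap (M.dg (fun μ => if μ = lam then 1 else 0)) := by
      rw [← H.span, Submodule.span_le]
      rintro w ⟨m, hw⟩
      rw [SetLike.mem_coe, Submodule.mem_comap, H.mon hw]
      split_ifs with h
      · rw [sub_eq_self, ← q_zero (A := A)] at h
        rw [hw.eq_zero (D.q_inj h), one_smul]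
        exact Submodule.mem_span_singleton_self _
      · rw [zero_smul]; exact Submodule.zero_mem _
    exact this trivial
  have h1 := key (M.b k)
  have h2 := key (M.b l)
  rw [M.dg_b, if_pos hk, one_smul, Submodule.mem_span_singleton] at h1
  rw [M.dg_b, if_pos hl, one_smul, Submodule.mem_span_singleton] at h2
  obtain ⟨a, ha⟩ := h1
  obtain ⟨c, hc⟩ := h2
  have hane : a ≠ 0 := by
    rintro rfl
    rw [zero_smul] at ha
    exact M.b.ne_zero k ha.symm
  have h3 : M.b l = (c / a) • M.b k := by
    rw [← hc, ← ha, smul_smul, div_mul_cancel₀ _ hane]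
  by_contra hne
  have h4 := congrArg (fun v => M.b.repr v l) h3
  simp [Finsupp.single_apply, Ne.symm hne] at h4

lemma wt_refl (M : WM A ι V) (D : RD A) [Finite ι] (i : Fin n) (k : ι) : ∃ l, M.wt l = M.wt k - M.wt k i • A i := by
  obtain ⟨T, T', h1, h2, h3, -⟩ := M.exists_T D i
  have hw : M.IsWt (T (M.b k)) (M.wt k - M.wt k i • A i) := by
    intro φ
    have := LinearMap.congr_fun (h3 φ) (M.b k)
    simp only [Module.End.mul_apply] at this
    rw [this, M.dg_b, map_smul]
  refine hw.exists_wt ?_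
  intro h
  have h5 := LinearMap.congr_fun h2 (M.b k)
  simp only [Module.End.mul_apply, h, map_zero, Module.End.one_apply] at h5
  exact M.b.ne_zero k h5.symm

lemma HW.dom (D : RD A) [Finite ι] (H : HW M v0 lam) (i : Fin n) : 0 ≤ lam i := by
  obtain ⟨k, hk, -⟩ := H.top D
  obtain ⟨l, hl⟩ := M.wt_refl D i k
  obtain ⟨m, hm, hm2⟩ := H.wt_le l
  rw [hl, hk, sub_right_inj, ← q_single] at hm2
  have := D.q_inj hm2
  have h2 := hm i
  rw [← this] at h2
  simpa using h2

lemma HW.e_zero (D : RD A) (H : HW M v0 lam) {α} (hα : α ∈ D.Rp) {e} (he : M.HasWt e α) : e v0 = 0 := by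
  by_contra hne
  obtain ⟨k, hk⟩ := (he.isWt H.isWt).exists_wt hne
  obtain ⟨l, hl, hl2⟩ := H.wt_le k
  obtain ⟨h1, m, hm, rfl⟩ := D.mem_Rp.mp hα
  have h3 : q A (m + l) = q A 0 := by
    rw [hk] at hl2
    rw [q_add, q_zero]
    have : q A m = - q A l := by
      have := congrArg (fun z => z - lam) hl2
      simpa [sub_eq_add_neg] using this
    rw [this, neg_add_cancel]
  have h4 := D.q_inj h3
  apply D.zero_notMem
  have : m = 0 := by
    ext i
    have := congrFun h4 i
    have h5 := hm i
    have h6 := hl i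
    simp only [Pi.add_apply, Pi.zero_apply] at *
    omega
  rwa [this, q_zero] at h1

/-- The Casimir operator acts as a scalar. -/
lemma HW.Om_eq (D : RD A) [Finite ι] (H : HW M v0 lam) {e f : (Fin n → ℤ) → Module.End ℂ V}
    (hE : ∀ α ∈ D.Rp, EF D M α (e α) (f α)) :
    Om D M e f = (((D.B lam lam + D.B lam (fun _ => 2) : ℝ)) : ℂ) • 1 := by
  refine H.ext fun k v hm => ?_
  induction hm with
  | base =>
    rw [Om, LinearMap.add_apply, H.isWt, LinearMap.sum_apply]
    have : ∀ α ∈ D.Rp, ((((D.B α α / 2 : ℝ) : ℂ) • (e α * f α + f α * e α)) : Module.End ℂ V) v0 =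
        ((D.B lam α : ℝ) : ℂ) • v0 := by
      intro α hα
      have h1 := LinearMap.congr_fun (hE α hα).ef v0
      rw [H.isWt] at h1
      simp only [LinearMap.sub_apply, Module.End.mul_apply, H.e_zero D hα (hE α hα).ewt, map_zero,
        sub_zero] at h1
      simp only [LinearMap.smul_apply, LinearMap.add_apply, Module.End.mul_apply,
        H.e_zero D hα (hE α hα).ewt, map_zero, add_zero, h1, smul_smul]
      congr 1
      norm_cast
      have : D.B α α ≠ 0 := (D.pos _ (fun h => D.zero_notMem (h ▸ D.Rp_sub hα))).ne'
      field_simp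
    rw [Finset.sum_congr rfl this, ← Finset.sum_smul, ← add_smul, ← Complex.ofReal_sum, ← map_sum, D.sum_Rp,
      ← Complex.ofReal_add]
    rfl
  | @step k v j _ ih =>
    have := LinearMap.congr_fun (Om_y D hE j) v
    simp only [Module.End.mul_apply] at this
    rw [this, ih]
    simp

end WM
end WCF

namespace WCF
open Matrix

section
variable {n : ℕ}

/-- Coefficientwise multiplication by a function. -/
def mu (φ : (Fin n → ℤ) → ℂ) (F : AddMonoidAlgebra ℂ (Fin n → ℤ)) : AddMonoidAlgebra ℂ (Fin n → ℤ) :=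
  AddMonoidAlgebra.ofCoeff (Finsupp.onFinset F.coeff.support (fun μ => φ μ * F.coeff μ)
    (fun μ h => by
      rw [Finsupp.mem_support_iff]
      exact right_ne_zero_of_mul h))

lemma mu_coeff (φ) (F : AddMonoidAlgebra ℂ (Fin n → ℤ)) (μ) : (mu φ F).coeff μ = φ μ * F.coeff μ := rfl

lemma mu_add (φ) (F G : AddMonoidAlgebra ℂ (Fin n → ℤ)) : mu φ (F + G) = mu φ F + mu φ G := by
  ext μ
  simp [mu_coeff, mul_add]

lemma mu_zero (φ) : mu φ (0 : AddMonoidAlgebra ℂ (Fin n → ℤ)) = 0 := by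
  ext μ
  simp [mu_coeff]

lemma mu_sub (φ) (F G : AddMonoidAlgebra ℂ (Fin n → ℤ)) : mu φ (F - G) = mu φ F - mu φ G := by
  ext μ
  simp [mu_coeff, mul_sub]

lemma mu_single (φ) (μ : Fin n → ℤ) (c : ℂ) :
    mu φ (AddMonoidAlgebra.single μ c) = AddMonoidAlgebra.single μ (φ μ * c) := by
  ext ν
  rw [mu_coeff, AddMonoidAlgebra.coeff_single, Finsupp.single_apply, AddMonoidAlgebra.coeff_single, Finsupp.single_apply]
  split_ifs with h
  · rw [h]
  · simp

lemma mu_funadd (φ ψ) (F : AddMonoidAlgebra ℂ (Fin n → ℤ)) :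
    mu (fun μ => φ μ + ψ μ) F = mu φ F + mu ψ F := by
  ext μ
  simp [mu_coeff, add_mul]

lemma mu_sum {κ : Type*} (s : Finset κ) (φ : κ → (Fin n → ℤ) → ℂ) (F : AddMonoidAlgebra ℂ (Fin n → ℤ)) :
    mu (fun μ => ∑ i ∈ s, φ i μ) F = ∑ i ∈ s, mu (φ i) F := by
  ext μ
  simp [mu_coeff, Finset.sum_mul, AddMonoidAlgebra.coeff_sum, Finsupp.finsetSum_apply]

variable {A : Fin n → Fin n → ℤ} (D : RD A)

/-- The Laplacian. -/
def Lap (F : AddMonoidAlgebra ℂ (Fin n → ℤ)) : AddMonoidAlgebra ℂ (Fin n → ℤ) :=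
  mu (fun μ => ((D.B μ μ : ℝ) : ℂ)) F

/-- The directional derivative. -/
def dd (α : Fin n → ℤ) (F : AddMonoidAlgebra ℂ (Fin n → ℤ)) : AddMonoidAlgebra ℂ (Fin n → ℤ) :=
  mu (fun μ => ((D.B μ α : ℝ) : ℂ)) F

/-- The carré du champ. -/
def Gam (F G : AddMonoidAlgebra ℂ (Fin n → ℤ)) : AddMonoidAlgebra ℂ (Fin n → ℤ) :=
  Lap D (F * G) - F * Lap D G - G * Lap D F

lemma Gam_single (α : Fin n → ℤ) (c : ℂ) (G : AddMonoidAlgebra ℂ (Fin n → ℤ)) :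
    Gam D (AddMonoidAlgebra.single α c) G = 2 * (AddMonoidAlgebra.single α c * dd D α G) := by
  induction G using AddMonoidAlgebra.induction_linear with
  | zero => simp [Gam, Lap, dd, mu_zero]
  | add F G hF hG =>
    simp only [Gam, Lap, dd, mu_add, mul_add, add_mul] at *
    linear_combination hF + hG
  | single μ c' =>
    have h2 : (2 : AddMonoidAlgebra ℂ (Fin n → ℤ)) = AddMonoidAlgebra.single 0 2 := rfl
    rw [h2]
    simp only [Gam, Lap, dd, mu_single, AddMonoidAlgebra.single_mul_single, add_comm μ α, zero_add]
    rw [← AddMonoidAlgebra.single_sub, ← AddMonoidAlgebra.single_sub]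
    congr 1
    simp only [map_add, AddMonoidHom.add_apply, D.symm α μ]
    push_cast
    ring

lemma Gam_mul (F G H : AddMonoidAlgebra ℂ (Fin n → ℤ)) :
    Gam D (F * G) H = F * Gam D G H + G * Gam D F H := by
  induction F using AddMonoidAlgebra.induction_linear with
  | zero => simp [Gam, Lap, mu_zero]
  | add F F' h h' =>
    simp only [Gam, Lap, mu_add, mul_add, add_mul] at *
    linear_combination h + h'
  | single α c =>
    have h1 := Gam_single D α c (G * H)
    have h2 := Gam_single D α c G
    have h3 := Gam_single D α c H
    have h4 : dd D α (G * H) = G * dd D α H + H * dd D α G := by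
      clear h1 h2 h3
      induction G using AddMonoidAlgebra.induction_linear with
      | zero => simp [dd, mu_zero]
      | add F F' h h' =>
        simp only [dd, mu_add, mul_add, add_mul] at *
        linear_combination h + h'
      | single β d =>
        induction H using AddMonoidAlgebra.induction_linear with
        | zero => simp [dd, mu_zero]
        | add F F' h h' =>
          simp only [dd, mu_add, mul_add, add_mul] at *
          linear_combination h + h'
        | single κ d' =>
          simp only [dd, mu_single, AddMonoidAlgebra.single_mul_single, add_comm κ β]
          rw [← AddMonoidAlgebra.single_add]
          congr 1
          simp only [map_add, AddMonoidHom.add_apply]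
          push_cast
          ring
    rw [h4] at h1
    simp only [Gam] at *
    rw [mul_assoc] at *
    linear_combination h1 - G * h3 - H * h2

lemma Gam_one_sub (β : Fin n → ℤ) (G : AddMonoidAlgebra ℂ (Fin n → ℤ)) :
    Gam D (1 - AddMonoidAlgebra.single (-β) 1) G = 2 * (AddMonoidAlgebra.single (-β) 1 * dd D β G) := by
  have h1 := Gam_single D (-β) 1 G
  have h2 := Gam_single D 0 1 G
  have h3 : dd D (-β) G = - dd D β G := by ext μ; simp [dd, mu_coeff]
  have h4 : dd D 0 G = 0 := by ext μ; simp [dd, mu_coeff]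
  rw [h3] at h1
  rw [h4, ← AddMonoidAlgebra.one_def] at h2
  simp only [Gam, Lap, mu_sub, sub_mul, one_mul] at *
  linear_combination h2 - h1

/-- The denominator `Z^κ ∏ (1 - Z^{-α})`. -/
def Del (κ : Fin n → ℤ) (S : Finset (Fin n → ℤ)) : AddMonoidAlgebra ℂ (Fin n → ℤ) :=
  AddMonoidAlgebra.single κ 1 * ∏ α ∈ S, (1 - AddMonoidAlgebra.single (-α) 1)

lemma Gam_Del (κ) (S : Finset (Fin n → ℤ)) (χ : AddMonoidAlgebra ℂ (Fin n → ℤ))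
    (N : (Fin n → ℤ) → AddMonoidAlgebra ℂ (Fin n → ℤ))
    (hN : ∀ α ∈ S, (1 - AddMonoidAlgebra.single (-α) 1) * N α = dd D α χ) :
    Gam D (Del κ S) χ = Del κ S * (2 * dd D κ χ + ∑ α ∈ S, 2 * (AddMonoidAlgebra.single (-α) 1 * N α)) := by
  induction S using Finset.induction_on with
  | empty =>
    simp only [Del, Finset.prod_empty, mul_one, Finset.sum_empty, add_zero]
    rw [Gam_single]
    ring
  | insert β S hβ ih =>
    have e : Del κ (insert β S) = (1 - AddMonoidAlgebra.single (-β) 1) * Del κ S := by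
      rw [Del, Finset.prod_insert hβ, Del]; ring
    rw [e, Gam_mul, ih (fun α hα => hN α (Finset.mem_insert_of_mem hα)), Gam_one_sub,
      ← hN β (Finset.mem_insert_self _ _), Finset.sum_insert hβ]
    ring

/-- Leading term `κ`. -/
def Low (A : Fin n → Fin n → ℤ) (κ : Fin n → ℤ) (F : AddMonoidAlgebra ℂ (Fin n → ℤ)) : Prop :=
  F.coeff κ = 1 ∧ ∀ ν, F.coeff ν ≠ 0 → ∃ k : Fin n → ℤ, (∀ i, 0 ≤ k i) ∧ ν = κ - q A k

include D in
lemma Low.mul {κ κ' F G} (hF : Low A κ F) (hG : Low A κ' G) : Low A (κ + κ') (F * G) := by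
  constructor
  · rw [AddMonoidAlgebra.coeff_mul_add_of_uniqueAdd, hF.1, hG.1, one_mul]
    intro a b ha hb hab
    obtain ⟨k, hk, rfl⟩ := hF.2 a (Finsupp.mem_support_iff.mp ha)
    obtain ⟨l, hl, rfl⟩ := hG.2 b (Finsupp.mem_support_iff.mp hb)
    have h1 : q A (k + l) = q A 0 := by
      rw [q_add, q_zero]
      have : κ - q A k + (κ' - q A l) = (κ + κ') - (q A k + q A l) := by abel
      rw [this, sub_eq_self] at hab
      exact hab
    have h2 := D.q_inj h1
    have hk0 : k = 0 := by
      ext i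
      have := congrFun h2 i
      have := hk i
      have := hl i
      simp only [Pi.add_apply, Pi.zero_apply] at *
      omega
    have hl0 : l = 0 := by rw [hk0, zero_add] at h2; exact h2
    simp [hk0, hl0, q_zero]
  · intro ν hν
    have : ∃ a b, F.coeff a ≠ 0 ∧ G.coeff b ≠ 0 ∧ a + b = ν := by
      by_contra hcon
      push Not at hcon
      apply hν
      rw [AddMonoidAlgebra.coeff_mul]
      refine Finset.sum_eq_zero fun a ha => Finset.sum_eq_zero fun b hb => ?_
      exact if_neg (hcon a b (Finsupp.mem_support_iff.mp ha) (Finsupp.mem_support_iff.mp hb))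
    obtain ⟨a, b, ha, hb, rfl⟩ := this
    obtain ⟨k, hk, rfl⟩ := hF.2 a ha
    obtain ⟨l, hl, rfl⟩ := hG.2 b hb
    exact ⟨k + l, fun i => add_nonneg (hk i) (hl i), by rw [q_add]; abel⟩

lemma Low.single (A : Fin n → Fin n → ℤ) (κ) : Low A κ (AddMonoidAlgebra.single κ 1) := by
  constructor
  · simp
  · intro ν hν
    rw [AddMonoidAlgebra.coeff_single, Finsupp.single_apply] at hν
    have : κ = ν := by by_contra h; simp [h] at hν
    exact ⟨0, fun _ => le_rfl, by simp [q_zero, this]⟩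

lemma Low.one_sub {α} (hα : α ∈ D.Rp) : Low A 0 (1 - AddMonoidAlgebra.single (-α) 1) := by
  have hα0 : α ≠ 0 := fun h => D.zero_notMem (h ▸ D.Rp_sub hα)
  constructor
  · rw [AddMonoidAlgebra.one_def]
    simp [AddMonoidAlgebra.coeff_single, Finsupp.single_apply, hα0]
  · intro ν hν
    rw [AddMonoidAlgebra.one_def, AddMonoidAlgebra.coeff_sub, Finsupp.sub_apply,
      AddMonoidAlgebra.coeff_single, Finsupp.single_apply, AddMonoidAlgebra.coeff_single, Finsupp.single_apply] at hν
    by_cases h0 : (0 : Fin n → ℤ) = ν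
    · exact ⟨0, fun _ => le_rfl, by rw [q_zero, sub_zero, h0]⟩
    · obtain ⟨-, k, hk, rfl⟩ := D.mem_Rp.mp hα
      refine ⟨k, hk, ?_⟩
      by_contra h1
      rw [zero_sub] at h1
      rw [if_neg h0, if_neg (fun h => h1 h.symm), sub_zero] at hν
      exact hν rfl

lemma Low.Del (κ) {S} (hS : S ⊆ D.Rp) : Low A κ (Del κ S) := by
  rw [WCF.Del]
  have : Low A 0 (∏ α ∈ S, (1 - AddMonoidAlgebra.single (-α) 1)) := by
    induction S using Finset.induction_on with
    | empty => simpa [AddMonoidAlgebra.one_def] using Low.single A 0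
    | insert β S hβ ih =>
      rw [Finset.prod_insert hβ]
      simpa using Low.mul D (Low.one_sub D (hS (Finset.mem_insert_self _ _)))
        (ih (fun a ha => hS (Finset.mem_insert_of_mem ha)))
  simpa using Low.mul D (Low.single A κ) this

/-- The reflection as an additive map. -/
def rf (A : Fin n → Fin n → ℤ) (i : Fin n) : (Fin n → ℤ) →+ (Fin n → ℤ) where
  toFun μ := μ - μ i • A i
  map_zero' := by simp
  map_add' μ ν := by rw [Pi.add_apply, add_smul]; abel

/-- The reflection on the group algebra. -/
def sg (A : Fin n → Fin n → ℤ) (i : Fin n) :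
    AddMonoidAlgebra ℂ (Fin n → ℤ) →+* AddMonoidAlgebra ℂ (Fin n → ℤ) :=
  AddMonoidAlgebra.mapDomainRingHom ℂ (rf A i)

lemma sg_single (i) (μ : Fin n → ℤ) (c : ℂ) :
    sg A i (AddMonoidAlgebra.single μ c) = AddMonoidAlgebra.single (μ - μ i • A i) c := by
  simp [sg, rf]

include D in
lemma sg_coeff (i) (F : AddMonoidAlgebra ℂ (Fin n → ℤ)) (μ : Fin n → ℤ) :
    (sg A i F).coeff (μ - μ i • A i) = F.coeff μ := by
  induction F using AddMonoidAlgebra.induction_linear with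
  | zero => simp
  | add F G hF hG => rw [map_add, AddMonoidAlgebra.coeff_add, Finsupp.add_apply, hF, hG]; rfl
  | single ν c =>
    rw [sg_single, AddMonoidAlgebra.coeff_single, Finsupp.single_apply, AddMonoidAlgebra.coeff_single, Finsupp.single_apply]
    congr 1
    refine propext ⟨fun h => ?_, fun h => by rw [h]⟩
    rw [← D.refl_refl ν i, h, D.refl_refl]

include D in
lemma skew_of_sg {F : AddMonoidAlgebra ℂ (Fin n → ℤ)} (h : ∀ i, sg A i F = -F) : RD.Skew A F := by
  intro i μ
  have h1 := sg_coeff D i F μ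
  rw [h i] at h1
  rw [← h1]
  simp

lemma sg_Del (i) : sg A i (Del (fun _ => 1) D.Rp) = - Del (fun _ => 1) D.Rp := by
  rw [Del, map_mul, sg_single, map_prod, ← Finset.mul_prod_erase _ _ (D.simple_mem_Rp i),
    ← Finset.mul_prod_erase _ _ (D.simple_mem_Rp i)]
  have h1 : ∏ α ∈ D.Rp.erase (A i), sg A i (1 - AddMonoidAlgebra.single (-α) 1) =
      ∏ α ∈ D.Rp.erase (A i), (1 - AddMonoidAlgebra.single (-α) 1) := by
    refine Finset.prod_nbij' (fun α => α - α i • A i) (fun α => α - α i • A i) ?_ ?_ ?_ ?_ ?_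
    · intro α hα
      obtain ⟨h1, h2⟩ := Finset.mem_erase.mp hα
      exact Finset.mem_erase.mpr ⟨D.refl_ne h2 i, D.refl_pos h2 h1⟩
    · intro α hα
      obtain ⟨h1, h2⟩ := Finset.mem_erase.mp hα
      exact Finset.mem_erase.mpr ⟨D.refl_ne h2 i, D.refl_pos h2 h1⟩
    · intro α _; exact D.refl_refl α i
    · intro α _; exact D.refl_refl α i
    · intro α _
      rw [map_sub, map_one, sg_single]
      congr 2
      rw [Pi.neg_apply, neg_smul]; abel
  rw [h1, map_sub, map_one, sg_single]
  have h2 : -A i - (-A i) i • A i = A i := by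
    rw [Pi.neg_apply, D.diag, neg_smul, two_smul]; abel
  rw [h2, one_smul]
  have h3 : (AddMonoidAlgebra.single ((fun _ => 1) - A i) 1 : AddMonoidAlgebra ℂ (Fin n → ℤ)) =
      AddMonoidAlgebra.single (fun _ => 1) 1 * AddMonoidAlgebra.single (-A i) 1 := by
    rw [AddMonoidAlgebra.single_mul_single, mul_one, sub_eq_add_neg]
  have h4 : (AddMonoidAlgebra.single (-A i) 1 * AddMonoidAlgebra.single (A i) 1 : AddMonoidAlgebra ℂ (Fin n → ℤ)) = 1 := by
    rw [AddMonoidAlgebra.single_mul_single, mul_one, neg_add_cancel]; rfl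
  rw [h3]
  linear_combination (- AddMonoidAlgebra.single (fun _ => 1) 1 *
    ∏ α ∈ D.Rp.erase (A i), (1 - AddMonoidAlgebra.single (-α) 1)) * h4

lemma Del_eq : Del (fun _ => 1) D.Rp = D.altC (fun _ => 1) := by
  have hl := Low.Del D (fun _ => 1) (Finset.Subset.refl D.Rp)
  refine D.eq_altC (skew_of_sg D (sg_Del D)) (fun _ => one_pos) hl.1 ?_
  intro μ hμ hne
  obtain ⟨k, hk, hk2⟩ := hl.2 μ hne
  by_contra hcon
  have h1 : q A k ≠ 0 := by
    intro h; rw [h, sub_zero] at hk2; exact hcon hk2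
  have h2 := D.B_q_nonneg (μ := - q A k) (k := k) (fun i => by
    have h3 := hμ i
    rw [hk2] at h3
    simp only [Pi.sub_apply, Pi.neg_apply] at *
    omega) hk
  have h3 := D.pos _ h1
  simp only [map_neg, AddMonoidHom.neg_apply] at h2
  linarith

lemma Lap_altC (κ) : Lap D (D.altC κ) = AddMonoidAlgebra.single 0 ((D.B κ κ : ℝ) : ℂ) * D.altC κ := by
  ext μ
  rw [Lap, mu_coeff, AddMonoidAlgebra.coeff_single_mul_apply, neg_zero, zero_add]
  by_cases h : (D.altC κ).coeff μ = 0
  · simp [h]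
  · congr 2
    have : ∃ w ∈ D.fin.toFinset, w *ᵥ κ = μ := by
      by_contra hcon
      push Not at hcon
      apply h
      rw [RD.altC_coeff]
      exact Finset.sum_eq_zero fun w hw => if_neg (hcon w hw)
    obtain ⟨w, hw, rfl⟩ := this
    exact D.B_W (D.fin.mem_toFinset.mp hw) _ _

/-- The formal Weyl character formula. -/
lemma formal {lam : Fin n → ℤ} {χ : AddMonoidAlgebra ℂ (Fin n → ℤ)} (hdom : ∀ i, 0 ≤ lam i)
    (hlow : Low A lam χ) (hsym : ∀ i, sg A i χ = χ)
    (N : (Fin n → ℤ) → AddMonoidAlgebra ℂ (Fin n → ℤ))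
    (hN : ∀ α ∈ D.Rp, (1 - AddMonoidAlgebra.single (-α) 1) * N α = dd D α χ)
    (hOm : Lap D χ + ∑ α ∈ D.Rp, (1 + AddMonoidAlgebra.single (-α) 1) * N α =
      AddMonoidAlgebra.single 0 ((D.B lam lam + D.B lam (fun _ => 2) : ℝ) : ℂ) * χ) :
    D.altC (fun _ => 1) * χ = D.altC (fun i => lam i + 1) := by
  set r : Fin n → ℤ := fun _ => 1 with hr
  have hρ : (fun i => lam i + 1) = lam + r := rfl
  have hr2 : (fun _ => 2 : Fin n → ℤ) = r + r := rfl
  have hρd : ∀ i, 0 < (r + lam) i := fun i => by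
    have := hdom i
    simp only [Pi.add_apply, hr]; omega
  set Δ := D.altC r with hΔ
  have hΔ' : Del r D.Rp = Δ := Del_eq D
  have h1 := Gam_Del D r D.Rp χ N hN
  have h2 : 2 * dd D r χ = ∑ α ∈ D.Rp, (1 - AddMonoidAlgebra.single (-α) 1) * N α := by
    rw [Finset.sum_congr rfl hN]
    simp only [dd]
    rw [← mu_sum, two_mul, ← mu_funadd]
    congr 1
    ext μ
    rw [← Complex.ofReal_sum, ← map_sum, D.sum_Rp, hr2, map_add, Complex.ofReal_add]
  rw [h2, ← Finset.sum_add_distrib, hΔ'] at h1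
  have h3 : ∑ α ∈ D.Rp, ((1 - AddMonoidAlgebra.single (-α) 1) * N α + 2 * (AddMonoidAlgebra.single (-α) 1 * N α)) =
      ∑ α ∈ D.Rp, (1 + AddMonoidAlgebra.single (-α) 1) * N α :=
    Finset.sum_congr rfl fun α _ => by ring
  rw [h3] at h1
  have h4 := Lap_altC D r
  have h5 : Lap D (Δ * χ) = AddMonoidAlgebra.single 0 ((D.B (r + lam) (r + lam) : ℝ) : ℂ) * (Δ * χ) := by
    have e : (AddMonoidAlgebra.single 0 ((D.B (r + lam) (r + lam) : ℝ) : ℂ) : AddMonoidAlgebra ℂ (Fin n → ℤ)) =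
        AddMonoidAlgebra.single 0 ((D.B lam lam + D.B lam (fun _ => 2) : ℝ) : ℂ) +
        AddMonoidAlgebra.single 0 ((D.B r r : ℝ) : ℂ) := by
      rw [← AddMonoidAlgebra.single_add]
      congr 1
      rw [hr2]
      simp only [map_add, AddMonoidHom.add_apply, D.symm r lam]
      push_cast
      ring
    rw [Gam] at h1
    rw [e]
    linear_combination h1 + Δ * hOm + χ * h4
  have hl : Low A (r + lam) (Δ * χ) := by
    refine Low.mul D ?_ hlow
    rw [← hΔ']
    exact Low.Del D r (Finset.Subset.refl _)
  have hsk : RD.Skew A (Δ * χ) := by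
    refine skew_of_sg D fun i => ?_
    rw [map_mul, hsym, ← hΔ', sg_Del, neg_mul]
  rw [hρ, add_comm lam]
  refine D.eq_altC hsk hρd hl.1 ?_
  intro μ hμ hne
  obtain ⟨k, hk, hk2⟩ := hl.2 μ hne
  have h6 := congrArg (fun F => F.coeff μ) h5
  simp only [Lap, mu_coeff, AddMonoidAlgebra.coeff_single_mul_apply, neg_zero, zero_add] at h6
  have h7 := mul_right_cancel₀ hne h6
  have h8 : D.B μ μ = D.B (r + lam) (r + lam) := by exact_mod_cast h7
  by_contra hcon
  have hk0 : k ≠ 0 := by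
    intro h; rw [h, q_zero, sub_zero] at hk2; exact hcon hk2
  have h9 := D.B_q_pos hμ hk hk0
  have h10 := D.B_q_pos hρd hk hk0
  have h11 : r + lam = μ + q A k := by rw [hk2]; abel
  rw [h11] at h8 h10
  simp only [map_add, AddMonoidHom.add_apply, D.symm (q A k) μ] at h8 h10
  linarith

end
end WCF

namespace WCF
open Matrix

namespace WM

variable {n : ℕ} {A : Fin n → Fin n → ℤ} {ι V : Type*} [AddCommGroup V] [Module ℂ V] [Fintype ι]
  (M : WM A ι V)

/-- The trace character of an operator. -/
def ch (a : Module.End ℂ V) : AddMonoidAlgebra ℂ (Fin n → ℤ) :=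
  ∑ k, AddMonoidAlgebra.single (M.wt k) (M.b.repr (a (M.b k)) k)

lemma ch_add (a c : Module.End ℂ V) : M.ch (a + c) = M.ch a + M.ch c := by
  simp [ch, AddMonoidAlgebra.single_add, Finset.sum_add_distrib]

lemma ch_sub (a c : Module.End ℂ V) : M.ch (a - c) = M.ch a - M.ch c := by
  simp [ch, AddMonoidAlgebra.single_sub, Finset.sum_sub_distrib]

lemma ch_zero : M.ch 0 = 0 := by simp [ch]

lemma ch_sum {κ : Type*} (s : Finset κ) (a : κ → Module.End ℂ V) : M.ch (∑ i ∈ s, a i) = ∑ i ∈ s, M.ch (a i) := by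
  induction s using Finset.induction_on with
  | empty => simp [ch_zero]
  | insert i s hi ih => rw [Finset.sum_insert hi, ch_add, ih, Finset.sum_insert hi]

lemma ch_smul (c : ℂ) (a : Module.End ℂ V) : M.ch (c • a) = AddMonoidAlgebra.single 0 c * M.ch a := by
  simp [ch, Finset.mul_sum, AddMonoidAlgebra.single_mul_single]

lemma ch_dg (φ) : M.ch (M.dg φ) = mu φ (M.ch 1) := by
  ext μ
  rw [mu_coeff]
  simp only [ch, AddMonoidAlgebra.coeff_sum, Finsupp.finsetSum_apply, Finset.mul_sum]
  refine Finset.sum_congr rfl fun k _ => ?_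
  rw [M.dg_b]
  simp only [AddMonoidAlgebra.coeff_single, Finsupp.single_apply, map_smul, Finsupp.smul_apply,
    Module.End.one_apply]
  split_ifs with h
  · rw [h]; rfl
  · simp

lemma ch_one : M.ch 1 = ∑ k, AddMonoidAlgebra.single (M.wt k) 1 := by
  simp [ch]

lemma HasWt.entry {M : WM A ι V} {a : Module.End ℂ V} {β} (ha : M.HasWt a β) {k l}
    (h : M.b.repr (a (M.b l)) k ≠ 0) : M.wt k = M.wt l + β := by
  have h1 := ha.isWt (M.isWt_b l) (fun μ => if μ = M.wt k then 1 else 0)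
  have h2 := congrArg (fun v => M.b.repr v k) h1
  simp only [dg_repr, map_smul, Finsupp.smul_apply, if_true, one_mul, smul_eq_mul] at h2
  by_contra hne
  rw [if_neg (Ne.symm hne), zero_mul] at h2
  exact h h2

lemma repr_mul (a c : Module.End ℂ V) (k l) :
    M.b.repr ((a * c) (M.b k)) l = ∑ m, M.b.repr (c (M.b k)) m * M.b.repr (a (M.b m)) l := by
  rw [Module.End.mul_apply]
  conv_lhs => rw [← M.b.sum_repr (c (M.b k)), map_sum, map_sum, Finsupp.finsetSum_apply]
  refine Finset.sum_congr rfl fun m _ => ?_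
  rw [map_smul, map_smul, Finsupp.smul_apply, smul_eq_mul]

lemma ch_mul {M : WM A ι V} {a c : Module.End ℂ V} {β} (ha : M.HasWt a β) :
    M.ch (a * c) = AddMonoidAlgebra.single β 1 * M.ch (c * a) := by
  simp only [ch, repr_mul, Finset.mul_sum]
  have hs : ∀ (μ : Fin n → ℤ) (g : ι → ℂ), AddMonoidAlgebra.single μ (∑ m, g m) =
      ∑ m, (AddMonoidAlgebra.single μ (g m) : AddMonoidAlgebra ℂ (Fin n → ℤ)) := by
    intro μ g
    exact map_sum (AddMonoidAlgebra.singleAddHom μ) g Finset.univ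
  simp only [hs, Finset.mul_sum, AddMonoidAlgebra.single_mul_single, one_mul]
  rw [Finset.sum_comm]
  refine Finset.sum_congr rfl fun m _ => Finset.sum_congr rfl fun k _ => ?_
  by_cases h : M.b.repr (a (M.b m)) k = 0
  · simp [h]
  · rw [ha.entry h, add_comm β, mul_comm]

lemma ch_sym (D : RD A) (i : Fin n) : sg A i (M.ch 1) = M.ch 1 := by
  obtain ⟨T, T', h1, h2, h3, -⟩ := M.exists_T D i
  have key : ∀ φ, M.dg φ = T * (M.dg (fun μ => φ (μ - μ i • A i)) * T') := by
    intro φ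
    rw [← mul_assoc, ← h3, mul_assoc, h1, mul_one]
  have tr : ∀ φ, LinearMap.trace ℂ V (M.dg φ) = ∑ k, φ (M.wt k) := by
    intro φ
    rw [LinearMap.trace_eq_matrix_trace ℂ M.b, Matrix.trace]
    refine Finset.sum_congr rfl fun k _ => ?_
    rw [Matrix.diag_apply, LinearMap.toMatrix_apply, M.dg_b]
    simp
  have tr2 : ∀ φ : (Fin n → ℤ) → ℂ, ∑ k, φ (M.wt k) = ∑ k, φ (M.wt k - M.wt k i • A i) := by
    intro φ
    rw [← tr, key, LinearMap.trace_mul_comm, mul_assoc, h2, mul_one, tr]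
  ext μ
  have h4 := sg_coeff D i (M.ch 1) (μ - μ i • A i)
  rw [D.refl_refl] at h4
  rw [h4, ch_one, AddMonoidAlgebra.coeff_sum, Finsupp.finsetSum_apply, Finsupp.finsetSum_apply]
  simp only [AddMonoidAlgebra.coeff_single, Finsupp.single_apply]
  rw [tr2 (fun ν => if ν = μ then 1 else 0)]
  refine Finset.sum_congr rfl fun k _ => ?_
  congr 1
  refine propext ⟨fun h => ?_, fun h => ?_⟩
  · rw [h, D.refl_refl]
  · rw [← h, D.refl_refl]

variable {M}

/-- The Weyl character formula for cyclic highest weight modules. -/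
theorem HW.weyl (D : RD A) {v0 : V} {lam : Fin n → ℤ} (H : HW M v0 lam) :
    D.altC (fun _ => 1) * M.ch 1 = D.altC (fun i => lam i + 1) := by
  have hex : ∀ α : Fin n → ℤ, ∃ e f, α ∈ D.Rp → EF D M α e f := by
    intro α
    by_cases hα : α ∈ D.Rp
    · obtain ⟨e, f, h⟩ := exists_EF (M := M) D (D.Rp_sub hα)
      exact ⟨e, f, fun _ => h⟩
    · exact ⟨0, 0, fun h => (hα h).elim⟩
  choose e f hE using hex
  have hOm := congrArg M.ch (H.Om_eq D hE)
  rw [Om, ch_add, ch_dg, ch_sum, ch_smul] at hOm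
  have hfe : ∀ α ∈ D.Rp, M.ch (f α * e α) = AddMonoidAlgebra.single (-α) 1 * M.ch (e α * f α) :=
    fun α hα => ch_mul (hE α hα).fwt
  refine formal D (H.dom D) ?_ (M.ch_sym D)
    (fun α => AddMonoidAlgebra.single 0 ((D.B α α / 2 : ℝ) : ℂ) * M.ch (e α * f α)) ?_ ?_
  · obtain ⟨k, hk, hk2⟩ := H.top D
    rw [ch_one]
    simp only [Low, AddMonoidAlgebra.coeff_sum, Finsupp.finsetSum_apply, AddMonoidAlgebra.coeff_single,
      Finsupp.single_apply]
    constructor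
    · rw [Finset.sum_eq_single k, if_pos hk]
      · intro l _ hl
        exact if_neg fun h => hl (hk2 l h)
      · intro h; exact (h (Finset.mem_univ _)).elim
    · intro ν hν
      obtain ⟨l, -, hl⟩ := Finset.exists_ne_zero_of_sum_ne_zero hν
      have : M.wt l = ν := by by_contra h; simp [h] at hl
      rw [← this]
      exact H.wt_le l
  · intro α hα
    have h1 := congrArg M.ch (hE α hα).ef
    rw [ch_sub, hfe α hα, ch_dg] at h1
    have h2 : dd D α (M.ch 1) = AddMonoidAlgebra.single 0 ((D.B α α / 2 : ℝ) : ℂ) *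
        mu (fun μ => ((2 * D.B μ α / D.B α α : ℝ) : ℂ)) (M.ch 1) := by
      ext μ
      rw [AddMonoidAlgebra.coeff_single_mul_apply, dd, mu_coeff, mu_coeff, neg_zero, zero_add, ← mul_assoc]
      congr 1
      norm_cast
      have : D.B α α ≠ 0 := (D.pos _ (fun h => D.zero_notMem (h ▸ D.Rp_sub hα))).ne'
      field_simp
    rw [h2, ← h1]
    ring
  · rw [← hOm, Lap]
    congr 1
    refine Finset.sum_congr rfl fun α hα => ?_
    rw [ch_smul, ch_add, hfe α hα]
    ring

end WM

/-- Any finite dimensional cyclic highest weight module has a character determined by the Weyl formula. -/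
lemma exists_char {n : ℕ} {A : Fin n → Fin n → ℤ} (D : RD A) {V : Type*} [AddCommGroup V] [Module ℂ V]
    [FiniteDimensional ℂ V] {x y h : Fin n → Module.End ℂ V} {v0 : V} {lam : Fin n → ℤ}
    (hxy : ∀ i j, x i * y j - y j * x i = if i = j then h i else 0)
    (hx : ∀ i j, h i * x j - x j * h i = (A j i : ℂ) • x j)
    (hy : ∀ i j, h i * y j - y j * h i = -((A j i : ℂ) • y j))
    (hne : v0 ≠ 0)
    (h0 : ∀ i, h i v0 = (lam i : ℂ) • v0) (hx0 : ∀ i, x i v0 = 0)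
    (cyc : ∀ U : Submodule ℂ V, (∀ i, ∀ v ∈ U, x i v ∈ U ∧ y i v ∈ U ∧ h i v ∈ U) → v0 ∈ U → U = ⊤) :
    ∃ wt : Fin (Module.finrank ℂ V) → (Fin n → ℤ),
      D.altC (fun _ => 1) * ∑ k, AddMonoidAlgebra.single (wt k) 1 = D.altC (fun i => lam i + 1) := by
  obtain ⟨M, rfl, rfl, rfl⟩ := exists_WM hxy hx hy h0 hx0 cyc
  refine ⟨M.wt, ?_⟩
  rw [← M.ch_one]
  exact WM.HW.weyl D ⟨hne, h0, hx0, cyc⟩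

/-- The Weyl formula determines the dimension. -/
lemma dim_unique {n : ℕ} {A : Fin n → Fin n → ℤ} (D : RD A) {ι κ : Type*} [Fintype ι] [Fintype κ]
    (w : ι → (Fin n → ℤ)) (w' : κ → (Fin n → ℤ))
    (h : D.altC (fun _ => 1) * ∑ k, AddMonoidAlgebra.single (w k) 1 =
      D.altC (fun _ => 1) * ∑ k, AddMonoidAlgebra.single (w' k) 1) : Fintype.card ι = Fintype.card κ := by
  have hne : D.altC (fun _ => 1) ≠ 0 := by
    intro h0
    have := D.altC_dom (κ := fun _ => 1) (μ := fun _ => 1) (fun _ => one_pos) (fun _ => one_pos)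
    rw [h0] at this
    simp at this
  have h1 := mul_left_cancel₀ hne h
  have h2 := congrArg (AddMonoidAlgebra.lift ℂ ℂ (Fin n → ℤ) (1 : Multiplicative (Fin n → ℤ) →* ℂ)) h1
  simp only [map_sum, AddMonoidAlgebra.lift_single] at h2
  simp at h2
  exact_mod_cast h2

end WCF

namespace WCF

open Matrix

/-- Irreducibility is equivalent to the Weyl formula. -/
theorem irr_iff {n : ℕ} {A : Fin n → Fin n → ℤ} (D : RD A) {ι V : Type*} [Fintype ι] [AddCommGroup V]
    [Module ℂ V] (M : WM A ι V) {v0 : V} {lam : Fin n → ℤ} (hne : v0 ≠ 0)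
    (h0 : ∀ i, M.h i v0 = (lam i : ℂ) • v0) (hx0 : ∀ i, M.x i v0 = 0) :
    (∀ U : Submodule ℂ V, (∀ i, ∀ v ∈ U, M.x i v ∈ U ∧ M.y i v ∈ U ∧ M.h i v ∈ U) → U = ⊥ ∨ U = ⊤) ↔
      D.altC (fun _ => 1) * ∑ k, AddMonoidAlgebra.single (M.wt k) 1 = D.altC (fun i => lam i + 1) := by
  have : FiniteDimensional ℂ V := Module.Finite.of_basis M.b
  constructor
  · intro hirr
    rw [← M.ch_one]
    refine WM.HW.weyl D ⟨hne, h0, hx0, fun U hU hv => (hirr U hU).resolve_left ?_⟩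
    rintro rfl
    exact hne ((Submodule.mem_bot ℂ).1 hv)
  · intro hW
    have hcard : Module.finrank ℂ V = Fintype.card ι := Module.finrank_eq_card_basis M.b
    have cyc : ∀ U : Submodule ℂ V, (∀ i, ∀ v ∈ U, M.x i v ∈ U ∧ M.y i v ∈ U ∧ M.h i v ∈ U) →
        v0 ∈ U → U = ⊤ := by
      let U0 : Submodule ℂ V := sInf {U | (∀ i, ∀ v ∈ U, M.x i v ∈ U ∧ M.y i v ∈ U ∧ M.h i v ∈ U) ∧ v0 ∈ U}
      have hU0 : ∀ i, ∀ v ∈ U0, M.x i v ∈ U0 ∧ M.y i v ∈ U0 ∧ M.h i v ∈ U0 := by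
        intro i v hv
        simp only [U0, Submodule.mem_sInf] at hv ⊢
        exact ⟨fun p hp => (hp.1 i v (hv p hp)).1, fun p hp => (hp.1 i v (hv p hp)).2.1,
          fun p hp => (hp.1 i v (hv p hp)).2.2⟩
      have hv0 : v0 ∈ U0 := by
        simp only [U0, Submodule.mem_sInf]
        exact fun p hp => hp.2
      have hle : ∀ U : Submodule ℂ V, (∀ i, ∀ v ∈ U, M.x i v ∈ U ∧ M.y i v ∈ U ∧ M.h i v ∈ U) →
        v0 ∈ U → U0 ≤ U := fun U h1 h2 => sInf_le ⟨h1, h2⟩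
      have htop : U0 = ⊤ := by
        let x : Fin n → Module.End ℂ U0 := fun i => (M.x i).restrict fun v hv => (hU0 i v hv).1
        let y : Fin n → Module.End ℂ U0 := fun i => (M.y i).restrict fun v hv => (hU0 i v hv).2.1
        let h : Fin n → Module.End ℂ U0 := fun i => (M.h i).restrict fun v hv => (hU0 i v hv).2.2
        obtain ⟨wt, hwt⟩ := exists_char D (x := x) (y := y) (h := h) (v0 := ⟨v0, hv0⟩) (lam := lam)
          (by
            intro i j
            ext v
            have := LinearMap.congr_fun (M.xy i j) v
            by_cases hij : i = j
            · subst hij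
              simpa [x, y, h] using this
            · simpa [x, y, h, hij] using this)
          (by
            intro i j
            ext v
            have := LinearMap.congr_fun (M.hx i j) v
            simpa [x, y, h] using this)
          (by
            intro i j
            ext v
            have := LinearMap.congr_fun (M.hy i j) v
            simpa [x, y, h] using this)
          (by
            intro h
            exact hne (congrArg Subtype.val h))
          (by
            intro i
            ext
            simpa [h] using h0 i)
          (by
            intro i
            ext
            simpa [x] using hx0 i)
          (by
            intro U hU hv
            have h1 := hle (U.map U0.subtype) (by
              rintro i _ ⟨v, hv, rfl⟩
              obtain ⟨a, b, c⟩ := hU i v hv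
              exact ⟨⟨_, a, rfl⟩, ⟨_, b, rfl⟩, ⟨_, c, rfl⟩⟩) ⟨_, hv, rfl⟩
            rw [eq_top_iff]
            rintro ⟨v, hv⟩ -
            obtain ⟨w, hw, hwv⟩ := h1 hv
            have : w = ⟨v, hv⟩ := Subtype.ext hwv
            exact this ▸ hw)
        have hc := dim_unique D _ _ (hwt.trans hW.symm)
        rw [Fintype.card_fin, ← hcard] at hc
        exact Submodule.eq_top_of_finrank_eq hc
      intro U h1 h2
      rw [eq_top_iff, ← htop]
      exact hle U h1 h2
    intro U hU
    by_cases hUt : U = ⊤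
    · exact Or.inr hUt
    left
    have hv0 : v0 ∉ U := fun h => hUt (cyc U hU h)
    let x : Fin n → Module.End ℂ (V ⧸ U) := fun i => U.mapQ U (M.x i) fun v hv => (hU i v hv).1
    let y : Fin n → Module.End ℂ (V ⧸ U) := fun i => U.mapQ U (M.y i) fun v hv => (hU i v hv).2.1
    let h : Fin n → Module.End ℂ (V ⧸ U) := fun i => U.mapQ U (M.h i) fun v hv => (hU i v hv).2.2
    obtain ⟨wt, hwt⟩ := exists_char D (x := x) (y := y) (h := h) (v0 := U.mkQ v0) (lam := lam)
      (by
        intro i j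
        refine Submodule.linearMap_qext _ (LinearMap.ext fun v => ?_)
        have := congrArg U.mkQ (LinearMap.congr_fun (M.xy i j) v)
        by_cases hij : i = j
        · subst hij
          simpa [x, y, h] using this
        · simpa [x, y, h, hij] using this)
      (by
        intro i j
        refine Submodule.linearMap_qext _ (LinearMap.ext fun v => ?_)
        have := congrArg U.mkQ (LinearMap.congr_fun (M.hx i j) v)
        simpa [x, y, h] using this)
      (by
        intro i j
        refine Submodule.linearMap_qext _ (LinearMap.ext fun v => ?_)
        have := congrArg U.mkQ (LinearMap.congr_fun (M.hy i j) v)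
        simpa [x, y, h] using this)
      (by
        intro h
        rw [Submodule.mkQ_apply, Submodule.Quotient.mk_eq_zero] at h
        exact hv0 h)
      (by
        intro i
        have := congrArg U.mkQ (h0 i)
        simpa [h] using this)
      (by
        intro i
        have := congrArg U.mkQ (hx0 i)
        simpa [x] using this)
      (by
        intro W hW hv
        have h1 := cyc (W.comap U.mkQ) (fun i v hv => hW i _ hv) hv
        rw [eq_top_iff]
        intro w _
        obtain ⟨v, rfl⟩ := U.mkQ_surjective w
        have : v ∈ W.comap U.mkQ := h1 ▸ Submodule.mem_top
        exact this)
    have hc := dim_unique D _ _ (hwt.trans hW.symm)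
    rw [Fintype.card_fin, ← hcard] at hc
    have := U.finrank_quotient_add_finrank
    exact Submodule.finrank_eq_zero.1 (by omega)

section VL

variable {n : ℕ} {A : Fin n → Fin n → ℤ} {L : Type} [Fintype L] [Lattice L] [IsModularLattice L]
  {γ : L → L → Fin n} {ρ : L → ℕ} {X Y : L → L → ℂ}

omit [IsModularLattice L] in
lemma opX_apply (i : Fin n) (v : L → ℂ) (t : L) :
    EL.opX γ X i v t = ∑ r, (if EL.ced γ i r t then X r t else 0) * v r := rfl

omit [IsModularLattice L] in
lemma opY_apply (i : Fin n) (v : L → ℂ) (t : L) :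
    EL.opY γ Y i v t = ∑ r, (if EL.ced γ i t r then Y t r else 0) * v r := rfl

omit [IsModularLattice L] in
lemma opH_apply (i : Fin n) (v : L → ℂ) (t : L) :
    EL.opH γ ρ i v t = ((EL.mwt γ ρ i t : ℤ) : ℂ) * v t := by
  rw [EL.opH, Matrix.mulVecLin_apply, Matrix.mulVec_diagonal]

lemma ite_mul_ite (P Q : Prop) (a b : ℂ) :
    (if P then a else 0) * (if Q then b else 0) = if P ∧ Q then a * b else 0 := by
  by_cases hP : P <;> by_cases hQ : Q <;> simp [hP, hQ]

omit [Fintype L] [IsModularLattice L] in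
lemma sup_eq_of_covBy {s t u : L} (h1 : s ⋖ u) (h2 : t ⋖ u) (hne : s ≠ t) : s ⊔ t = u := by
  rcases h1.eq_or_eq (c := s ⊔ t) le_sup_left (sup_le h1.le h2.le) with h | h
  · rcases h2.eq_or_eq (c := s) (by rw [← h]; exact le_sup_right) h1.le with h' | h'
    · exact (hne h').elim
    · exact (h1.ne h').elim
  · exact h

omit [Fintype L] [IsModularLattice L] in
lemma inf_eq_of_covBy {q s t : L} (h1 : q ⋖ s) (h2 : q ⋖ t) (hne : s ≠ t) : s ⊓ t = q := by
  rcases h1.eq_or_eq (c := s ⊓ t) (le_inf h1.le h2.le) inf_le_left with h | h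
  · exact h
  · rcases h2.eq_or_eq (c := s) h1.le (by rw [← h]; exact inf_le_right) with h' | h'
    · exact (h1.ne h'.symm).elim
    · exact (hne h').elim

lemma VL_xy
    (hdc : ∀ q r s t : L, q ⋖ r → q ⋖ s → r ⋖ t → s ⋖ t → r ≠ s →
      γ q r = γ s t ∧ γ q s = γ r t)
    (hdiam : ∀ q r s t : L, q ⋖ r → q ⋖ s → r ⋖ t → s ⋖ t → r ≠ s →
      Y s t * X r t = X q s * Y q r)
    (hcross : ∀ (i : Fin n) (t : L), ((EL.mwt γ ρ i t : ℤ) : ℂ) =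
      (∑ q : L, if EL.ced γ i q t then X q t * Y q t else 0) -
      (∑ s : L, if EL.ced γ i t s then X t s * Y t s else 0)) (i j : Fin n) :
    EL.opX γ X i * EL.opY γ Y j - EL.opY γ Y j * EL.opX γ X i =
      if i = j then EL.opH γ ρ i else 0 := by
  have key : ((Matrix.of fun s r => if EL.ced γ i r s then X r s else 0) *
      (Matrix.of fun r s => if EL.ced γ j r s then Y r s else 0) -
      (Matrix.of fun r s => if EL.ced γ j r s then Y r s else 0) *
      (Matrix.of fun s r => if EL.ced γ i r s then X r s else 0) : Matrix L L ℂ) =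
      if i = j then Matrix.diagonal fun t => ((EL.mwt γ ρ i t : ℤ) : ℂ) else 0 := by
    ext t s
    rw [Matrix.sub_apply, Matrix.mul_apply, Matrix.mul_apply]
    simp only [Matrix.of_apply]
    by_cases hts : t = s
    · subst hts
      by_cases hij : i = j
      · subst hij
        rw [if_pos rfl, Matrix.diagonal_apply_eq, hcross]
        congr 1
        · refine Finset.sum_congr rfl fun q _ => ?_
          split_ifs <;> simp
        · refine Finset.sum_congr rfl fun q _ => ?_
          split_ifs
          · ring
          · simp
      · rw [if_neg hij, Matrix.zero_apply, Finset.sum_eq_zero, Finset.sum_eq_zero, sub_zero]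
        · intro u _
          by_cases h1 : EL.ced γ j t u
          · rw [if_neg (fun h : EL.ced γ i t u => hij (h.2.symm.trans h1.2)), mul_zero]
          · rw [if_neg h1, zero_mul]
        · intro u _
          by_cases h1 : EL.ced γ j u t
          · rw [if_neg (fun h : EL.ced γ i u t => hij (h.2.symm.trans h1.2)), zero_mul]
          · rw [if_neg h1, mul_zero]
    · have hr : (if i = j then Matrix.diagonal fun t => ((EL.mwt γ ρ i t : ℤ) : ℂ) else 0 :
          Matrix L L ℂ) t s = 0 := by
        split_ifs
        · rw [Matrix.diagonal_apply_ne _ hts]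
        · rfl
      have hst : s ≠ t := fun h => hts h.symm
      rw [hr, Finset.sum_eq_single (s ⊓ t), Finset.sum_eq_single (s ⊔ t), sub_eq_zero]
      · by_cases hd : s ⊓ t ⋖ s ∧ s ⊓ t ⋖ t
        · obtain ⟨d1, d2⟩ := hd
          have d3 : s ⋖ s ⊔ t := covBy_sup_of_inf_covBy_right d2
          have d4 : t ⋖ s ⊔ t := covBy_sup_of_inf_covBy_left d1
          obtain ⟨c1, c2⟩ := hdc _ _ _ _ d1 d2 d3 d4 hst
          have e := hdiam _ _ _ _ d1 d2 d3 d4 hst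
          have e1 : EL.ced γ i (s ⊓ t) t ↔ EL.ced γ i s (s ⊔ t) := by
            simp only [EL.ced, c2, d2, d3]
          have e2 : EL.ced γ j (s ⊓ t) s ↔ EL.ced γ j t (s ⊔ t) := by
            simp only [EL.ced, c1, d1, d4]
          simp only [e1, e2]
          split_ifs
          · exact e.symm
          · simp
          · simp
          · simp
        · have hu : ¬ (s ⋖ s ⊔ t ∧ t ⋖ s ⊔ t) := fun ⟨a, b⟩ =>
            hd ⟨inf_covBy_of_covBy_sup_right b, inf_covBy_of_covBy_sup_left a⟩
          have z1 : ¬ (EL.ced γ i (s ⊓ t) t ∧ EL.ced γ j (s ⊓ t) s) := fun ⟨a, b⟩ => hd ⟨b.1, a.1⟩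
          have z2 : ¬ (EL.ced γ j t (s ⊔ t) ∧ EL.ced γ i s (s ⊔ t)) := fun ⟨a, b⟩ => hu ⟨b.1, a.1⟩
          rw [ite_mul_ite, if_neg z1, ite_mul_ite, if_neg z2]
      · intro u _ hu
        rw [ite_mul_ite, if_neg]
        rintro ⟨a, b⟩
        exact hu (sup_eq_of_covBy b.1 a.1 hst).symm
      · intro h; exact (h (Finset.mem_univ _)).elim
      · intro u _ hu
        rw [ite_mul_ite, if_neg]
        rintro ⟨a, b⟩
        exact hu (inf_eq_of_covBy b.1 a.1 hst).symm
      · intro h; exact (h (Finset.mem_univ _)).elim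
  have k2 := congrArg Matrix.mulVecLin key
  have hsub : ∀ P Q : Matrix L L ℂ, (P - Q).mulVecLin = P.mulVecLin - Q.mulVecLin :=
    fun P Q => LinearMap.ext fun v => Matrix.sub_mulVec P Q v
  rw [hsub, Matrix.mulVecLin_mul, Matrix.mulVecLin_mul] at k2
  rw [apply_ite Matrix.mulVecLin, Matrix.mulVecLin_zero] at k2
  exact k2

omit [IsModularLattice L] in
lemma VL_hx
    (hstr : ∀ r s : L, r ⋖ s → ∀ j : Fin n, EL.mwt γ ρ j s = EL.mwt γ ρ j r + A (γ r s) j) (i j : Fin n) :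
    EL.opH γ ρ i * EL.opX γ X j - EL.opX γ X j * EL.opH γ ρ i = (A j i : ℂ) • EL.opX γ X j := by
  refine LinearMap.ext fun v => funext fun t => ?_
  simp only [LinearMap.sub_apply, Module.End.mul_apply, opH_apply, opX_apply,
    Pi.sub_apply, LinearMap.smul_apply, Pi.smul_apply, smul_eq_mul, Finset.mul_sum]
  rw [← Finset.sum_sub_distrib]
  refine Finset.sum_congr rfl fun r _ => ?_
  by_cases h : EL.ced γ j r t
  · have := hstr r t h.1 i
    rw [h.2] at this
    rw [if_pos h, this]
    push_cast
    ring
  · rw [if_neg h]; ring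

omit [IsModularLattice L] in
lemma VL_hy
    (hstr : ∀ r s : L, r ⋖ s → ∀ j : Fin n, EL.mwt γ ρ j s = EL.mwt γ ρ j r + A (γ r s) j) (i j : Fin n) :
    EL.opH γ ρ i * EL.opY γ Y j - EL.opY γ Y j * EL.opH γ ρ i = -((A j i : ℂ) • EL.opY γ Y j) := by
  refine LinearMap.ext fun v => funext fun t => ?_
  simp only [LinearMap.sub_apply, Module.End.mul_apply, opH_apply, opY_apply,
    Pi.sub_apply, LinearMap.smul_apply, Pi.smul_apply, smul_eq_mul, Finset.mul_sum,
    LinearMap.neg_apply, Pi.neg_apply]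
  rw [← Finset.sum_sub_distrib, ← Finset.sum_neg_distrib]
  refine Finset.sum_congr rfl fun r _ => ?_
  by_cases h : EL.ced γ j t r
  · have := hstr t r h.1 i
    rw [h.2] at this
    rw [if_pos h, this]
    push_cast
    ring
  · rw [if_neg h]; ring

end VL

lemma map_alt {n : ℕ} {A : Fin n → Fin n → ℤ} (D : RD A) (ν : Fin n → ℤ) :
    AddMonoidAlgebra.mapRingHom (Fin n → ℤ) (Int.castRingHom ℂ) (CL.alt A ν) = D.altC ν := by
  rw [CL.alt, finsum_mem_eq_finite_toFinset_sum _ D.fin, map_sum, RD.altC]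
  refine Finset.sum_congr rfl fun w _ => ?_
  rw [AddMonoidAlgebra.mapRingHom_single]
  rfl

end WCF

/-- assuming the equivalent conditions of Proposition 2.1 hold, the Weyl
group `W` is finite and the module `V[L]` is irreducible if and only if
`𝒜(Z^ϱ)·WGF(L;Z) = 𝒜(Z^{λ+ϱ})` in the group algebra `ℤ[ℤ^n]`, where `λ = wt(t_max)`. -/
theorem statement_1 {n : ℕ} (hn : 1 ≤ n) (A : Fin n → Fin n → ℤ)
    (hA : IsCartanMatrixOfRootSystem n A)
    (L : Type) [Fintype L] [Lattice L] [IsModularLattice L]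
    (γ : L → L → Fin n)
    (hdc : ∀ q r s t : L, q ⋖ r → q ⋖ s → r ⋖ t → s ⋖ t → r ≠ s →
      γ q r = γ s t ∧ γ q s = γ r t)
    (ρ : L → ℕ) (hρ : ∀ r s : L, r ⋖ s → ρ s = ρ r + 1)
    (X Y : L → L → ℂ) (hXY : ∀ r s : L, r ⋖ s → ¬(X r s = 0 ∧ Y r s = 0))
    (hstr : ∀ r s : L, r ⋖ s → ∀ j : Fin n, EL.mwt γ ρ j s = EL.mwt γ ρ j r + A (γ r s) j)
    (hdiam : ∀ q r s t : L, q ⋖ r → q ⋖ s → r ⋖ t → s ⋖ t → r ≠ s →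
      Y s t * X r t = X q s * Y q r)
    (hcross : ∀ (i : Fin n) (t : L), ((EL.mwt γ ρ i t : ℤ) : ℂ) =
      (∑ q : L, if EL.ced γ i q t then X q t * Y q t else 0) -
      (∑ s : L, if EL.ced γ i t s then X t s * Y t s else 0))
    (tmax : L) (htmax : ∀ t : L, t ≤ tmax) :
    ((CL.weyl A : Set (Matrix (Fin n) (Fin n) ℤ)).Finite) ∧
    ((∀ U : Submodule ℂ (L → ℂ),
        (∀ i : Fin n, ∀ v ∈ U, EL.opX γ X i v ∈ U ∧ EL.opY γ Y i v ∈ U ∧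
          EL.opH γ ρ i v ∈ U) → U = ⊥ ∨ U = ⊤) ↔
      CL.alt A (fun _ => 1) *
          (∑ t : L, AddMonoidAlgebra.single (fun i => EL.mwt γ ρ i t) (1 : ℤ)) =
        CL.alt A (fun i => EL.mwt γ ρ i tmax + 1)) := by
  obtain ⟨D⟩ := WCF.exists_RD A hA
  refine ⟨D.fin, ?_⟩
  let M : WCF.WM A L (L → ℂ) :=
    { x := EL.opX γ X
      y := EL.opY γ Y
      h := EL.opH γ ρ
      xy := WCF.VL_xy hdc hdiam hcross
      hx := WCF.VL_hx hstr
      hy := WCF.VL_hy hstr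
      b := Pi.basisFun ℂ L
      wt := fun t i => EL.mwt γ ρ i t
      hb := by
        intro i k
        funext t
        rw [WCF.opH_apply, Pi.basisFun_apply, Pi.smul_apply, smul_eq_mul]
        by_cases h : t = k
        · rw [h]
        · rw [Pi.single_eq_of_ne h, mul_zero, mul_zero] }
  have hirr := WCF.irr_iff D M (v0 := Pi.basisFun ℂ L tmax) (lam := fun i => EL.mwt γ ρ i tmax)
    ((Pi.basisFun ℂ L).ne_zero tmax) (fun i => M.hb i tmax) (by
      intro i
      funext t
      change EL.opX γ X i (Pi.basisFun ℂ L tmax) t = 0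
      rw [WCF.opX_apply]
      refine Finset.sum_eq_zero fun r _ => ?_
      rw [Pi.basisFun_apply]
      by_cases h : r = tmax
      · rw [if_neg, zero_mul]
        intro hc
        rw [h] at hc
        exact (hc.1.lt.trans_le (htmax t)).false
      · rw [Pi.single_eq_of_ne h, mul_zero])
  refine hirr.trans ?_
  have hinj : Function.Injective (AddMonoidAlgebra.mapRingHom (Fin n → ℤ) (Int.castRingHom ℂ)) :=
    AddMonoidAlgebra.map_injective _ Int.cast_injective
  rw [← hinj.eq_iff, map_mul, WCF.map_alt D, WCF.map_alt D, map_sum]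
  simp only [AddMonoidAlgebra.mapRingHom_single, map_one]
  rfl

end
end
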